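/- arXiv:2403.17079 — 3 statements merged into one kernel-verified Lean document; each statement's English description precedes it below -/
import Mathlib

section
/- Let (Q, m, k) be a commutative Noetherian local ring and let f, g be an exact pair of zerodivisors with f ∈ m², i.e. f and g are nonzero elements of m with f ∈ m², ann_Q(f) = (g) and ann_Q(g) = (f). Set R = Q/(f). Then the residue field has the same Betti numbers over Q and over R: β_i^Q(k) = β_i^R(k) for every integer i ≥ 0; that is, P_k^Q(t) = P_k^R(t). -/
open CategoryTheory TensorProduct

/-- The `i`-th Betti number of a module `M` over a local ring `A`:
`β_i^A(M) = dim_k Tor_i^A(M, k)`, computed as the `k`-dimension of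
`k ⊗_A Tor_i^A(M, k)` (the two agree since `Tor_i^A(M, k)` is a `k`-vector
space, being annihilated by the maximal ideal of `A`). -/
noncomputable def bettiNumber (A : Type) [CommRing A] [IsLocalRing A]
    (M : Type) [AddCommGroup M] [Module A M] (i : ℕ) : ℕ :=
  Module.finrank (IsLocalRing.ResidueField A)
    (IsLocalRing.ResidueField A ⊗[A]
      (((Tor (ModuleCat A) i).obj (ModuleCat.of A M)).obj
        (ModuleCat.of A (IsLocalRing.ResidueField A))))

namespace BettiAux

/-- The Koszul relations of a linear form. -/
def kos {Q V : Type*} [CommRing Q] [AddCommGroup V] [Module Q V] (φ : V →ₗ[Q] Q) :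
    AddSubmonoid V :=
  AddSubmonoid.closure {w | ∃ u v : V, w = φ u • v - φ v • u}

lemma contract_ι_mul {Q V : Type*} [CommRing Q] [AddCommGroup V] [Module Q V] (φ : V →ₗ[Q] Q)
    (u : V) (b : ExteriorAlgebra Q V) :
    CliffordAlgebra.contractLeft (Q := (0 : QuadraticForm Q V)) φ (ExteriorAlgebra.ι Q u * b) =
      φ u • b - ExteriorAlgebra.ι Q u *
        CliffordAlgebra.contractLeft (Q := (0 : QuadraticForm Q V)) φ b :=
  CliffordAlgebra.contractLeft_ι_mul _ _ _

lemma ι_anti {Q V : Type*} [CommRing Q] [AddCommGroup V] [Module Q V] (u v : V) :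
    ExteriorAlgebra.ι Q u * ExteriorAlgebra.ι Q v =
      - (ExteriorAlgebra.ι Q v * ExteriorAlgebra.ι Q u) := by
  rw [eq_neg_iff_add_eq_zero]
  exact ExteriorAlgebra.ι_add_mul_swap u v

/-- Divided powers of an element of degree two bounding a Koszul relation. -/
lemma kos_divpow {Q V : Type*} [CommRing Q] [AddCommGroup V] [Module Q V] (φ : V →ₗ[Q] Q)
    (w : V) (hw : w ∈ kos φ) :
    ∃ E : ℕ → ExteriorAlgebra Q V, E 0 = 1 ∧ (∃ N, ∀ n, N ≤ n → E n = 0) ∧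
      ∀ n, CliffordAlgebra.contractLeft (Q := (0 : QuadraticForm Q V)) φ (E (n+1)) =
        ExteriorAlgebra.ι Q w * E n := by
  induction hw using AddSubmonoid.closure_induction_right with
  | zero =>
    refine ⟨fun n => if n = 0 then 1 else 0, by simp, ⟨1, fun n hn => if_neg (by omega)⟩, ?_⟩
    intro n
    simp
  | add_right w hw y hy ih =>
    obtain ⟨E, h0, ⟨N, hN⟩, hE⟩ := ih
    obtain ⟨u, v, rfl⟩ := hy
    set U := ExteriorAlgebra.ι Q u with hU
    set W := ExteriorAlgebra.ι Q v with hW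
    set w' := ExteriorAlgebra.ι Q w with hw'
    have hUU : U * U = 0 := ExteriorAlgebra.ι_sq_zero u
    have hWW : W * W = 0 := ExteriorAlgebra.ι_sq_zero v
    have hWU : W * U = -(U * W) := ι_anti v u
    have hwU : w' * U = -(U * w') := ι_anti w u
    have hwW : w' * W = -(W * w') := ι_anti w v
    have key : ∀ b : ExteriorAlgebra Q V,
        CliffordAlgebra.contractLeft (Q := (0 : QuadraticForm Q V)) φ (U * W * b) =
        (φ u • W - φ v • U) * b + U * W *
          CliffordAlgebra.contractLeft (Q := (0 : QuadraticForm Q V)) φ b := by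
      intro b
      rw [mul_assoc, contract_ι_mul, contract_ι_mul, mul_sub, sub_mul, smul_mul_assoc,
        smul_mul_assoc, mul_smul_comm, ← mul_assoc, ← hU, ← hW]
      abel
    refine ⟨fun n => E n + if n = 0 then 0 else U * W * E (n-1), by simp [h0],
      ⟨N+1, fun n hn => ?_⟩, ?_⟩
    · dsimp only
      rw [hN n (by omega), if_neg (by omega), hN (n-1) (by omega)]; simp
    · intro n
      have hι : ExteriorAlgebra.ι Q (w + (φ u • v - φ v • u)) = w' + (φ u • W - φ v • U) := by
        simp [hw', hW, hU]
      have e1 : W * (U * W) = 0 := by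
        rw [← mul_assoc, hWU, neg_mul, mul_assoc, hWW]; simp
      have e2 : U * (U * W) = 0 := by
        rw [← mul_assoc, hUU]; simp
      have e3 : w' * (U * W) = U * W * w' := by
        rw [← mul_assoc, hwU, neg_mul, mul_assoc, hwW, mul_neg, neg_neg, mul_assoc]
      rw [hι]
      rcases n with _ | n
      · simp only [zero_add, one_ne_zero, if_false, map_add, Nat.sub_self, if_true, add_zero]
        rw [key, h0, hE]
        simp [h0]
      · simp only [Nat.add_eq_zero_iff, one_ne_zero, and_false, if_false, map_add,
          Nat.add_sub_cancel]
        rw [key, hE, hE, mul_add, add_mul, add_mul]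
        have : (φ u • W - φ v • U) * (U * W * E n) = 0 := by
          rw [← mul_assoc, sub_mul, smul_mul_assoc, smul_mul_assoc, e1, e2]; simp
        rw [this, ← mul_assoc w' (U*W), e3, mul_assoc (U*W) w']
        abel

/-- multiplication by exact zerodivisors on a free module -/
lemma free_ann {Q S : Type*} [CommRing Q] {f g : Q}
    (h : ∀ x : Q, x * f = 0 → g ∣ x) (z : S →₀ Q) (hz : f • z = 0) :
    ∃ w : S →₀ Q, z = g • w ∧ w.support ⊆ z.support := by
  classical
  have : ∀ x : Q, ∃ y : Q, (x * f = 0 → x = g * y) ∧ (x = 0 → y = 0) := by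
    intro x
    by_cases hx : x = 0
    · exact ⟨0, by simp [hx], by simp⟩
    · by_cases hxf : x * f = 0
      · obtain ⟨y, hy⟩ := h x hxf
        exact ⟨y, fun _ => hy, fun h => absurd h hx⟩
      · exact ⟨0, fun h => absurd h hxf, fun _ => rfl⟩
  choose r hr hr0 using this
  refine ⟨z.mapRange r (hr0 0 rfl), ?_, Finsupp.support_mapRange⟩
  ext s
  have := DFunLike.congr_fun hz s
  simp only [Finsupp.smul_apply, smul_eq_mul, Finsupp.coe_zero, Pi.zero_apply,
    Finsupp.mapRange_apply] at this ⊢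
  exact hr _ (by rw [mul_comm]; exact this)

lemma free_ann' {Q M I : Type*} [CommRing Q] [AddCommGroup M] [Module Q M]
    (b : Module.Basis I Q M) {f g : Q}
    (h : ∀ x : Q, x * f = 0 → g ∣ x) (z : M) (hz : f • z = 0) :
    ∃ w : M, z = g • w := by
  obtain ⟨w, hw, -⟩ := free_ann h (b.repr z) (by rw [← map_smul, hz, map_zero])
  refine ⟨b.repr.symm w, ?_⟩
  apply b.repr.injective
  rw [map_smul, hw]; simp

lemma aug_contract {Q V : Type*} [CommRing Q] [AddCommGroup V] [Module Q V] (φ : V →ₗ[Q] Q)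
    (m : Ideal Q) (hφ : ∀ v, φ v ∈ m) (x : ExteriorAlgebra Q V) :
    ExteriorAlgebra.algebraMapInv
      (CliffordAlgebra.contractLeft (Q := (0 : QuadraticForm Q V)) φ x) ∈ m := by
  induction x using CliffordAlgebra.left_induction with
  | algebraMap r => rw [CliffordAlgebra.contractLeft_algebraMap]; simp
  | add x y hx hy => rw [map_add, map_add]; exact add_mem hx hy
  | ι_mul x v hx =>
    have := contract_ι_mul φ v x
    erw [this]
    rw [map_sub, map_smul, map_mul]
    have : ExteriorAlgebra.algebraMapInv (ExteriorAlgebra.ι Q v) = 0 := by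
      simp [ExteriorAlgebra.algebraMapInv]
    rw [this, zero_mul, sub_zero, smul_eq_mul]
    exact m.mul_mem_right _ (hφ v)

/-- The relation `g A` is not a Koszul relation. -/
lemma not_mem_kos {Q : Type*} [CommRing Q] {n : ℕ} (φ : (Fin n →₀ Q) →ₗ[Q] Q)
    (m : Ideal Q) (hm : m ≠ ⊤) (hφ : ∀ v, φ v ∈ m) {f g : Q} (hg : g ∈ m)
    (hfg : ∀ x : Q, x * f = 0 → g ∣ x) (hgf : ∀ x : Q, x * g = 0 → f ∣ x)
    (hz : f * g = 0)
    (a : Fin n →₀ Q) (ha : φ a = f) : g • a ∉ kos φ := by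
  intro hmem
  obtain ⟨E, h0, ⟨N, hN⟩, hE⟩ := kos_divpow φ _ hmem
  set d := CliffordAlgebra.contractLeft (Q := (0 : QuadraticForm Q (Fin n →₀ Q))) φ with hd
  have b := (Finsupp.basisSingleOne (R := Q) (ι := Fin n)).ExteriorAlgebra
  set A := ExteriorAlgebra.ι Q a with hA
  have hdd : ∀ x, d (d x) = 0 := fun x => CliffordAlgebra.contractLeft_contractLeft _ _
  have hAA : A * A = 0 := ExteriorAlgebra.ι_sq_zero a
  have hE' : ∀ n, d (E (n+1)) = g • (A * E n) := by
    intro n; rw [hE, map_smul, smul_mul_assoc]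
  have hAE : ∀ n, d (A * E n) = f • E n := by
    intro n
    have := contract_ι_mul φ a (E n)
    rw [hd, hA, this, ha, ← hd, ← hA]
    rcases n with _ | n
    · rw [h0]
      have : d 1 = 0 := CliffordAlgebra.contractLeft_one _ _
      rw [this]; simp
    · rw [hE', mul_smul_comm, ← mul_assoc, hAA]; simp
  have desc : ∀ n, (∃ C D, E (n+1) = d C + g • D) → ∃ C D, E n = d C + g • D := by
    rintro n ⟨C, D, h⟩
    have h1 : g • (A * E n - d D) = 0 := by
      rw [smul_sub, ← hE', h, map_add, hdd, map_smul]; simp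
    obtain ⟨C', hC'⟩ := free_ann' b hgf _ h1
    have h2 : f • (E n - d C') = 0 := by
      rw [smul_sub, ← hAE, ← map_smul, ← hC', map_sub, hdd]; simp
    obtain ⟨D', hD'⟩ := free_ann' b hfg _ h2
    exact ⟨C', D', by rw [← hD']; abel⟩
  have all : ∀ k, ∃ C D, E (N - k) = d C + g • D := by
    intro k
    induction k with
    | zero => exact ⟨0, 0, by rw [hN _ (by omega)]; simp⟩
    | succ k ih =>
      by_cases hk : k < N
      · apply desc
        rwa [show N - (k+1) + 1 = N - k by omega]
      · rwa [show N - (k+1) = N - k by omega]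
  obtain ⟨C, D, h⟩ := all N
  rw [Nat.sub_self, h0] at h
  have h' := congrArg ExteriorAlgebra.algebraMapInv h
  rw [map_one, map_add, map_smul] at h'
  apply hm
  rw [Ideal.eq_top_iff_one, h']
  refine add_mem (aug_contract φ m hφ C) (m.mul_mem_right _ hg)

end BettiAux


namespace BettiAux

/-- The degree `n` part of the free module on a graded set. -/
abbrev gr {S : Type} (Q : Type) [CommRing Q] (deg : S → ℕ) (n : ℕ) : Submodule Q (S →₀ Q) :=
  Finsupp.supported Q Q {s | deg s = n}

/-- A complex of free modules which is exact in degrees at least two, begins with the generators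
`x`, and whose homology in degree one is generated by a class `a`. -/
structure Cx (Q : Type) [CommRing Q] (m : Ideal Q) {n : ℕ} (x : Fin n → Q) (a : Fin n →₀ Q) where
  S : Type
  deg : S → ℕ
  o : S
  e : Fin n → S
  d : (S →₀ Q) →ₗ[Q] (S →₀ Q)
  deg_o : deg o = 0
  deg_e : ∀ i, deg (e i) = 1
  eq_o : ∀ s, deg s = 0 → s = o
  eq_e : ∀ s, deg s = 1 → ∃ i, s = e i
  d_o : d (Finsupp.single o 1) = 0
  d_e : ∀ i, d (Finsupp.single (e i) 1) = Finsupp.single o (x i)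
  d_deg : ∀ s k, deg s = k + 1 → d (Finsupp.single s 1) ∈ gr Q deg k
  dd : ∀ z, d (d z) = 0
  ex : ∀ k, 2 ≤ k → ∀ z ∈ gr Q deg k, d z = 0 → ∃ v ∈ gr Q deg (k+1), d v = z
  ex1 : ∀ z ∈ gr Q deg 1, d z = 0 → ∃ c : Q, ∃ v ∈ gr Q deg 2,
    z = c • Finsupp.mapDomain e a + d v
  ex1' : ∀ c : Q, ∀ v ∈ gr Q deg 2, c • Finsupp.mapDomain e a = d v → c ∈ m
  kosz : ∀ i j, ∃ v ∈ gr Q deg 2,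
    d v = Finsupp.single (e j) (x i) - Finsupp.single (e i) (x j)

section stages

structure Stg (Q : Type) [CommRing Q] where
  X : Type
  N : Submodule Q (X →₀ Q)

noncomputable def Stg.next {Q : Type} [CommRing Q] (s : Stg Q) : Stg Q :=
  ⟨↥s.N, LinearMap.ker (Finsupp.linearCombination Q (Subtype.val : s.N → (s.X →₀ Q)))⟩

noncomputable def stg {Q : Type} [CommRing Q] (s : Stg Q) : ℕ → Stg Q
  | 0 => s
  | k+1 => (stg s k).next

/-- A sequence of free modules resolving the submodule `N`. -/
structure Sq {Q : Type} [CommRing Q] {n : ℕ} (N : Submodule Q (Fin n →₀ Q)) where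
  X : ℕ → Type
  v : ∀ k, X (k+1) → (X k →₀ Q)
  E : Fin n ≃ X 0
  v0 : ∀ w : Fin n →₀ Q, (∃ y, v 0 y = Finsupp.lmapDomain Q Q E w) ↔ w ∈ N
  vs : ∀ k, ∀ w, (∃ y, v (k+1) y = w) ↔ Finsupp.linearCombination Q (v k) w = 0

noncomputable def mkSq {Q : Type} [CommRing Q] {n : ℕ} (N : Submodule Q (Fin n →₀ Q)) : Sq N where
  X k := (stg ⟨Fin n, N⟩ k).X
  v k := (Subtype.val : (stg ⟨Fin n, N⟩ k).N → _)
  E := Equiv.refl _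
  v0 w := by
    have : Finsupp.lmapDomain Q Q (Equiv.refl (Fin n)) w = w := Finsupp.mapDomain_id
    erw [this]
    exact ⟨fun ⟨y, hy⟩ => hy ▸ Subtype.prop (p := fun z => z ∈ N) y,
      fun h => ⟨(⟨w, h⟩ : N), rfl⟩⟩
  vs k w := ⟨fun ⟨y, hy⟩ => hy ▸ LinearMap.mem_ker.1
      (Subtype.prop (p := fun z => z ∈ (stg ⟨Fin n, N⟩ (k+1)).N) y),
    fun h => ⟨(⟨w, h⟩ : (stg ⟨Fin n, N⟩ (k+1)).N), rfl⟩⟩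

variable {Q : Type} [CommRing Q] {n : ℕ} {N : Submodule Q (Fin n →₀ Q)}

abbrev SS (s : Sq N) : Type := Option (Σ k, s.X k)

def sdeg (s : Sq N) : SS s → ℕ
  | none => 0
  | some ⟨k, _⟩ => k + 1

noncomputable def emb (s : Sq N) (k : ℕ) : (s.X k →₀ Q) →ₗ[Q] (SS s →₀ Q) :=
  Finsupp.lmapDomain Q Q (fun x => some ⟨k, x⟩)

lemma emb_inj (s : Sq N) (k : ℕ) : Function.Injective (emb s k) := by
  apply Finsupp.mapDomain_injective
  intro a b h
  simpa using h

lemma emb_single (s : Sq N) (k : ℕ) (y) (r : Q) :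
    emb s k (Finsupp.single y r) = Finsupp.single (some ⟨k, y⟩) r := by
  simp [emb, Finsupp.mapDomain_single]

lemma emb_mem (s : Sq N) (k : ℕ) (w) : emb s k w ∈ gr Q (sdeg s) (k+1) := by
  classical
  intro t ht
  have := Finsupp.mapDomain_support ht
  simp only [Finset.mem_image] at this
  obtain ⟨y, -, rfl⟩ := this
  rfl

lemma exists_emb (s : Sq N) (k : ℕ) (z) (hz : z ∈ gr Q (sdeg s) (k+1)) :
    ∃ w, emb s k w = z := by
  have : z ∈ LinearMap.range (emb s k) := by
    rw [gr, Finsupp.supported_eq_span_single] at hz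
    refine Submodule.span_le.2 ?_ hz
    rintro _ ⟨t, ht, rfl⟩
    rcases t with _ | ⟨l, t⟩
    · simp [sdeg] at ht
    · obtain rfl : l = k := by simpa [sdeg] using ht
      exact ⟨Finsupp.single t 1, emb_single _ _ _ _⟩
  exact this

noncomputable def dbas (s : Sq N) (x : s.X 0 → Q) : SS s → (SS s →₀ Q)
  | none => 0
  | some ⟨0, i⟩ => Finsupp.single none (x i)
  | some ⟨k+1, y⟩ => emb s k (s.v k y)

noncomputable def dd (s : Sq N) (x : s.X 0 → Q) : (SS s →₀ Q) →ₗ[Q] (SS s →₀ Q) :=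
  Finsupp.linearCombination Q (dbas s x)

lemma dd_single (s : Sq N) (x : s.X 0 → Q) (t : SS s) :
    dd s x (Finsupp.single t 1) = dbas s x t := by
  simp [dd]

lemma dd_emb_succ (s : Sq N) (x : s.X 0 → Q) (k : ℕ) (w : s.X (k+1) →₀ Q) :
    dd s x (emb s (k+1) w) = emb s k (Finsupp.linearCombination Q (s.v k) w) := by
  have : (dd s x) ∘ₗ (emb s (k+1)) = (emb s k) ∘ₗ (Finsupp.linearCombination Q (s.v k)) := by
    apply Finsupp.lhom_ext'
    intro y
    ext1
    simp only [LinearMap.comp_apply, Finsupp.lsingle_apply]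
    rw [emb_single, dd_single]
    simp [dbas]
  exact LinearMap.congr_fun this w

lemma dd_emb_zero (s : Sq N) (x : s.X 0 → Q) (w : s.X 0 →₀ Q) :
    dd s x (emb s 0 w) = Finsupp.single none (Finsupp.linearCombination Q x w) := by
  have : (dd s x) ∘ₗ (emb s 0) = (Finsupp.lsingle none) ∘ₗ
      (Finsupp.linearCombination Q x) := by
    apply Finsupp.lhom_ext'
    intro y
    ext1
    simp only [LinearMap.comp_apply, Finsupp.lsingle_apply]
    rw [emb_single, dd_single]
    simp [dbas]
  exact LinearMap.congr_fun this w

end stages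

noncomputable def mkCx {Q : Type} [CommRing Q] (m : Ideal Q) {n : ℕ} (x : Fin n → Q)
    (a : Fin n →₀ Q) (N : Submodule Q (Fin n →₀ Q))
    (hNZ : ∀ w ∈ N, Finsupp.linearCombination Q x w = 0)
    (hk : ∀ i j, Finsupp.single j (x i) - Finsupp.single i (x j) ∈ N)
    (h1 : ∀ z, Finsupp.linearCombination Q x z = 0 → ∃ c : Q, z - c • a ∈ N)
    (h2 : ∀ c : Q, c • a ∈ N → c ∈ m) : Cx Q m x a :=
  let s : Sq N := mkSq N
  let x' : s.X 0 → Q := fun y => x (s.E.symm y)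
  let em : (Fin n →₀ Q) →ₗ[Q] (SS s →₀ Q) := emb s 0 ∘ₗ Finsupp.lmapDomain Q Q s.E
  have hems : ∀ w, em w = Finsupp.mapDomain (fun i => some ⟨0, s.E i⟩) w := by
    intro w
    simp only [em, emb, LinearMap.comp_apply, Finsupp.lmapDomain_apply]
    rw [← Finsupp.mapDomain_comp]; rfl
  have hsing : ∀ i (r : Q), em (Finsupp.single i r) = Finsupp.single (some ⟨0, s.E i⟩) r := by
    intro i r; rw [hems, Finsupp.mapDomain_single]
  have hinj : Function.Injective em :=
    (emb_inj s 0).comp (Finsupp.mapDomain_injective s.E.injective)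
  have hemd : ∀ w, dd s x' (em w) = Finsupp.single none (Finsupp.linearCombination Q x w) := by
    intro w
    simp only [em, LinearMap.comp_apply]
    rw [dd_emb_zero, Finsupp.lmapDomain_apply, Finsupp.linearCombination_mapDomain]
    congr 3
  have hsur : ∀ z ∈ gr Q (sdeg s) 1, ∃ w, em w = z := by
    intro z hz
    obtain ⟨w, rfl⟩ := exists_emb s 0 z hz
    refine ⟨Finsupp.lmapDomain Q Q s.E.symm w, ?_⟩
    simp only [em, LinearMap.comp_apply, Finsupp.lmapDomain_apply]
    rw [← Finsupp.mapDomain_comp]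
    simp [Finsupp.mapDomain_id]
  have hN2 : ∀ w ∈ N, ∃ v ∈ gr Q (sdeg s) 2, dd s x' v = em w := by
    intro w hw
    obtain ⟨y, hy⟩ := (s.v0 w).2 hw
    refine ⟨Finsupp.single (some ⟨1, y⟩) 1, Finsupp.single_mem_supported _ _ rfl, ?_⟩
    rw [dd_single]
    simp only [dbas, em, LinearMap.comp_apply, hy]
  have hN2' : ∀ v ∈ gr Q (sdeg s) 2, ∃ w ∈ N, dd s x' v = em w := by
    intro v hv
    obtain ⟨w, rfl⟩ := exists_emb s 1 v hv
    rw [dd_emb_succ, Finsupp.linearCombination_apply, Finsupp.sum, map_sum]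
    have : ∀ y : s.X 1, ∃ u ∈ N, emb s 0 (s.v 0 y) = em u := by
      intro y
      have hh := hsur (emb s 0 (s.v 0 y)) (emb_mem _ _ _)
      obtain ⟨u, hu⟩ := hh
      refine ⟨u, (s.v0 u).1 ⟨y, (emb_inj s 0 hu).symm⟩, hu.symm⟩
    choose u hu hu' using this
    refine ⟨∑ y ∈ w.support, w y • u y, Submodule.sum_mem _ fun y _ => N.smul_mem _ (hu y), ?_⟩
    rw [map_sum]
    refine Finset.sum_congr rfl fun y _ => ?_
    rw [map_smul, map_smul, hu']
  { S := SS s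
    deg := sdeg s
    o := none
    e := fun i => some ⟨0, s.E i⟩
    d := dd s x'
    deg_o := rfl
    deg_e := fun i => rfl
    eq_o := by
      rintro (_ | ⟨k, t⟩) h
      · rfl
      · simp [sdeg] at h
    eq_e := by
      rintro (_ | ⟨k, t⟩) h
      · simp [sdeg] at h
      · obtain rfl : k = 0 := by simpa [sdeg] using h
        exact ⟨s.E.symm t, by simp⟩
    d_o := by rw [dd_single]; rfl
    d_e := fun i => by rw [dd_single]; simp [dbas, x']
    d_deg := by
      rintro (_ | ⟨_ | k, t⟩) l h
      · simp [sdeg] at h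
      · obtain rfl : l = 0 := by simpa [sdeg] using h
        rw [dd_single]
        exact Finsupp.single_mem_supported _ _ rfl
      · obtain rfl : k + 1 = l := by simpa [sdeg] using h
        rw [dd_single]
        exact emb_mem _ _ _
    dd := by
      have : dd s x' ∘ₗ dd s x' = 0 := by
        apply Finsupp.lhom_ext'
        intro t
        ext1
        simp only [LinearMap.comp_apply, Finsupp.lsingle_apply, LinearMap.zero_apply]
        rcases t with (_ | ⟨_ | _ | k, t⟩)
        · rw [dd_single]; simp [dbas]
        · rw [dd_single]
          change dd s x' (Finsupp.single none (x' t)) = 0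
          rw [← mul_one (x' t), ← smul_eq_mul, ← Finsupp.smul_single, map_smul, dd_single]
          simp [dbas]
        · obtain ⟨w, hw, h⟩ := hN2' (Finsupp.single (some ⟨1, t⟩) 1)
            (Finsupp.single_mem_supported _ _ rfl)
          erw [h]
          rw [hemd, hNZ _ hw]; simp
        · rw [dd_single]
          change dd s x' (emb s (k+1) _) = 0
          rw [dd_emb_succ, (s.vs k _).1 ⟨t, rfl⟩]
          simp
      exact fun z => LinearMap.congr_fun this z
    ex := by
      intro k hk z hz hd
      obtain ⟨k, rfl⟩ : ∃ l, k = l + 2 := ⟨k - 2, by omega⟩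
      obtain ⟨w, rfl⟩ := exists_emb s (k+1) z hz
      rw [dd_emb_succ] at hd
      have hw := emb_inj s k (hd.trans (map_zero _).symm)
      obtain ⟨y, hy⟩ := (s.vs k w).2 hw
      refine ⟨Finsupp.single (some ⟨k+2, y⟩) 1, Finsupp.single_mem_supported _ _ rfl, ?_⟩
      rw [dd_single, ← hy]; rfl
    ex1 := by
      intro z hz hd
      obtain ⟨w, rfl⟩ := hsur z hz
      rw [hemd] at hd
      obtain ⟨c, hc⟩ := h1 w (by simpa using hd)
      obtain ⟨v, hv, hv'⟩ := hN2 _ hc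
      refine ⟨c, v, hv, ?_⟩
      rw [hv', map_sub, map_smul, ← hems]
      abel
    ex1' := by
      intro c v hv h
      obtain ⟨w, hw, h'⟩ := hN2' v hv
      rw [h', ← hems, ← map_smul] at h
      apply h2
      rw [hinj h]
      exact hw
    kosz := by
      intro i j
      obtain ⟨v, hv, h⟩ := hN2 _ (hk i j)
      refine ⟨v, hv, h.trans ?_⟩
      rw [map_sub, hsing, hsing] }

lemma exists_cx {Q : Type} [CommRing Q] [IsNoetherianRing Q] [IsLocalRing Q] {n : ℕ}
    (x : Fin n → Q) (hx : Ideal.span (Set.range x) = IsLocalRing.maximalIdeal Q)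
    (a : Fin n →₀ Q) (ha : Finsupp.linearCombination Q x a = 0)
    (hak : a ∉ kos (Finsupp.linearCombination Q x)) :
    Nonempty (Cx Q (IsLocalRing.maximalIdeal Q) x a) := by
  classical
  set φ := Finsupp.linearCombination Q x with hφ
  let B : Submodule Q (Fin n →₀ Q) := Submodule.span Q {w | ∃ u v, w = φ u • v - φ v • u}
  have hB : ∀ w ∈ B, w ∈ kos φ := by
    intro w hw
    induction hw using Submodule.span_induction with
    | mem w h => exact AddSubmonoid.subset_closure h
    | zero => exact zero_mem _
    | add x y _ _ hx hy => exact add_mem hx hy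
    | smul c w hwB hw =>
      clear hwB
      induction hw using AddSubmonoid.closure_induction with
      | mem w h =>
        obtain ⟨u, v, rfl⟩ := h
        refine AddSubmonoid.subset_closure ⟨c • u, v, ?_⟩
        rw [map_smul, smul_sub, smul_assoc, smul_comm c (φ u) v, smul_comm c (φ v) u]
      | zero => rw [smul_zero]; exact zero_mem _
      | add x y _ _ hx hy => rw [smul_add]; exact add_mem hx hy
  have hBZ : B ≤ LinearMap.ker φ := by
    refine Submodule.span_le.2 ?_
    rintro _ ⟨u, v, rfl⟩
    simp [mul_comm]
  obtain ⟨N, ⟨hBN, hNZ, haN⟩, hmax⟩ := (wellFounded_gt (α := Submodule Q (Fin n →₀ Q))).has_min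
    {N | B ≤ N ∧ N ≤ LinearMap.ker φ ∧ a ∉ N} ⟨B, le_rfl, hBZ, fun h => hak (hB _ h)⟩
  have hmB : ∀ c ∈ IsLocalRing.maximalIdeal Q, ∀ z, φ z = 0 → c • z ∈ N := by
    intro c hc z hz
    rw [← hx, Ideal.span, ← Finsupp.range_linearCombination] at hc
    obtain ⟨u, rfl⟩ := hc
    have := hBN (Submodule.subset_span ⟨u, z, rfl⟩)
    rwa [hz, zero_smul, sub_zero] at this
  refine ⟨mkCx _ x a N (fun w hw => hNZ hw) ?_ ?_ ?_⟩
  · intro i j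
    have := hBN (Submodule.subset_span ⟨Finsupp.single i 1, Finsupp.single j 1, rfl⟩)
    simpa [hφ] using this
  · intro z hz
    by_cases hzN : z ∈ N
    · exact ⟨0, by simpa using hzN⟩
    have hlt : N < N ⊔ Submodule.span Q {z} := by
      refine lt_of_le_of_ne le_sup_left fun h => hzN ?_
      rw [h]
      exact Submodule.mem_sup_right (Submodule.mem_span_singleton_self z)
    have haz : a ∈ N ⊔ Submodule.span Q {z} := by
      by_contra hcon
      refine hmax _ ⟨hBN.trans le_sup_left, sup_le hNZ ?_, hcon⟩ hlt
      rw [Submodule.span_singleton_le_iff_mem]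
      exact hz
    obtain ⟨w, hw, y, hy, hwy⟩ := Submodule.mem_sup.1 haz
    obtain ⟨c, rfl⟩ := Submodule.mem_span_singleton.1 hy
    have hc : IsUnit c := by
      by_contra hc
      exact haN (hwy ▸ add_mem hw (hmB c hc z hz))
    obtain ⟨u, rfl⟩ := hc
    refine ⟨(u⁻¹ : Qˣ), ?_⟩
    have : z - (u⁻¹ : Qˣ).val • a = - ((u⁻¹ : Qˣ).val • w) := by
      rw [← hwy, smul_add, smul_smul]; simp
    rw [this]
    exact neg_mem (N.smul_mem _ hw)
  · intro c hc
    by_contra h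
    have : IsUnit c := by simpa using h
    obtain ⟨u, rfl⟩ := this
    apply haN
    have := N.smul_mem (u⁻¹ : Qˣ).val hc
    rwa [smul_smul, Units.inv_mul, one_smul] at this

end BettiAux


namespace BettiAux

section cxfacts
variable {Q : Type} [CommRing Q] {m : Ideal Q} {n : ℕ} {x : Fin n → Q} {a : Fin n →₀ Q}
  (C : Cx Q m x a)

lemma gr_ind {S : Type} {deg : S → ℕ} {k : ℕ} (P : Submodule Q (S →₀ Q))
    (h : ∀ s, deg s = k → Finsupp.single s 1 ∈ P) : gr Q deg k ≤ P := by
  rw [gr, Finsupp.supported_eq_span_single, Submodule.span_le]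
  rintro _ ⟨t, ht, rfl⟩
  exact h t ht

lemma single_mem_gr {S : Type} {deg : S → ℕ} {k : ℕ} {s : S} (h : deg s = k) (r : Q) :
    Finsupp.single s r ∈ gr Q deg k := Finsupp.single_mem_supported _ _ h

lemma Cx.d_mem {k : ℕ} {z} (hz : z ∈ gr Q C.deg (k+1)) : C.d z ∈ gr Q C.deg k :=
  gr_ind ((gr Q C.deg k).comap C.d) (fun s hs => C.d_deg s k hs) hz

lemma Cx.d_zero {z} (hz : z ∈ gr Q C.deg 0) : C.d z = 0 := by
  refine gr_ind (LinearMap.ker C.d) (fun s hs => ?_) hz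
  rw [C.eq_o s hs]; exact C.d_o

noncomputable def Cx.ε : (Fin n →₀ Q) →ₗ[Q] (C.S →₀ Q) := Finsupp.lmapDomain Q Q C.e

lemma Cx.ε_single (i : Fin n) (r : Q) : C.ε (Finsupp.single i r) = Finsupp.single (C.e i) r := by
  simp [Cx.ε, Finsupp.mapDomain_single]

lemma Cx.ε_mem (w) : C.ε w ∈ gr Q C.deg 1 := by
  induction w using Finsupp.induction_linear with
  | zero => simp
  | add f g hf hg => rw [map_add]; exact add_mem hf hg
  | single i r => rw [C.ε_single]; exact single_mem_gr (C.deg_e i) r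

lemma Cx.exists_ε {z} (hz : z ∈ gr Q C.deg 1) : ∃ w, C.ε w = z := by
  refine gr_ind (LinearMap.range C.ε) (fun s hs => ?_) hz
  obtain ⟨i, rfl⟩ := C.eq_e s hs
  exact ⟨Finsupp.single i 1, C.ε_single _ _⟩

lemma Cx.d_ε (w) : C.d (C.ε w) = Finsupp.single C.o (Finsupp.linearCombination Q x w) := by
  induction w using Finsupp.induction_linear with
  | zero => simp
  | add f g hf hg => rw [map_add, map_add, map_add, hf, hg, Finsupp.single_add]
  | single i r =>
    rw [C.ε_single, Finsupp.linearCombination_single, ← mul_one r, ← smul_eq_mul,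
      ← Finsupp.smul_single, map_smul, C.d_e]
    simp

/-- boundaries of degree one -/
noncomputable abbrev Cx.B1 : Submodule Q (C.S →₀ Q) := (gr Q C.deg 2).map C.d

lemma Cx.kos_mem (u v : Fin n →₀ Q) :
    Finsupp.linearCombination Q x u • C.ε v - Finsupp.linearCombination Q x v • C.ε u ∈ C.B1 := by
  induction u using Finsupp.induction_linear with
  | zero => simp
  | add f g hf hg =>
    have := add_mem hf hg
    convert this using 1
    simp only [map_add, add_smul, smul_add]; abel
  | single i r =>
    induction v using Finsupp.induction_linear with
    | zero => simp
    | add f g hf hg =>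
      have := add_mem hf hg
      convert this using 1
      simp only [map_add, add_smul, smul_add]; abel
    | single j t =>
      obtain ⟨v, hv, h⟩ := C.kosz i j
      refine ⟨(r * t) • v, Submodule.smul_mem _ _ hv, ?_⟩
      rw [map_smul, h]
      simp only [C.ε_single, Finsupp.linearCombination_single, smul_sub, Finsupp.smul_single,
        smul_eq_mul]
      congr 2 <;> ring

lemma Cx.d_o_mem (hx : ∀ i, x i ∈ m) (w) : (C.d w) C.o ∈ m := by
  induction w using Finsupp.induction_linear with
  | zero => simp
  | add f g hf hg => rw [map_add, Finsupp.add_apply]; exact add_mem hf hg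
  | single s r =>
    rw [← mul_one r, ← smul_eq_mul, ← Finsupp.smul_single, map_smul, Finsupp.smul_apply]
    apply m.mul_mem_left
    rcases h : C.deg s with _ | _ | k
    · rw [C.eq_o s h, C.d_o]; simp
    · obtain ⟨i, rfl⟩ := C.eq_e s h
      rw [C.d_e]; simpa using hx i
    · have := C.d_deg s _ h
      rw [Finsupp.mem_supported'] at this
      rw [this]
      · simp
      · simp [C.deg_o]

lemma Cx.B1_mul (hm : ∀ c ∈ m, ∃ u, Finsupp.linearCombination Q x u = c) (c : Q) (hc : c ∈ m)
    (w) (hw : Finsupp.linearCombination Q x w = 0) : c • C.ε w ∈ C.B1 := by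
  obtain ⟨u, rfl⟩ := hm c hc
  have := C.kos_mem u w
  rwa [hw, zero_smul, sub_zero] at this

end cxfacts

/-- exactness modulo `q`. -/
structure ExMod {Q : Type} [CommRing Q] {m : Ideal Q} {n : ℕ} {x : Fin n → Q} {b : Fin n →₀ Q}
    (C : Cx Q m x b) (a : Fin n →₀ Q) (q c : Q) : Prop where
  E : ∀ k, 2 ≤ k → ∀ z ∈ gr Q C.deg k, ∀ w, C.d z = q • w →
    ∃ v ∈ gr Q C.deg (k+1), ∃ w', z = C.d v + q • w'
  E1 : ∀ z ∈ gr Q C.deg 1, ∀ w, C.d z = q • w →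
    ∃ l : Q, ∃ v ∈ gr Q C.deg 2, ∃ w', z = l • c • C.ε a + C.d v + q • w'
  E1' : ∀ l : Q, ∀ v ∈ gr Q C.deg 2, ∀ w, l • c • C.ε a = C.d v + q • w → l ∈ m

section
variable {Q : Type} [CommRing Q] {m : Ideal Q} {n : ℕ} {x : Fin n → Q} {a : Fin n →₀ Q}
  {f g : Q} (C : Cx Q m x (g • a))

lemma exMod_zero : ExMod C a 0 g where
  E k hk z hz w h := by
    obtain ⟨v, hv, h⟩ := C.ex k hk z hz (by simpa using h)
    exact ⟨v, hv, 0, by simp [h]⟩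
  E1 z hz w h := by
    obtain ⟨l, v, hv, h⟩ := C.ex1 z hz (by simpa using h)
    refine ⟨l, v, hv, 0, ?_⟩
    rw [h, smul_zero, add_zero, ← map_smul]; rfl
  E1' l v hv w h := by
    refine C.ex1' l v hv ?_
    rw [zero_smul, add_zero, ← map_smul] at h
    exact h

/-- the property relating annihilators -/
def AP (f g : Q) (k : ℕ) : Prop := ∀ w ∈ gr Q C.deg k, ∀ u ∈ gr Q C.deg (k+1), f • w = C.d u →
  ∃ w' ∈ gr Q C.deg k, ∃ b ∈ gr Q C.deg (k+1), w = g • w' + C.d b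

lemma AP_one (hm : ∀ c ∈ m, ∃ u, Finsupp.linearCombination Q x u = c)
    (hfg : ∀ x : Q, x * f = 0 → g ∣ x) (hz : f * g = 0)
    (ha : Finsupp.linearCombination Q x a = f) (γ : Fin n →₀ Q)
    (hγ : Finsupp.linearCombination Q x γ = g) : AP C f g 1 := by
  intro w hw u hu h
  obtain ⟨w, rfl⟩ := C.exists_ε hw
  set φ := Finsupp.linearCombination Q x with hφ
  have h1 : φ w * f = 0 := by
    have := congrArg C.d h
    rw [C.dd, map_smul, C.d_ε, Finsupp.smul_single, Finsupp.single_eq_zero] at this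
    rw [mul_comm]; exact this
  obtain ⟨c, hc⟩ := hfg _ h1
  have h2 : φ (w - c • γ) = 0 := by
    rw [map_sub, map_smul, hγ, hc, smul_eq_mul]; ring
  obtain ⟨l, v, hv, h3⟩ := C.ex1 (C.ε (w - c • γ)) (C.ε_mem _) (by rw [C.d_ε, h2]; simp)
  change _ = l • C.ε (g • a) + _ at h3
  have h4 : C.ε w = c • C.ε γ + l • g • C.ε a + C.d v := by
    rw [map_sub, map_smul, map_smul] at h3
    rw [add_assoc, ← h3]; abel
  have hB := C.kos_mem a γ
  rw [← hφ, ha, hγ] at hB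
  have hc : c • g • C.ε a ∈ C.B1 := by
    have e : c • g • C.ε a = C.d u - f • C.d v - c • (f • C.ε γ - g • C.ε a) := by
      have : f • l • g • C.ε a = 0 := by
        rw [smul_comm l g, smul_smul, hz, zero_smul]
      rw [← h, h4, smul_add, smul_add, this, smul_sub, smul_comm f c]; abel
    rw [e]
    exact sub_mem (sub_mem ⟨u, hu, rfl⟩ (Submodule.smul_mem _ _ ⟨v, hv, rfl⟩))
      (Submodule.smul_mem _ _ hB)
  obtain ⟨y, hy, hy'⟩ := hc
  have hcm : c ∈ m := C.ex1' c y hy (by rw [hy', ← map_smul]; rfl)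
  obtain ⟨t, ht⟩ := hm c hcm
  obtain ⟨r, hr, hr'⟩ := C.kos_mem t γ
  rw [ht, hγ] at hr'
  refine ⟨C.ε (t + l • a), C.ε_mem _, r + v, add_mem hr hv, ?_⟩
  rw [h4, map_add C.d, hr', map_add, map_smul, smul_add, smul_comm g l]; abel

lemma AP_one' (hm : ∀ c ∈ m, ∃ u, Finsupp.linearCombination Q x u = c)
    (hgf : ∀ x : Q, x * g = 0 → f ∣ x) (hz : f * g = 0) (hg : g ∈ m)
    (ha : Finsupp.linearCombination Q x a = f) (γ : Fin n →₀ Q)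
    (hγ : Finsupp.linearCombination Q x γ = g) : AP C g f 1 := by
  intro w hw u hu h
  obtain ⟨w, rfl⟩ := C.exists_ε hw
  set φ := Finsupp.linearCombination Q x with hφ
  have h1 : φ w * g = 0 := by
    have := congrArg C.d h
    rw [C.dd, map_smul, C.d_ε, Finsupp.smul_single, Finsupp.single_eq_zero] at this
    rw [mul_comm]; exact this
  obtain ⟨c, hc⟩ := hgf _ h1
  have h2 : φ (w - c • a) = 0 := by
    rw [map_sub, map_smul, ha, hc, smul_eq_mul]; ring
  obtain ⟨l, v, hv, h3⟩ := C.ex1 (C.ε (w - c • a)) (C.ε_mem _) (by rw [C.d_ε, h2]; simp)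
  change _ = l • C.ε (g • a) + _ at h3
  have h4 : C.ε w = c • C.ε a + l • g • C.ε a + C.d v := by
    rw [map_sub, map_smul, map_smul] at h3
    rw [add_assoc, ← h3]; abel
  have hB := C.kos_mem a γ
  rw [← hφ, ha, hγ] at hB
  have hgg := C.B1_mul hm g hg (g • a) (by
    rw [map_smul, ha, smul_eq_mul, mul_comm, hz])
  rw [map_smul] at hgg
  have hc : c • g • C.ε a ∈ C.B1 := by
    have e : c • g • C.ε a = C.d u - g • C.d v - l • (g • g • C.ε a) := by
      rw [← h, h4, smul_add, smul_add, smul_comm g c, smul_comm g l]; abel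
    rw [e]
    exact sub_mem (sub_mem ⟨u, hu, rfl⟩ (Submodule.smul_mem _ _ ⟨v, hv, rfl⟩))
      (Submodule.smul_mem _ _ hgg)
  obtain ⟨y, hy, hy'⟩ := hc
  have hcm : c ∈ m := C.ex1' c y hy (by rw [hy', ← map_smul]; rfl)
  obtain ⟨t, ht⟩ := hm c hcm
  obtain ⟨r, hr, hr'⟩ := C.kos_mem t a
  obtain ⟨r2, hr2, hr2'⟩ := hB
  rw [ht, ha] at hr'
  refine ⟨C.ε (t + l • γ), C.ε_mem _, r - l • r2 + v,
    add_mem (sub_mem hr (Submodule.smul_mem _ _ hr2)) hv, ?_⟩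
  rw [h4, map_add C.d, map_sub, hr', map_smul C.d, hr2', map_add, map_smul, smul_add, smul_comm f l,
    smul_sub]; abel

lemma AP_succ {f g : Q} (hfg : ∀ x : Q, x * f = 0 → g ∣ x) (hz : f * g = 0) {k : ℕ} (hk : 1 ≤ k)
    (h : AP C g f k) : AP C f g (k+1) := by
  intro w hw u hu hwu
  have h1 : f • C.d w = 0 := by rw [← map_smul, hwu, C.dd]
  obtain ⟨v, hv, hvs⟩ := free_ann hfg _ h1
  have hvk : v ∈ gr Q C.deg k := by
    have := C.d_mem hw
    rw [gr, Finsupp.mem_supported] at this ⊢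
    exact (Finset.coe_subset.2 hvs).trans this
  obtain ⟨v', -, b, hb, h2⟩ := h v hvk w hw hv.symm
  obtain ⟨y, hy, h3⟩ := C.ex (k+1) (by omega) (w - g • b)
    (sub_mem hw (Submodule.smul_mem _ _ hb)) (by
      rw [map_sub, hv, map_smul, ← smul_sub, h2, add_sub_cancel_right, smul_smul, mul_comm, hz,
        zero_smul])
  exact ⟨b, hb, y, hy, by rw [h3]; abel⟩

lemma exMod_f (hm : ∀ c ∈ m, ∃ u, Finsupp.linearCombination Q x u = c) (hx : ∀ i, x i ∈ m)
    (hfg : ∀ x : Q, x * f = 0 → g ∣ x) (hgf : ∀ x : Q, x * g = 0 → f ∣ x) (hz : f * g = 0)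
    (hg : g ∈ m)
    (ha : Finsupp.linearCombination Q x a = f) : ExMod C a f 1 := by
  obtain ⟨γ, hγ⟩ := hm g hg
  have hAP : ∀ k, AP C f g (k+1) ∧ AP C g f (k+1) := by
    intro k
    induction k with
    | zero => exact ⟨AP_one C hm hfg hz ha γ hγ, AP_one' C hm hgf hz hg ha γ hγ⟩
    | succ k ih =>
      exact ⟨AP_succ C hfg hz (by omega) ih.2, AP_succ C hgf (by rw [mul_comm, hz]) (by omega) ih.1⟩
  have hB := C.kos_mem a γ
  rw [ha, hγ] at hB
  obtain ⟨r, hr, hr'⟩ := hB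
  constructor
  · intro k hk z hz' w h
    obtain ⟨k, rfl⟩ : ∃ l, k = l + 2 := ⟨k - 2, by omega⟩
    classical
    have hw1 : Finsupp.filter (fun s => C.deg s = k+1) w ∈ gr Q C.deg (k+1) := by
      intro s hs
      simp only [Finset.mem_coe, Finsupp.mem_support_iff] at hs
      by_contra hcon
      exact hs (Finsupp.filter_apply_neg _ _ hcon)
    have hw2 : f • Finsupp.filter (fun s => C.deg s = k+1) w = C.d z := by
      ext s
      have hd := C.d_mem hz'
      rw [Finsupp.mem_supported'] at hd
      by_cases hs : C.deg s = k+1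
      · rw [h]; simp [hs]
      · rw [hd s hs]; simp [hs]
    obtain ⟨w', -, b, hb, h2⟩ := (hAP k).1 _ hw1 z hz' hw2
    obtain ⟨y, hy, h3⟩ := C.ex (k+2) (by omega) (z - f • b)
      (sub_mem hz' (Submodule.smul_mem _ _ hb)) (by
        rw [map_sub, ← hw2, map_smul, ← smul_sub, h2, add_sub_cancel_right, smul_smul, hz,
          zero_smul])
    exact ⟨y, hy, b, by rw [h3]; abel⟩
  · intro z hz' w h
    obtain ⟨z, rfl⟩ := C.exists_ε hz'
    have hl : Finsupp.linearCombination Q x z = f * w C.o := by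
      rw [C.d_ε] at h
      have := DFunLike.congr_fun h C.o
      simpa using this
    obtain ⟨l, v, hv, h3⟩ := C.ex1 (C.ε (z - w C.o • a)) (C.ε_mem _) (by
      rw [C.d_ε, map_sub, hl, map_smul, ha, smul_eq_mul, mul_comm, sub_self]; simp)
    change _ = l • C.ε (g • a) + _ at h3
    refine ⟨w C.o, v - l • r, sub_mem hv (Submodule.smul_mem _ _ hr), l • C.ε γ, ?_⟩
    rw [map_sub, map_smul, map_smul, sub_eq_iff_eq_add] at h3
    rw [h3, map_sub, map_smul, hr', smul_sub, smul_comm f l, one_smul]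
    abel
  · intro l v hv w h
    have h1 := congrArg C.d h
    rw [map_add, C.dd, zero_add, one_smul, map_smul, map_smul, C.d_ε, ha] at h1
    have h2 := DFunLike.congr_fun h1 C.o
    simp only [Finsupp.smul_apply, Finsupp.single_eq_same, smul_eq_mul] at h2
    have h3 : g ∣ l - C.d w C.o := hfg _ (by rw [sub_mul, h2]; ring)
    obtain ⟨t, ht⟩ := h3
    rw [sub_eq_iff_eq_add] at ht
    rw [ht]
    exact add_mem (m.mul_mem_right _ hg) (C.d_o_mem hx w)

end

end BettiAux


namespace BettiAux

lemma stage {S V : Type} (deg : S → ℕ) (P : ℕ → (S → V) → Prop)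
    (hloc : ∀ k f f', (∀ s, deg s ≤ k → f s = f' s) → P k f → P k f')
    (h0 : ∃ f, P 0 f)
    (hs : ∀ k f, P k f → ∃ f', (∀ s, deg s ≤ k → f' s = f s) ∧ P (k+1) f') :
    ∃ f, ∀ k, P k f := by
  obtain ⟨f0, hf0⟩ := h0
  choose! nx hnx hnx' using hs
  let F : ℕ → S → V := fun k => Nat.rec f0 (fun k f => nx k f) k
  have hF : ∀ k, P k (F k) := by
    intro k
    induction k with
    | zero => exact hf0
    | succ k ih => exact hnx' k _ ih
  have hF' : ∀ j k s, deg s ≤ k → F (k + j) s = F k s := by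
    intro j k s h
    induction j with
    | zero => rfl
    | succ j ih => rw [← ih]; exact hnx (k+j) _ (hF _) s (by omega)
  refine ⟨fun s => F (deg s) s, fun k => hloc k (F k) _ (fun s hsk => ?_) (hF k)⟩
  have := hF' (k - deg s) (deg s) s le_rfl
  rwa [Nat.add_sub_cancel' hsk] at this

section
variable {Q : Type} [CommRing Q] {m : Ideal Q} {n : ℕ} {x : Fin n → Q} {a : Fin n →₀ Q}
  (C : Cx Q m x a)

/-- homogeneous of degree `p` -/
def HD {S : Type} (deg : S → ℕ) (h : (S →₀ Q) →ₗ[Q] (S →₀ Q)) (p : ℕ) : Prop :=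
  ∀ k, ∀ z ∈ gr Q deg k, h z ∈ gr Q deg (k + p)

lemma HD_of {S : Type} (deg : S → ℕ) (h : (S →₀ Q) →ₗ[Q] (S →₀ Q)) (p : ℕ)
    (hh : ∀ s, h (Finsupp.single s 1) ∈ gr Q deg (deg s + p)) : HD deg h p := by
  intro k z hz
  refine gr_ind ((gr Q deg (k+p)).comap h) (fun s hs => ?_) hz
  have := hh s
  rw [hs] at this
  exact this

lemma lc_congr {S V : Type} [AddCommGroup V] [Module Q V] {deg : S → ℕ} {k : ℕ} {f f' : S → V}
    (h : ∀ s, deg s = k → f s = f' s)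
    {z} (hz : z ∈ gr Q deg k) :
    Finsupp.linearCombination Q f z = Finsupp.linearCombination Q f' z := by
  have := gr_ind (LinearMap.eqLocus (Finsupp.linearCombination Q f)
    (Finsupp.linearCombination Q f')) (fun s hs => by simp [h s hs]) hz
  exact this

lemma homotopy (e : ℕ) (Z : (C.S →₀ Q) →ₗ[Q] (C.S →₀ Q)) (hZ : HD C.deg Z e)
    (hdZ : ∀ z, C.d (Z z) = Z (C.d z)) (b : C.S →₀ Q) (hb : b ∈ gr Q C.deg (e+1))
    (hb' : C.d b = Z (Finsupp.single C.o 1))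
    (h1 : ∀ i, ∃ v ∈ gr Q C.deg (e+2), C.d v = Z (Finsupp.single (C.e i) 1) - x i • b) :
    ∃ h : (C.S →₀ Q) →ₗ[Q] (C.S →₀ Q), HD C.deg h (e+1) ∧ h (Finsupp.single C.o 1) = b ∧
      ∀ z, C.d (h z) + h (C.d z) = Z z := by
  classical
  suffices hmain : ∃ f : C.S → (C.S →₀ Q), ∀ k, f C.o = b ∧
      ∀ s, C.deg s ≤ k → f s ∈ gr Q C.deg (C.deg s + (e + 1)) ∧
        C.d (f s) + Finsupp.linearCombination Q f (C.d (Finsupp.single s 1)) =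
          Z (Finsupp.single s 1) by
    obtain ⟨f, hf⟩ := hmain
    refine ⟨Finsupp.linearCombination Q f, HD_of _ _ _ fun s => ?_, ?_, ?_⟩
    · simpa using ((hf (C.deg s)).2 s le_rfl).1
    · simpa using (hf 0).1
    · intro z
      have : C.d ∘ₗ Finsupp.linearCombination Q f + Finsupp.linearCombination Q f ∘ₗ C.d = Z := by
        apply Finsupp.lhom_ext'
        intro s
        ext1
        simpa using ((hf (C.deg s)).2 s le_rfl).2
      exact LinearMap.congr_fun this z
  apply stage C.deg (fun k (f : C.S → (C.S →₀ Q)) => f C.o = b ∧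
      ∀ s, C.deg s ≤ k → f s ∈ gr Q C.deg (C.deg s + (e + 1)) ∧
        C.d (f s) + Finsupp.linearCombination Q f (C.d (Finsupp.single s 1)) =
          Z (Finsupp.single s 1))
  · rintro k f f' hff ⟨h0, h⟩
    refine ⟨by rw [← hff _ (by rw [C.deg_o]; omega), h0], fun s hs => ?_⟩
    rw [← hff s hs]
    refine ⟨(h s hs).1, ?_⟩
    rw [← (h s hs).2]
    congr 1
    rcases hk : C.deg s with _ | l
    · rw [C.d_zero (single_mem_gr hk 1)]; simp
    · exact lc_congr (fun t ht => (hff t (by omega)).symm) (C.d_deg s l hk)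
  · refine ⟨fun s => b, rfl, fun s hs => ?_⟩
    obtain rfl := C.eq_o s (by omega)
    rw [C.deg_o, C.d_o, zero_add]
    exact ⟨hb, by simp [hb']⟩
  · rintro k f ⟨h0, h⟩
    have key : ∀ s, ∃ y, C.deg s = k+1 → y ∈ gr Q C.deg (C.deg s + (e+1)) ∧
        C.d y = Z (Finsupp.single s 1) -
          Finsupp.linearCombination Q f (C.d (Finsupp.single s 1)) := by
      intro s
      by_cases hs : C.deg s = k+1
      swap
      · exact ⟨0, fun h => absurd h hs⟩
      rcases k with _ | k
      · obtain ⟨i, rfl⟩ := C.eq_e s hs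
        obtain ⟨v, hv, h⟩ := h1 i
        refine ⟨v, fun _ => ⟨?_, ?_⟩⟩
        · rw [hs]; convert hv using 2; omega
        · rw [h, C.d_e]; simp [h0]
      · have hlin : ∀ z ∈ gr Q C.deg (k+1), Finsupp.linearCombination Q f z ∈
            gr Q C.deg (k+1+(e+1)) ∧
            C.d (Finsupp.linearCombination Q f z) + Finsupp.linearCombination Q f (C.d z) = Z z := by
          intro z hz
          constructor
          · refine gr_ind ((gr Q C.deg _).comap _) (fun s hs => ?_) hz
            have := (h s hs.le).1
            rw [hs] at this
            simpa using this
          · refine gr_ind (LinearMap.eqLocus (C.d ∘ₗ Finsupp.linearCombination Q f +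
              Finsupp.linearCombination Q f ∘ₗ C.d) Z) (fun s hs => ?_) hz
            simpa using (h s hs.le).2
        have hds := C.d_deg s _ hs
        obtain ⟨l1, l2⟩ := hlin _ hds
        rw [C.dd, map_zero, add_zero] at l2
        obtain ⟨v, hv, h⟩ := C.ex (k+1+1+e) (by omega) (Z (Finsupp.single s 1) -
          Finsupp.linearCombination Q f (C.d (Finsupp.single s 1)))
          (sub_mem (hZ _ _ (single_mem_gr hs 1)) (by convert l1 using 2; omega))
          (by rw [map_sub, hdZ, l2, sub_self])
        refine ⟨v, fun _ => ⟨?_, h⟩⟩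
        rw [hs]; exact hv
    choose y hy using key
    let f' : C.S → (C.S →₀ Q) := fun s => if C.deg s ≤ k then f s else y s
    have hf' : ∀ s, C.deg s ≤ k → f' s = f s := fun s hs => if_pos hs
    refine ⟨f', hf', ?_, fun s hs => ?_⟩
    · rw [hf' _ (by rw [C.deg_o]; omega), h0]
    · have hlc : Finsupp.linearCombination Q f' (C.d (Finsupp.single s 1)) =
          Finsupp.linearCombination Q f (C.d (Finsupp.single s 1)) := by
        rcases hk : C.deg s with _ | l
        · rw [C.d_zero (single_mem_gr hk 1)]; simp
        · exact lc_congr (fun t ht => hf' t (by omega)) (C.d_deg s l hk)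
      rw [hlc]
      by_cases hsk : C.deg s ≤ k
      · rw [hf' s hsk]; exact h s hsk
      · have : f' s = y s := if_neg hsk
        rw [this]
        obtain ⟨p1, p2⟩ := hy s (by omega)
        exact ⟨p1, by rw [p2]; abel⟩

end

end BettiAux


namespace BettiAux

section fam
variable {n : ℕ}

/-- total degree of a multi-index -/
def sz (I : Fin n →₀ ℕ) : ℕ := ∑ i, I i

lemma sz_add (I J : Fin n →₀ ℕ) : sz (I + J) = sz I + sz J := by
  simp [sz, Finset.sum_add_distrib]

lemma sz_eq_zero {I : Fin n →₀ ℕ} (h : sz I = 0) : I = 0 := by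
  ext i
  have := (Finset.sum_eq_zero_iff.1 h) i (Finset.mem_univ _)
  simpa using this

lemma sz_single (i : Fin n) : sz (Finsupp.single i 1) = 1 := by
  simp [sz, Finsupp.single_apply]

lemma sz_one {I : Fin n →₀ ℕ} (h : sz I = 1) : ∃ i, I = Finsupp.single i 1 := by
  have : ∃ i, I i ≠ 0 := by
    by_contra hcon
    push Not at hcon
    have : I = 0 := by ext i; simpa using hcon i
    rw [this] at h; simp [sz] at h
  obtain ⟨i, hi⟩ := this
  refine ⟨i, ?_⟩
  have hle : Finsupp.single i 1 ≤ I := by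
    rw [Finsupp.single_le_iff]; omega
  obtain ⟨J, rfl⟩ := exists_add_of_le hle
  rw [sz_add, sz_single] at h
  rw [sz_eq_zero (by omega : sz J = 0), add_zero]

/-- The convolution product. -/
noncomputable def cv {R : Type} [Ring R] (A B : (Fin n →₀ ℕ) → R) : (Fin n →₀ ℕ) → R :=
  fun I => ∑ p ∈ Finset.HasAntidiagonal.antidiagonal I, A p.1 * B p.2

lemma cv_assoc {R : Type} [Ring R] (A B D : (Fin n →₀ ℕ) → R) :
    cv (cv A B) D = cv A (cv B D) := by
  classical
  let a : MvPowerSeries (Fin n) R := A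
  let b : MvPowerSeries (Fin n) R := B
  let c : MvPowerSeries (Fin n) R := D
  have h := mul_assoc a b c
  have hm : ∀ u v : MvPowerSeries (Fin n) R, (u * v : MvPowerSeries (Fin n) R) = cv u v := by
    intro u v
    funext I
    exact MvPowerSeries.coeff_mul I u v
  rw [hm, hm, hm, hm] at h
  exact h

lemma cv_left {R : Type} [Ring R] (A Y : (Fin n →₀ ℕ) → R) (I : Fin n →₀ ℕ)
    (h : ∀ J, sz J < sz I → Y J = 0) : cv A Y I = A 0 * Y I := by
  classical
  rw [cv, Finset.sum_eq_single (0, I)]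
  · rintro ⟨p, q⟩ hpq hne
    rw [Finset.HasAntidiagonal.mem_antidiagonal] at hpq
    simp only at hpq
    have := sz_add p q
    rw [hpq] at this
    by_cases hp : sz p = 0
    · have := sz_eq_zero hp
      subst this
      simp only [zero_add] at hpq
      subst hpq
      exact absurd rfl hne
    · rw [h q (by omega), mul_zero]
  · intro h; simp at h

lemma cv_right {R : Type} [Ring R] (A Y : (Fin n →₀ ℕ) → R) (I : Fin n →₀ ℕ)
    (h : ∀ J, sz J < sz I → Y J = 0) : cv Y A I = Y I * A 0 := by
  classical
  rw [cv, Finset.sum_eq_single (I, 0)]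
  · rintro ⟨q, p⟩ hpq hne
    rw [Finset.HasAntidiagonal.mem_antidiagonal] at hpq
    simp only at hpq
    have := sz_add q p
    rw [hpq] at this
    by_cases hp : sz p = 0
    · have := sz_eq_zero hp
      subst this
      simp only [add_zero] at hpq
      subst hpq
      exact absurd rfl hne
    · rw [h q (by omega), zero_mul]
  · intro h; simp at h

/-- pointwise difference -/
def df {R : Type} [Ring R] (A B : (Fin n →₀ ℕ) → R) : (Fin n →₀ ℕ) → R := fun I => A I - B I

lemma df_eq_zero {R : Type} [Ring R] {A B : (Fin n →₀ ℕ) → R} {I : Fin n →₀ ℕ} (h : A I = B I) :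
    df A B I = 0 := by rw [df, h, sub_self]

lemma cv_df {R : Type} [Ring R] (A B D : (Fin n →₀ ℕ) → R) :
    cv A (df B D) = df (cv A B) (cv A D) := by
  funext I; simp only [cv, df, mul_sub, Finset.sum_sub_distrib]

lemma df_cv {R : Type} [Ring R] (A B D : (Fin n →₀ ℕ) → R) :
    cv (df B D) A = df (cv B A) (cv D A) := by
  funext I; simp only [cv, df, sub_mul, Finset.sum_sub_distrib]

lemma add_df {R : Type} [Ring R] (A B : (Fin n →₀ ℕ) → R) (I : Fin n →₀ ℕ) :
    B I + df A B I = A I := by rw [df]; abel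

lemma df_eq {Q R : Type} [CommRing Q] [Ring R] [Algebra Q R] (A B : (Fin n →₀ ℕ) → R)
    (I : Fin n →₀ ℕ) : df A B I = A I + (-1 : Q) • B I := by rw [df]; simp [sub_eq_add_neg]

lemma cv_congr {R : Type} [Ring R] {A A' B B' : (Fin n →₀ ℕ) → R} {I : Fin n →₀ ℕ}
    (hA : ∀ J, sz J ≤ sz I → A J = A' J) (hB : ∀ J, sz J ≤ sz I → B J = B' J) :
    cv A B I = cv A' B' I := by
  refine Finset.sum_congr rfl ?_
  rintro ⟨p, q⟩ h
  rw [Finset.HasAntidiagonal.mem_antidiagonal] at h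
  have := sz_add p q
  rw [h] at this
  rw [hA p (by omega), hB q (by omega)]

variable {Q : Type} [CommRing Q] {m : Ideal Q} {x : Fin n → Q} {a : Fin n →₀ Q}
  (C : Cx Q m x a)

/-- the right hand side of the equation for higher homotopies -/
noncomputable def XX (M : Type) [AddCommGroup M] [Module Q M] (x : Fin n → Q) (I : Fin n →₀ ℕ) :
    Module.End Q M :=
  open Classical in (∑ i, if I = Finsupp.single i 1 then x i else 0) • 1

lemma cv_XX (M : Type) [AddCommGroup M] [Module Q M] (x : Fin n → Q)
    (A : (Fin n →₀ ℕ) → Module.End Q M) :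
    cv A (XX M x) = cv (XX M x) A := by
  classical
  funext I
  rw [cv, cv]
  refine Eq.trans ?_ (Finsupp.sum_antidiagonal_swap I (fun p q => XX M x p * A q)).symm
  refine Finset.sum_congr rfl fun p _ => ?_
  simp [XX]

lemma single_one_eq {i j : Fin n} :
    (Finsupp.single i 1 : Fin n →₀ ℕ) = Finsupp.single j 1 ↔ j = i := by
  rw [Finsupp.single_left_inj (by norm_num : (1 : ℕ) ≠ 0)]
  exact eq_comm

lemma XX_single (M : Type) [AddCommGroup M] [Module Q M] (x : Fin n → Q) (i : Fin n) :
    XX M x (Finsupp.single i 1) = x i • 1 := by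
  classical
  simp only [XX, single_one_eq]
  rw [Finset.sum_ite_eq' Finset.univ i x]; simp

lemma XX_of_ne (M : Type) [AddCommGroup M] [Module Q M] (x : Fin n → Q) (I : Fin n →₀ ℕ)
    (h : sz I ≠ 1) : XX M x I = 0 := by
  classical
  rw [XX, Finset.sum_eq_zero, zero_smul]
  intro i _
  rw [if_neg]
  rintro rfl
  exact h (sz_single i)

/-- a family of higher homotopies up to order `N` -/
def Fam (N : ℕ) (s : (Fin n →₀ ℕ) → Module.End Q (C.S →₀ Q)) : Prop :=
  s 0 = C.d ∧ ∀ I, sz I ≤ N → cv s s I = XX _ x I ∧ (I ≠ 0 → HD C.deg (s I) (2 * sz I - 1)) ∧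
    ∀ i, I = Finsupp.single i 1 → s I (Finsupp.single C.o 1) = Finsupp.single (C.e i) 1

lemma HD_add {S : Type} {deg : S → ℕ} {h h' : Module.End Q (S →₀ Q)} {p : ℕ} (H : HD deg h p)
    (H' : HD deg h' p) : HD deg (h + h') p := fun k z hz => add_mem (H k z hz) (H' k z hz)

lemma HD_sum {S T : Type} {deg : S → ℕ} {p : ℕ} (t : Finset T) (h : T → Module.End Q (S →₀ Q))
    (H : ∀ i ∈ t, HD deg (h i) p) : HD deg (∑ i ∈ t, h i) p := by
  intro k z hz
  rw [LinearMap.sum_apply]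
  exact Submodule.sum_mem _ fun i hi => H i hi k z hz

lemma HD_smul {S : Type} {deg : S → ℕ} {h : Module.End Q (S →₀ Q)} {p : ℕ} (c : Q) (H : HD deg h p) :
    HD deg (c • h) p := fun k z hz => Submodule.smul_mem _ _ (H k z hz)

lemma fam_zero : ∃ s, Fam C 0 s := by
  classical
  refine ⟨fun I => if I = 0 then C.d else 0, by simp, fun I hI => ?_⟩
  have := sz_eq_zero (Nat.le_zero.1 hI)
  subst this
  refine ⟨?_, fun h => absurd rfl h, fun i h => ?_⟩
  · rw [XX_of_ne _ _ _ (by simp [sz])]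
    refine LinearMap.ext fun z => ?_
    simp [cv, C.dd]
  · have := congrArg sz h
    rw [sz_single] at this
    simp [sz] at this

lemma fam_succ (N : ℕ) (s : (Fin n →₀ ℕ) → Module.End Q (C.S →₀ Q)) (hs : Fam C N s) :
    ∃ s', (∀ I, sz I ≤ N → s' I = s I) ∧ Fam C (N+1) s' := by
  classical
  obtain ⟨h0, hs⟩ := hs
  let t : (Fin n →₀ ℕ) → Module.End Q (C.S →₀ Q) := fun I => if sz I ≤ N then s I else 0
  have ht : ∀ I, sz I ≤ N → t I = s I := fun I h => if_pos h
  have ht' : ∀ I, N < sz I → t I = 0 := fun I h => if_neg (by omega)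
  have ht0 : t 0 = C.d := by rw [ht 0 (by simp [sz]), h0]
  let Y : (Fin n →₀ ℕ) → Module.End Q (C.S →₀ Q) := df (XX _ x) (cv t t)
  have hY : ∀ J, sz J ≤ N → Y J = 0 := by
    intro J hJ
    apply df_eq_zero
    rw [cv_congr (A' := s) (B' := s) (fun K hK => ht K (by omega)) (fun K hK => ht K (by omega)),
      (hs J hJ).1]
  have hcomm : cv t Y = cv Y t := by
    rw [cv_df, df_cv, cv_XX, cv_assoc]
  have hdY : ∀ I, sz I = N+1 → ∀ z, C.d (Y I z) = Y I (C.d z) := by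
    intro I hI z
    have := congrFun hcomm I
    rw [cv_left _ _ _ (fun J hJ => hY J (by omega)),
      cv_right _ _ _ (fun J hJ => hY J (by omega)), ht0] at this
    exact LinearMap.congr_fun this z
  have hHD : ∀ I, sz I = N+1 → HD C.deg (Y I) (2*N) := by
    intro I hI
    have hXX : HD C.deg (XX (C.S →₀ Q) x I) (2*N) := by
      by_cases h1 : sz I = 1
      · obtain rfl : N = 0 := by omega
        intro k z hz
        exact Submodule.smul_mem _ _ hz
      · rw [XX_of_ne _ _ _ h1]
        intro k z hz; simp
    have : Y I = XX (C.S →₀ Q) x I + (-1 : Q) • cv t t I := df_eq _ _ _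
    rw [this]
    refine HD_add hXX (HD_smul _ (HD_sum _ _ ?_))
    rintro ⟨p, q⟩ hpq
    rw [Finset.HasAntidiagonal.mem_antidiagonal] at hpq
    have hsz := sz_add p q
    rw [hpq] at hsz
    dsimp only
    by_cases hp : sz p = 0
    · rw [ht' q (by omega), mul_zero]; intro k z hz; simp
    by_cases hq : sz q = 0
    · rw [ht' p (by omega), zero_mul]; intro k z hz; simp
    rw [ht p (by omega), ht q (by omega)]
    intro k z hz
    have a1 := (hs q (by omega)).2.1 (by rintro rfl; simp [sz] at hq) k z hz
    have a2 := (hs p (by omega)).2.1 (by rintro rfl; simp [sz] at hp) _ _ a1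
    have : k + (2 * sz q - 1) + (2 * sz p - 1) = k + 2 * N := by omega
    rw [this] at a2
    exact a2
  have key : ∀ I, ∃ h : Module.End Q (C.S →₀ Q), sz I = N+1 → HD C.deg h (2*N+1) ∧
      (∀ i, I = Finsupp.single i 1 → h (Finsupp.single C.o 1) = Finsupp.single (C.e i) 1) ∧
      ∀ z, C.d (h z) + h (C.d z) = Y I z := by
    intro I
    by_cases hI : sz I = N + 1
    swap
    · exact ⟨0, fun h => absurd h hI⟩
    rcases N with _ | N
    · obtain ⟨i, rfl⟩ := sz_one hI
      have hYi : ∀ z, Y (Finsupp.single i 1) z = x i • z := by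
        intro z
        have : cv t t (Finsupp.single i 1) = 0 := by
          refine Finset.sum_eq_zero ?_
          rintro ⟨p, q⟩ hpq
          rw [Finset.HasAntidiagonal.mem_antidiagonal] at hpq
          have hsz := sz_add p q
          rw [hpq, hI] at hsz
          dsimp only
          by_cases hp : sz p = 0
          · rw [ht' q (by omega), mul_zero]
          · rw [ht' p (by omega), zero_mul]
        have e : Y (Finsupp.single i 1) = XX (C.S →₀ Q) x (Finsupp.single i 1) +
          (-1 : Q) • cv t t (Finsupp.single i 1) := df_eq _ _ _
        rw [e, this, XX_single]; simp
      obtain ⟨h, h1, h2, h3⟩ := homotopy C 0 (Y (Finsupp.single i 1)) (hHD _ hI) (hdY _ hI)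
        (Finsupp.single (C.e i) 1) (single_mem_gr (C.deg_e i) 1)
        (by rw [hYi, C.d_e]; simp) (by
          intro j
          obtain ⟨v, hv, hv'⟩ := C.kosz i j
          refine ⟨v, hv, ?_⟩
          rw [hv', hYi]; simp)
      refine ⟨h, fun _ => ⟨h1, fun j hj => ?_, h3⟩⟩
      rw [single_one_eq] at hj
      rw [h2, hj]
    · obtain ⟨b, hb, hb'⟩ := C.ex (2*(N+1)) (by omega) (Y I (Finsupp.single C.o 1))
        (by have := hHD I hI 0 _ (single_mem_gr C.deg_o 1); rwa [zero_add] at this)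
        (by rw [hdY I hI, C.d_o, map_zero])
      obtain ⟨h, h1, h2, h3⟩ := homotopy C (2*(N+1)) (Y I) (hHD _ hI) (hdY _ hI) b hb hb' (by
          intro i
          refine C.ex (2*(N+1)+1) (by omega) _ (sub_mem ?_ (Submodule.smul_mem _ _ hb)) ?_
          · have := hHD I hI 1 _ (single_mem_gr (C.deg_e i) 1)
            rwa [add_comm 1] at this
          · rw [map_sub, hdY I hI, map_smul, hb', C.d_e, ← map_smul]; simp)
      refine ⟨h, fun _ => ⟨h1, fun j hj => ?_, h3⟩⟩
      rw [hj, sz_single] at hI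
      omega
  choose h hh using key
  let k : (Fin n →₀ ℕ) → Module.End Q (C.S →₀ Q) := fun I => if sz I = N+1 then h I else 0
  have hk : ∀ I, sz I ≤ N → k I = 0 := fun I hI => if_neg (by omega)
  have hk' : ∀ I, sz I = N+1 → k I = h I := fun I hI => if_pos hI
  refine ⟨t + k, fun I hI => by rw [Pi.add_apply, ht I hI, hk I hI, add_zero], ?_, ?_⟩
  · rw [Pi.add_apply, ht0, hk 0 (by simp [sz]), add_zero]
  intro I hI
  by_cases hIN : sz I ≤ N
  · have hc : cv (t + k) (t + k) I = cv s s I := by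
      apply cv_congr <;>
      · intro J hJ
        rw [Pi.add_apply, ht J (by omega), hk J (by omega), add_zero]
    rw [hc, Pi.add_apply, ht I hIN, hk I hIN, add_zero]
    exact hs I hIN
  · have hI' : sz I = N + 1 := by omega
    obtain ⟨h1, h2, h3⟩ := hh I hI'
    rw [Pi.add_apply, ht' I (by omega), hk' I hI', zero_add]
    refine ⟨?_, fun _ => ?_, h2⟩
    · have e : cv (t + k) (t + k) = cv t t + cv t k + cv k t + cv k k := by
        funext J
        simp only [cv, Pi.add_apply, add_mul, mul_add, Finset.sum_add_distrib]
        abel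
      rw [e, Pi.add_apply, Pi.add_apply, Pi.add_apply,
        cv_left t k I (fun J hJ => hk J (by omega)), cv_right t k I (fun J hJ => hk J (by omega)),
        cv_left k k I (fun J hJ => hk J (by omega)), hk 0 (by simp [sz]), zero_mul, add_zero,
        ht0, hk' I hI']
      have h3' : C.d * h I + h I * C.d = Y I := by exact LinearMap.ext fun z => h3 z
      rw [add_assoc, h3']
      exact add_df _ _ _
    · rw [hI', show 2 * (N+1) - 1 = 2*N+1 by omega]; exact h1

lemma exists_fam : ∃ s, ∀ N, Fam C N s := by
  apply stage sz (fun N s => Fam C N s)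
  · rintro N s s' hss ⟨h0, h⟩
    refine ⟨by rw [← hss 0 (by simp [sz]), h0], fun I hI => ?_⟩
    rw [← hss I hI, ← cv_congr (A := s) (B := s) (fun J hJ => hss J (by omega))
      (fun J hJ => hss J (by omega))]
    exact h I hI
  · exact fam_zero C
  · exact fam_succ C

/-- A single-variable system of higher homotopies. -/
structure Hty (f : Q) (b : Fin n →₀ Q) where
  σ : ℕ → Module.End Q (C.S →₀ Q)
  zero : σ 0 = C.d
  hd : ∀ j, HD C.deg (σ (j+1)) (2*j+1)
  rel : ∀ j, ∑ p ∈ Finset.HasAntidiagonal.antidiagonal j, σ p.1 * σ p.2 = if j = 1 then f • 1 else 0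
  mem : ∀ j z t, σ (j+1) z t ∈ m
  one : σ 1 (Finsupp.single C.o 1) = C.ε b

lemma exists_hty (f : Q) (b : Fin n →₀ Q) (hb : ∀ i, b i ∈ m)
    (hf : Finsupp.linearCombination Q x b = f) : Nonempty (Hty C f b) := by
  classical
  obtain ⟨s, hs⟩ := exists_fam C
  let D : ℕ → Finset (Fin n →₀ ℕ) := fun j => (Finset.univ : Finset (Fin n)).finsuppAntidiag j
  have hD : ∀ j I, I ∈ D j ↔ sz I = j := by
    intro j I
    simp [D, Finset.mem_finsuppAntidiag, sz]
  let mon : (Fin n →₀ ℕ) → Q := fun I => ∏ i, b i ^ I i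
  have mon_add : ∀ I J, mon (I + J) = mon I * mon J := by
    intro I J; simp [mon, pow_add, Finset.prod_mul_distrib]
  have mon_single : ∀ i, mon (Finsupp.single i 1) = b i := by
    intro i
    simp only [mon]
    rw [Finset.prod_eq_single i]
    · simp
    · intro j _ hj; rw [Finsupp.single_eq_of_ne hj, pow_zero]
    · simp
  have mon_mem : ∀ I, I ≠ 0 → mon I ∈ m := by
    intro I hI
    obtain ⟨i, hi⟩ := Finsupp.ne_iff.1 hI
    refine Ideal.mem_of_dvd _ (Finset.dvd_prod_of_mem _ (Finset.mem_univ i)) ?_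
    exact Ideal.pow_mem_of_mem _ (hb i) _ (Nat.pos_of_ne_zero hi)
  have hD0 : D 0 = {0} := by
    ext I
    rw [hD, Finset.mem_singleton]
    exact ⟨sz_eq_zero, by rintro rfl; simp [sz]⟩
  have hone : ∀ {V : Type} [AddCommMonoid V] (F : (Fin n →₀ ℕ) → V),
      ∑ I ∈ D 1, F I = ∑ i, F (Finsupp.single i 1) := by
    intro V _ F
    symm
    apply Finset.sum_bij (fun i _ => Finsupp.single i 1)
    · intro i _; rw [hD, sz_single]
    · intro i _ j _ h; exact (single_one_eq.1 h).symm
    · intro I hI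
      obtain ⟨i, rfl⟩ := sz_one ((hD _ _).1 hI)
      exact ⟨i, Finset.mem_univ _, rfl⟩
    · intro i _; rfl
  refine ⟨⟨fun j => ∑ I ∈ D j, mon I • s I, ?_, ?_, ?_, ?_, ?_⟩⟩
  · rw [hD0, Finset.sum_singleton, (hs 0).1]; simp [mon]
  · intro j
    refine HD_sum _ _ fun I hI => HD_smul _ ?_
    rw [hD] at hI
    have := ((hs (j+1)).2 I hI.le).2.1 (by rintro rfl; simp [sz] at hI)
    rwa [hI] at this
  · intro j
    have e1 : ∑ p ∈ Finset.HasAntidiagonal.antidiagonal j, (∑ I ∈ D p.1, mon I • s I) * (∑ I ∈ D p.2, mon I • s I)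
        = ∑ I ∈ D j, mon I • cv s s I := by
      simp only [cv, Finset.sum_mul_sum, Finset.smul_sum, ← Finset.sum_product']
      rw [Finset.sum_sigma', Finset.sum_sigma']
      refine Finset.sum_bij' (fun y _ => ⟨y.2.1 + y.2.2, (y.2.1, y.2.2)⟩)
        (fun y _ => ⟨(sz y.2.1, sz y.2.2), (y.2.1, y.2.2)⟩) ?_ ?_ ?_ ?_ ?_
      · rintro ⟨⟨p, q⟩, ⟨I, J⟩⟩ h
        simp only [Finset.mem_sigma, Finset.HasAntidiagonal.mem_antidiagonal, Finset.mem_product, hD] at h ⊢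
        refine ⟨?_, trivial⟩
        rw [sz_add]; omega
      · rintro ⟨K, ⟨I, J⟩⟩ h
        simp only [Finset.mem_sigma, Finset.HasAntidiagonal.mem_antidiagonal, Finset.mem_product, hD] at h ⊢
        refine ⟨?_, trivial, trivial⟩
        rw [← sz_add, h.2, h.1]
      · rintro ⟨⟨p, q⟩, ⟨I, J⟩⟩ h
        simp only [Finset.mem_sigma, Finset.HasAntidiagonal.mem_antidiagonal, Finset.mem_product, hD] at h ⊢
        rw [h.2.1, h.2.2]
      · rintro ⟨K, ⟨I, J⟩⟩ h
        simp only [Finset.mem_sigma, Finset.HasAntidiagonal.mem_antidiagonal, Finset.mem_product, hD] at h ⊢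
        rw [h.2]
      · rintro ⟨⟨p, q⟩, ⟨I, J⟩⟩ h
        simp only [mon_add, smul_mul_smul_comm]
    rw [e1, Finset.sum_congr rfl (fun I hI => by
      rw [((hs (sz I)).2 I le_rfl).1] : ∀ I ∈ D j, mon I • cv s s I = mon I • XX _ x I)]
    split_ifs with hj
    · subst hj
      rw [hone, ← hf, Finsupp.linearCombination_apply, Finsupp.sum_fintype _ _ (by simp),
        Finset.sum_smul]
      refine Finset.sum_congr rfl fun i _ => ?_
      rw [XX_single, mon_single, smul_smul, smul_eq_mul]
    · refine Finset.sum_eq_zero fun I hI => ?_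
      rw [hD] at hI
      rw [XX_of_ne _ _ _ (by omega), smul_zero]
  · intro j z t
    rw [LinearMap.sum_apply, Finsupp.finsetSum_apply]
    refine Ideal.sum_mem _ fun I hI => ?_
    rw [LinearMap.smul_apply, Finsupp.smul_apply, smul_eq_mul]
    refine m.mul_mem_right _ (mon_mem I ?_)
    rintro rfl
    rw [hD] at hI; simp [sz] at hI
  · rw [hone, LinearMap.sum_apply]
    have : C.ε b = ∑ i, b i • Finsupp.single (C.e i) 1 := by
      conv_lhs => rw [← Finsupp.univ_sum_single b]
      rw [map_sum]
      refine Finset.sum_congr rfl fun i _ => ?_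
      rw [C.ε_single]; simp
    rw [this]
    refine Finset.sum_congr rfl fun i _ => ?_
    rw [LinearMap.smul_apply, mon_single,
      ((hs 1).2 (Finsupp.single i 1) (by rw [sz_single])).2.2 i rfl]

end fam

end BettiAux


namespace BettiAux

lemma tri {V : Type} [AddCommMonoid V] (F : ℕ → ℕ → ℕ → V) (j : ℕ) :
    ∑ r ∈ Finset.HasAntidiagonal.antidiagonal j, ∑ r' ∈ Finset.HasAntidiagonal.antidiagonal r.2,
      F r.1 r'.1 r'.2 =
    ∑ t ∈ Finset.HasAntidiagonal.antidiagonal j, ∑ p ∈ Finset.HasAntidiagonal.antidiagonal t.1,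
      F p.2 p.1 t.2 := by
  rw [Finset.sum_sigma', Finset.sum_sigma']
  refine Finset.sum_bij' (fun y _ => ⟨(y.1.1 + y.2.1, y.2.2), (y.2.1, y.1.1)⟩)
    (fun y _ => ⟨(y.2.2, y.2.1 + y.1.2), (y.2.1, y.1.2)⟩) ?_ ?_ ?_ ?_ ?_
  · rintro ⟨⟨p, q⟩, ⟨r, s⟩⟩ h
    simp only [Finset.mem_sigma, Finset.HasAntidiagonal.mem_antidiagonal] at h ⊢
    omega
  · rintro ⟨⟨p, q⟩, ⟨r, s⟩⟩ h
    simp only [Finset.mem_sigma, Finset.HasAntidiagonal.mem_antidiagonal] at h ⊢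
    exact ⟨by omega, trivial⟩
  · rintro ⟨⟨p, q⟩, ⟨r, s⟩⟩ h
    simp only [Finset.mem_sigma, Finset.HasAntidiagonal.mem_antidiagonal] at h ⊢
    obtain ⟨rfl, rfl⟩ := h
    rfl
  · rintro ⟨⟨p, q⟩, ⟨r, s⟩⟩ h
    simp only [Finset.mem_sigma, Finset.HasAntidiagonal.mem_antidiagonal] at h ⊢
    obtain ⟨rfl, rfl⟩ := h
    simp [add_comm]
  · rintro ⟨⟨p, q⟩, ⟨r, s⟩⟩ h
    rfl

/-- A complex of free modules which, modulo `q`, is a resolution of `Q/m`. -/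
structure Res {Q T : Type} [CommRing Q] (m : Ideal Q) (q : Q) (dg : T → ℕ) (t0 : T)
    (D : Module.End Q (T →₀ Q)) : Prop where
  deg : ∀ n, ∀ z ∈ gr Q dg (n+1), D z ∈ gr Q dg n
  dd : ∀ z, ∃ w, D (D z) = q • w
  ex : ∀ n, 1 ≤ n → ∀ z ∈ gr Q dg n, ∀ w, D z = q • w →
    ∃ v ∈ gr Q dg (n+1), ∃ w', z = D v + q • w'
  dg0 : ∀ t, dg t = 0 ↔ t = t0
  aug : ∀ u ∈ gr Q dg 1, D u t0 ∈ m
  aug' : ∀ c ∈ m, ∃ u ∈ gr Q dg 1, D u = Finsupp.single t0 c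

section Y
variable {Q : Type} [CommRing Q] {S : Type}

/-- embedding of the component `j` -/
noncomputable def em (j : ℕ) : (S →₀ Q) →ₗ[Q] (S × ℕ →₀ Q) :=
  Finsupp.lmapDomain Q Q (fun s => (s, j))

lemma em_single (j : ℕ) (s : S) (r : Q) : em j (Finsupp.single s r) = Finsupp.single (s, j) r := by
  simp [em, Finsupp.mapDomain_single]

lemma Y_ind (P : Submodule Q (S × ℕ →₀ Q)) (h : ∀ j z, em j z ∈ P) (u) : u ∈ P := by
  induction u using Finsupp.induction_linear with
  | zero => exact zero_mem _
  | add f g hf hg => exact add_mem hf hg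
  | single s r => rw [← Prod.mk.eta (p := s), ← em_single]; exact h _ _

/-- degree -/
def dY (deg : S → ℕ) (p : S × ℕ) : ℕ := deg p.1 + 2 * p.2

lemma em_mem {deg : S → ℕ} {j k n : ℕ} {z : S →₀ Q} (hz : z ∈ gr Q deg k) (h : k + 2 * j = n) :
    em j z ∈ gr Q (dY deg) n := by
  refine gr_ind ((gr Q (dY deg) n).comap (em j)) (fun s hs => ?_) hz
  rw [Submodule.mem_comap, em_single]
  exact single_mem_gr (by simp [dY]; omega) 1

noncomputable def DY (σ : ℕ → Module.End Q (S →₀ Q)) (c : Q) : Module.End Q (S × ℕ →₀ Q) :=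
  Finsupp.linearCombination Q (fun p : S × ℕ => ∑ r ∈ Finset.HasAntidiagonal.antidiagonal p.2,
    c ^ r.1 • em r.2 (σ r.1 (Finsupp.single p.1 1)))

lemma DY_em (σ : ℕ → Module.End Q (S →₀ Q)) (c : Q) (j : ℕ) (z : S →₀ Q) :
    DY σ c (em j z) = ∑ r ∈ Finset.HasAntidiagonal.antidiagonal j, c ^ r.1 • em r.2 (σ r.1 z) := by
  have : DY σ c ∘ₗ em j = ∑ r ∈ Finset.HasAntidiagonal.antidiagonal j, c ^ r.1 •
      ((em r.2 : (S →₀ Q) →ₗ[Q] (S × ℕ →₀ Q)) ∘ₗ (σ r.1)) := by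
    apply Finsupp.lhom_ext'
    intro s
    ext1
    simp [em_single, DY, LinearMap.sum_apply]
  have := LinearMap.congr_fun this z
  simpa [LinearMap.sum_apply] using this

lemma DY_em_zero (σ : ℕ → Module.End Q (S →₀ Q)) (c : Q) (z : S →₀ Q) :
    DY σ c (em 0 z) = em 0 (σ 0 z) := by
  rw [DY_em]; simp

/-- shift -/
noncomputable def th : Module.End Q (S × ℕ →₀ Q) :=
  Finsupp.linearCombination Q (fun p : S × ℕ =>
    match p.2 with
    | 0 => 0
    | j+1 => Finsupp.single (p.1, j) 1)

noncomputable def th' : Module.End Q (S × ℕ →₀ Q) :=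
  Finsupp.lmapDomain Q Q (fun p => (p.1, p.2 + 1))

noncomputable def pr : (S × ℕ →₀ Q) →ₗ[Q] (S →₀ Q) :=
  Finsupp.linearCombination Q (fun p : S × ℕ =>
    match p.2 with
    | 0 => Finsupp.single p.1 1
    | _+1 => 0)

lemma th_em_zero (z : S →₀ Q) : th (em 0 z) = 0 := by
  induction z using Finsupp.induction_linear with
  | zero => simp
  | add f g hf hg => rw [map_add, map_add, hf, hg, add_zero]
  | single s r => simp [em_single, th]

lemma th_em_succ (j : ℕ) (z : S →₀ Q) : th (em (j+1) z) = em j z := by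
  induction z using Finsupp.induction_linear with
  | zero => simp
  | add f g hf hg => rw [map_add, map_add, hf, hg, map_add]
  | single s r => simp [em_single, th]

lemma th'_em (j : ℕ) (z : S →₀ Q) : th' (em j z) = em (j+1) z := by
  induction z using Finsupp.induction_linear with
  | zero => simp
  | add f g hf hg => rw [map_add, map_add, hf, hg, map_add]
  | single s r => simp [em_single, th', Finsupp.mapDomain_single]

lemma pr_em_zero (z : S →₀ Q) : pr (em 0 z) = z := by
  induction z using Finsupp.induction_linear with
  | zero => simp
  | add f g hf hg => rw [map_add, map_add, hf, hg]
  | single s r => simp [em_single, pr]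

lemma pr_em_succ (j : ℕ) (z : S →₀ Q) : pr (em (j+1) z) = 0 := by
  induction z using Finsupp.induction_linear with
  | zero => simp
  | add f g hf hg => rw [map_add, map_add, hf, hg, add_zero]
  | single s r => simp [em_single, pr]

lemma Y_decomp (u : S × ℕ →₀ Q) : u = em 0 (pr u) + th' (th u) := by
  refine Y_ind (LinearMap.eqLocus LinearMap.id (em 0 ∘ₗ pr + th' ∘ₗ th)) (fun j z => ?_) u
  rcases j with _ | j
  · simp [pr_em_zero, th_em_zero]
  · simp [pr_em_succ, th_em_succ, th'_em]

lemma th_th' (u : S × ℕ →₀ Q) : th (th' u) = u := by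
  refine Y_ind (LinearMap.eqLocus (th ∘ₗ th') LinearMap.id) (fun j z => ?_) u
  simp [th_em_succ, th'_em]

lemma th_DY (σ : ℕ → Module.End Q (S →₀ Q)) (c : Q) (u : S × ℕ →₀ Q) :
    th (DY σ c u) = DY σ c (th u) := by
  refine Y_ind (LinearMap.eqLocus (th ∘ₗ DY σ c) (DY σ c ∘ₗ th)) (fun j z => ?_) u
  rw [LinearMap.mem_eqLocus, LinearMap.comp_apply, LinearMap.comp_apply]
  rcases j with _ | j
  · rw [DY_em_zero, th_em_zero, th_em_zero, map_zero]
  · rw [th_em_succ, DY_em, DY_em, map_sum, Finset.Nat.antidiagonal_succ', Finset.sum_cons]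
    simp [th_em_zero, th_em_succ, Finset.sum_map]

lemma th'_mem {deg : S → ℕ} {n : ℕ} {u : S × ℕ →₀ Q} (hu : u ∈ gr Q (dY deg) n) :
    th' u ∈ gr Q (dY deg) (n+2) := by
  refine gr_ind ((gr Q (dY deg) (n+2)).comap th') (fun s hs => ?_) hu
  rw [Submodule.mem_comap, th', Finsupp.lmapDomain_apply, Finsupp.mapDomain_single]
  exact single_mem_gr (by simp [dY] at hs ⊢; omega) 1

lemma th_mem {deg : S → ℕ} {n : ℕ} {u : S × ℕ →₀ Q} (hu : u ∈ gr Q (dY deg) (n+2)) :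
    th u ∈ gr Q (dY deg) n := by
  refine gr_ind ((gr Q (dY deg) n).comap th) (fun s hs => ?_) hu
  obtain ⟨s, j⟩ := s
  rw [Submodule.mem_comap, ← em_single]
  rcases j with _ | j
  · rw [th_em_zero]; exact zero_mem _
  · rw [th_em_succ, em_single]
    exact single_mem_gr (by simp [dY] at hs ⊢; omega) 1

lemma th_low {deg : S → ℕ} {n : ℕ} (hn : n < 2) {u : S × ℕ →₀ Q} (hu : u ∈ gr Q (dY deg) n) :
    th u = 0 := by
  refine gr_ind (LinearMap.ker th) (fun s hs => ?_) hu
  obtain ⟨s, j⟩ := s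
  rw [LinearMap.mem_ker, ← em_single]
  rcases j with _ | j
  · rw [th_em_zero]
  · simp [dY] at hs; omega

lemma pr_mem {deg : S → ℕ} {n : ℕ} {u : S × ℕ →₀ Q} (hu : u ∈ gr Q (dY deg) n) :
    pr u ∈ gr Q deg n := by
  refine gr_ind ((gr Q deg n).comap pr) (fun s hs => ?_) hu
  obtain ⟨s, j⟩ := s
  rw [Submodule.mem_comap, ← em_single]
  rcases j with _ | j
  · rw [pr_em_zero]; exact single_mem_gr (by simpa [dY] using hs) 1
  · rw [pr_em_succ]; exact zero_mem _

end Y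

end BettiAux


namespace BettiAux

section
variable {Q : Type} [CommRing Q] {m : Ideal Q} {n : ℕ} {x : Fin n → Q} {a b : Fin n →₀ Q}
  {f q c : Q} {C : Cx Q m x b}

lemma DY_deg (H : Hty C f a) (k : ℕ) : ∀ z ∈ gr Q (dY C.deg) (k+1),
    DY H.σ c z ∈ gr Q (dY C.deg) k := by
  intro z hz
  refine gr_ind ((gr Q (dY C.deg) k).comap (DY H.σ c)) ?_ hz
  rintro ⟨s, j⟩ hs
  rw [Submodule.mem_comap, ← em_single, DY_em]
  refine Submodule.sum_mem _ ?_
  rintro ⟨l, i⟩ hl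
  rw [Finset.HasAntidiagonal.mem_antidiagonal] at hl
  refine Submodule.smul_mem _ _ ?_
  simp only [dY] at hs hl ⊢
  rcases l with _ | l
  · rw [H.zero]
    rcases hd : C.deg s with _ | e
    · rw [C.d_zero (single_mem_gr hd 1), map_zero]; exact zero_mem _
    · exact em_mem (C.d_deg s e hd) (by omega)
  · exact em_mem (H.hd l _ _ (single_mem_gr rfl 1)) (by omega)

lemma DY_dd (H : Hty C f a) (r : Q) (hr : c * f = q * r) (z) :
    ∃ w, DY H.σ c (DY H.σ c z) = q • w := by
  suffices h : z ∈ (LinearMap.range (LinearMap.lsmul Q (C.S × ℕ →₀ Q) q)).comap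
      (DY H.σ c * DY H.σ c) by
    obtain ⟨w, hw⟩ := h
    exact ⟨w, hw.symm⟩
  refine Y_ind _ (fun j z => ?_) z
  rw [Submodule.mem_comap, Module.End.mul_apply, DY_em, map_sum]
  have e : ∑ r ∈ Finset.HasAntidiagonal.antidiagonal j, DY H.σ c (c ^ r.1 • em r.2 (H.σ r.1 z)) =
      ∑ t ∈ Finset.HasAntidiagonal.antidiagonal j, c ^ t.1 • em t.2
        ((∑ p ∈ Finset.HasAntidiagonal.antidiagonal t.1, H.σ p.1 * H.σ p.2) z) := by
    have := tri (fun u v w => c ^ (u + v) • em w (H.σ v (H.σ u z))) j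
    refine Eq.trans ?_ (this.trans ?_)
    · refine Finset.sum_congr rfl fun r _ => ?_
      rw [map_smul, DY_em, Finset.smul_sum]
      refine Finset.sum_congr rfl fun r' _ => ?_
      rw [smul_smul, pow_add]
    · refine Finset.sum_congr rfl fun t _ => ?_
      rw [LinearMap.sum_apply, map_sum, Finset.smul_sum]
      refine Finset.sum_congr rfl fun p hp => ?_
      rw [Finset.HasAntidiagonal.mem_antidiagonal] at hp
      rw [add_comm, hp, Module.End.mul_apply]
  rw [e]
  refine Submodule.sum_mem _ fun t _ => ?_
  rw [H.rel]
  split_ifs with h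
  · refine ⟨r • em t.2 z, ?_⟩
    rw [h, LinearMap.lsmul_apply, smul_smul, ← hr, LinearMap.smul_apply, Module.End.one_apply,
      map_smul, smul_smul, pow_one]
  · simp

lemma DY_one (H : Hty C f a) :
    DY H.σ c (Finsupp.single (C.o, 1) 1) = em 0 (c • C.ε a) := by
  rw [← em_single, DY_em, Finset.Nat.antidiagonal_succ, Finset.sum_cons]
  simp [H.zero, C.d_o, H.one]

lemma res (H : Hty C f a) (EM : ExMod C a q c) (r : Q) (hr : c * f = q * r)
    (hm : ∀ c ∈ m, ∃ u, Finsupp.linearCombination Q x u = c) (hx : ∀ i, x i ∈ m) :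
    Res m q (dY C.deg) (C.o, 0) (DY H.σ c) := by
  have step : ∀ k, 2 ≤ k → ∀ u ∈ gr Q (dY C.deg) k, ∀ w, DY H.σ c u = q • w →
      ∀ v1 ∈ gr Q (dY C.deg) (k-1), ∀ w1, th u = DY H.σ c v1 + q • w1 →
      ∃ v ∈ gr Q (dY C.deg) (k+1), ∃ w', u = DY H.σ c v + q • w' := by
    intro k hk u hu w hw v1 hv1 w1 h1
    obtain ⟨k, rfl⟩ : ∃ l, k = l + 2 := ⟨k - 2, by omega⟩
    have hv' : th' v1 ∈ gr Q (dY C.deg) (k+2+1) := th'_mem hv1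
    set y := u - DY H.σ c (th' v1) with hy
    have hyd := Y_decomp y
    have hthy : th y = q • w1 := by
      rw [hy, map_sub, th_DY, th_th', h1, add_sub_cancel_left]
    rw [hthy, map_smul] at hyd
    have hym : y ∈ gr Q (dY C.deg) (k+2) := sub_mem hu (DY_deg H _ _ hv')
    obtain ⟨w2, hw2⟩ := DY_dd H r hr (th' v1)
    have hdz : C.d (pr y) = q • pr (w - w2 - DY H.σ c (th' w1)) := by
      have e1 : DY H.σ c y = q • w - q • w2 := by rw [hy, map_sub, hw, hw2]
      rw [hyd, map_add, DY_em_zero, map_smul, H.zero] at e1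
      have e2 := congrArg pr (eq_sub_of_add_eq e1)
      rw [pr_em_zero] at e2
      rw [e2, ← map_smul pr, smul_sub, smul_sub]
    obtain ⟨v2, hv2, w3, h3⟩ := EM.E (k+2) (by omega) _ (pr_mem hym) _ hdz
    refine ⟨th' v1 + em 0 v2, add_mem hv' (em_mem hv2 (by omega)), em 0 w3 + th' w1, ?_⟩
    have : u = y + DY H.σ c (th' v1) := by rw [hy]; abel
    rw [this, hyd, h3, map_add (DY H.σ c), DY_em_zero, H.zero, map_add, map_smul, smul_add]
    abel
  have low : ∀ u ∈ gr Q (dY C.deg) 1, u = em 0 (pr u) := by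
    intro u hu
    have := Y_decomp u
    rwa [th_low (by omega) hu, map_zero, add_zero] at this
  refine ⟨DY_deg H, DY_dd H r hr, ?_, ?_, ?_, ?_⟩
  · intro k
    induction k using Nat.strong_induction_on with
    | _ k ih =>
    intro hk u hu w hw
    rcases Nat.lt_or_ge k 2 with h2 | h2
    · obtain rfl : k = 1 := by omega
      have hu' := low u hu
      rw [hu', DY_em_zero, H.zero] at hw
      have hw' := congrArg pr hw
      rw [pr_em_zero, map_smul] at hw'
      obtain ⟨l, v, hv, w', h⟩ := EM.E1 _ (pr_mem hu) _ hw'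
      refine ⟨em 0 v + l • Finsupp.single (C.o, 1) 1, add_mem (em_mem hv (by omega))
        (Submodule.smul_mem _ _ (single_mem_gr (by simp [dY, C.deg_o]) _)), em 0 w', ?_⟩
      rw [hu', h, map_add (DY H.σ c), map_smul (DY H.σ c), DY_one, DY_em_zero, H.zero]
      simp only [map_add, map_smul]
      abel
    · rcases Nat.lt_or_ge k 3 with h3 | h3
      · obtain rfl : k = 2 := by omega
        have h0 : th u ∈ gr Q (dY C.deg) 0 := th_mem hu
        have hth : ∃ l : Q, th u = l • Finsupp.single (C.o, 0) 1 := by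
          have : th u ∈ Submodule.span Q {(Finsupp.single (C.o, 0) 1 : C.S × ℕ →₀ Q)} := by
            refine gr_ind _ ?_ h0
            rintro ⟨s, j⟩ hs
            simp only [dY] at hs
            obtain rfl : j = 0 := by omega
            rw [C.eq_o s (by omega)]
            exact Submodule.mem_span_singleton_self _
          obtain ⟨l, hl⟩ := Submodule.mem_span_singleton.1 this
          exact ⟨l, hl.symm⟩
        obtain ⟨l, hl⟩ := hth
        have hdec := Y_decomp u
        rw [hl, map_smul, ← em_single, th'_em, em_single] at hdec
        have hlm : l ∈ m := by
          have e := hw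
          rw [hdec, map_add, map_smul, DY_one, DY_em_zero, H.zero] at e
          have e2 := congrArg pr e
          rw [map_add, map_smul pr, map_smul pr, pr_em_zero, pr_em_zero] at e2
          refine EM.E1' l (-pr u) (neg_mem (pr_mem hu)) (pr w) ?_
          rw [← e2, map_neg]; abel
        obtain ⟨y, hy⟩ := hm l hlm
        refine step 2 le_rfl u hu w hw (em 0 (C.ε y)) (em_mem (C.ε_mem y) (by omega)) 0 ?_
        rw [DY_em_zero, H.zero, C.d_ε, hy, hl, em_single, smul_zero, add_zero]
        simp
      · obtain ⟨k, rfl⟩ : ∃ l, k = l + 3 := ⟨k - 3, by omega⟩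
        obtain ⟨v1, hv1, w1, h1⟩ := ih (k+1) (by omega) (by omega) (th u) (th_mem hu) (th w)
          (by rw [← th_DY, hw, map_smul])
        exact step (k+3) (by omega) u hu w hw v1 hv1 w1 h1
  · rintro ⟨s, j⟩
    simp only [dY, Prod.mk.injEq]
    constructor
    · intro h
      exact ⟨C.eq_o s (by omega), by omega⟩
    · rintro ⟨rfl, rfl⟩
      rw [C.deg_o]
  · intro u hu
    rw [low u hu, DY_em_zero, H.zero]
    obtain ⟨w, hw⟩ := C.exists_ε (pr_mem hu)
    rw [← hw, C.d_ε, em_single, Finsupp.single_eq_same, Finsupp.linearCombination_apply]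
    exact Ideal.sum_mem _ fun i _ => Ideal.mul_mem_left _ _ (hx i)
  · intro c hc
    obtain ⟨y, rfl⟩ := hm c hc
    exact ⟨em 0 (C.ε y), em_mem (C.ε_mem y) (by omega), by
      rw [DY_em_zero, H.zero, C.d_ε, em_single]⟩

lemma DY_congr (H : Hty C f a) (c' : Q) (z t) : (DY H.σ c z - DY H.σ c' z) t ∈ m := by
  let P : Submodule Q (C.S × ℕ →₀ Q) :=
    { carrier := {u | ∀ t, u t ∈ m}
      add_mem' := fun ha hb t => add_mem (ha t) (hb t)
      zero_mem' := fun t => zero_mem _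
      smul_mem' := fun c u hu t => Ideal.mul_mem_left _ _ (hu t) }
  have hP : ∀ j (z : C.S →₀ Q), (∀ t, z t ∈ m) → em j z ∈ P := by
    rintro j z hz ⟨t, i⟩
    by_cases hij : i = j
    · subst hij
      have : em i z (t, i) = z t :=
        Finsupp.mapDomain_apply (f := fun s : C.S => (s, i)) (fun _ _ h => congrArg Prod.fst h) z t
      rw [this]; exact hz t
    · have : em j z (t, i) = 0 := by
        refine Finsupp.mapDomain_of_notMem_range _ _ ?_
        rintro ⟨s, hs⟩
        exact hij (congrArg Prod.snd hs).symm
      rw [this]; exact zero_mem _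
  suffices h : z ∈ P.comap (DY H.σ c - DY H.σ c') from h t
  refine Y_ind _ (fun j z => ?_) z
  rw [Submodule.mem_comap, LinearMap.sub_apply, DY_em, DY_em, ← Finset.sum_sub_distrib]
  refine Submodule.sum_mem _ ?_
  rintro ⟨l, i⟩ _
  rcases l with _ | l
  · simp
  · exact sub_mem (P.smul_mem _ (hP _ _ (H.mem _ _))) (P.smul_mem _ (hP _ _ (H.mem _ _)))

end

end BettiAux


namespace BettiAux

section gen

variable {A A' : Type} [CommRing A] [CommRing A'] (φ : A →+* A')

lemma tens (hφ : Function.Surjective φ) {k k' M M' : Type} [AddCommGroup k] [AddCommGroup k']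
    [AddCommGroup M] [AddCommGroup M'] [Module A k] [Module A M] [Module A' k'] [Module A' M']
    (e : k ≃+ k') (he : ∀ a x, e (a • x) = φ a • e x)
    (j : M ≃+ M') (hj : ∀ a x, j (a • x) = φ a • j x) :
    ∃ J : k ⊗[A] M ≃+ k' ⊗[A'] M', ∀ x y, J (x ⊗ₜ y) = e x ⊗ₜ j y := by
  have he' : ∀ a x, e.symm (φ a • x) = a • e.symm x := by
    intro a x; rw [AddEquiv.symm_apply_eq, he, AddEquiv.apply_symm_apply]
  have hj' : ∀ a x, j.symm (φ a • x) = a • j.symm x := by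
    intro a x; rw [AddEquiv.symm_apply_eq, hj, AddEquiv.apply_symm_apply]
  let F : k ⊗[A] M →+ k' ⊗[A'] M' := TensorProduct.liftAddHom
    (AddMonoidHom.mk' (fun x => AddMonoidHom.mk' (fun y => e x ⊗ₜ j y)
      (fun y y' => by rw [map_add, TensorProduct.tmul_add]))
      (fun x x' => by ext y; simp [TensorProduct.add_tmul]))
    (fun a x y => by simp [he, hj, TensorProduct.smul_tmul])
  let G : k' ⊗[A'] M' →+ k ⊗[A] M := TensorProduct.liftAddHom
    (AddMonoidHom.mk' (fun x => AddMonoidHom.mk' (fun y => e.symm x ⊗ₜ j.symm y)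
      (fun y y' => by rw [map_add, TensorProduct.tmul_add]))
      (fun x x' => by ext y; simp [TensorProduct.add_tmul]))
    (fun a x y => by
      obtain ⟨a, rfl⟩ := hφ a
      simp [he', hj', TensorProduct.smul_tmul])
  have hF : ∀ x y, F (x ⊗ₜ y) = e x ⊗ₜ j y := fun x y => rfl
  have hG : ∀ x y, G (x ⊗ₜ y) = e.symm x ⊗ₜ j.symm y := fun x y => rfl
  refine ⟨⟨⟨F, G, fun t => ?_, fun t => ?_⟩, F.map_add⟩, hF⟩
  · induction t using TensorProduct.induction_on with
    | zero => simp
    | add x y hx hy => rw [map_add, map_add, hx, hy]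
    | tmul x y => rw [hF, hG]; simp
  · induction t using TensorProduct.induction_on with
    | zero => simp
    | add x y hx hy => rw [map_add, map_add, hx, hy]
    | tmul x y => rw [hG, hF]; simp

lemma homology_semi (S : ShortComplex (ModuleCat.{0} A)) (S' : ShortComplex (ModuleCat.{0} A'))
    (e1 : S.X₁ ≃+ S'.X₁) (e2 : S.X₂ ≃+ S'.X₂) (e3 : S.X₃ ≃+ S'.X₃)
    (h2 : ∀ (a : A) (x : S.X₂), e2 (a • x) = φ a • e2 x)
    (hf : ∀ x, e2 (S.f x) = S'.f (e1 x)) (hg : ∀ x, e3 (S.g x) = S'.g (e2 x)) :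
    ∃ J : S.homology ≃+ S'.homology, ∀ (a : A) x, J (a • x) = φ a • J x := by
  let K := LinearMap.ker S.g.hom
  let K' := LinearMap.ker S'.g.hom
  have hk : ∀ x, x ∈ K ↔ e2 x ∈ K' := by
    intro x
    change S.g x = 0 ↔ S'.g (e2 x) = 0
    rw [← hg]; exact (AddEquiv.map_eq_zero_iff e3).symm
  let eK : K ≃+ K' :=
    { toFun := fun x => ⟨e2 x.1, (hk _).1 x.2⟩
      invFun := fun x => ⟨e2.symm x.1, (hk _).2 (by simp)⟩
      left_inv := fun x => by simp
      right_inv := fun x => by simp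
      map_add' := fun x y => by ext; simp }
  have hN : AddSubgroup.map (eK : K →+ K') (LinearMap.range S.moduleCatToCycles).toAddSubgroup =
      (LinearMap.range S'.moduleCatToCycles).toAddSubgroup := by
    ext y
    constructor
    · rintro ⟨_, ⟨x, rfl⟩, rfl⟩
      exact ⟨e1 x, Subtype.ext (hf x).symm⟩
    · rintro ⟨x, rfl⟩
      refine ⟨_, ⟨e1.symm x, rfl⟩, Subtype.ext ((hf _).trans ?_)⟩
      rw [AddEquiv.apply_symm_apply]; rfl
  let J0 : (K ⧸ LinearMap.range S.moduleCatToCycles) ≃+ (K' ⧸ LinearMap.range S'.moduleCatToCycles) :=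
    QuotientAddGroup.congr _ _ eK hN
  have hJ0 : ∀ (a : A) x, J0 (a • x) = φ a • J0 x := by
    intro a x
    obtain ⟨x, rfl⟩ := Submodule.Quotient.mk_surjective _ x
    change (Submodule.Quotient.mk (eK (a • x)) : K' ⧸ LinearMap.range S'.moduleCatToCycles) =
      Submodule.Quotient.mk (φ a • eK x)
    congr 1
    exact Subtype.ext (h2 a x.1)
  let i1 : S.homology ≃ₗ[A] (K ⧸ LinearMap.range S.moduleCatToCycles) :=
    S.moduleCatHomologyIso.toLinearEquiv
  let i2 : S'.homology ≃ₗ[A'] (K' ⧸ LinearMap.range S'.moduleCatToCycles) :=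
    S'.moduleCatHomologyIso.toLinearEquiv
  refine ⟨(i1.toAddEquiv.trans J0).trans i2.symm.toAddEquiv, fun a x => ?_⟩
  change i2.symm (J0 (i1 (a • x))) = φ a • i2.symm (J0 (i1 x))
  rw [map_smul, hJ0, map_smul]

lemma homology_semi' (F : ChainComplex (ModuleCat.{0} A) ℕ) (F' : ChainComplex (ModuleCat.{0} A') ℕ)
    (E : ∀ n, F.X n ≃+ F'.X n) (hE : ∀ n (a : A) (x : F.X n), E n (a • x) = φ a • E n x)
    (hd : ∀ n x, E n (F.d (n+1) n x) = F'.d (n+1) n (E (n+1) x)) (i : ℕ) :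
    ∃ J : F.homology i ≃+ F'.homology i, ∀ (a : A) x, J (a • x) = φ a • J x := by
  have hd' : ∀ i j x, E j (F.d i j x) = F'.d i j (E i x) := by
    intro i j x
    by_cases h : j + 1 = i
    · subst h; exact hd j x
    · rw [F.shape i j h, F'.shape i j h]
      simp
  exact homology_semi φ (F.sc i) (F'.sc i) (E _) (E _) (E _) (hE _) (hd' _ _) (hd' _ _)

end gen

end BettiAux


namespace BettiAux

section pr
variable {Q T : Type} [CommRing Q] (A : Type) [CommRing A] [IsLocalRing A] [Algebra Q A]
  {m : Ideal Q} {q : Q} {dg : T → ℕ} {t0 : T} {D : Module.End Q (T →₀ Q)}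

/-- degree `n` part -/
abbrev XG (dg : T → ℕ) (n : ℕ) : Type := {t // dg t = n} →₀ A

/-- projection to degree `n` and reduction -/
noncomputable def pn (dg : T → ℕ) (n : ℕ) : (T →₀ Q) →ₗ[Q] XG A dg n :=
  (Finsupp.mapRange.linearMap (Algebra.linearMap Q A)).comp
    (Finsupp.lsubtypeDomain {t | dg t = n})

lemma pn_apply (n : ℕ) (z : T →₀ Q) (t : {t // dg t = n}) :
    pn A dg n z t = algebraMap Q A (z t.1) := rfl

lemma pn_single (n : ℕ) (t : T) (ht : dg t = n) (r : Q) :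
    pn A dg n (Finsupp.single t r) = Finsupp.single ⟨t, ht⟩ (algebraMap Q A r) := by
  classical
  ext s
  rw [pn_apply, Finsupp.single_apply, Finsupp.single_apply]
  by_cases h : t = s.1
  · rw [if_pos h, if_pos (Subtype.ext h)]
  · rw [if_neg h, if_neg (fun h' => h (congrArg Subtype.val h')), map_zero]

/-- differential -/
noncomputable def dm (dg : T → ℕ) (D : Module.End Q (T →₀ Q)) (n : ℕ) :
    XG A dg (n+1) →ₗ[A] XG A dg n :=
  Finsupp.linearCombination A (fun t => pn A dg n (D (Finsupp.single t.1 1)))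

lemma dm_pn (n : ℕ) (z : T →₀ Q) (hz : z ∈ gr Q dg (n+1)) :
    dm A dg D n (pn A dg (n+1) z) = pn A dg n (D z) := by
  refine gr_ind (LinearMap.eqLocus ((dm A dg D n).restrictScalars Q ∘ₗ pn A dg (n+1))
    (pn A dg n ∘ₗ D)) (fun s hs => ?_) hz
  change dm A dg D n (pn A dg (n+1) (Finsupp.single s 1)) = pn A dg n (D (Finsupp.single s 1))
  rw [pn_single A _ s hs, map_one, dm, Finsupp.linearCombination_single, one_smul]

lemma pn_surj (hs : Function.Surjective (algebraMap Q A)) (n : ℕ) (y : XG A dg n) :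
    ∃ z ∈ gr Q dg n, pn A dg n z = y := by
  induction y using Finsupp.induction_linear with
  | zero => exact ⟨0, zero_mem _, map_zero _⟩
  | add x y hx hy =>
    obtain ⟨a, ha, rfl⟩ := hx
    obtain ⟨b, hb, rfl⟩ := hy
    exact ⟨a + b, add_mem ha hb, map_add _ _ _⟩
  | single t r =>
    obtain ⟨r, rfl⟩ := hs r
    exact ⟨Finsupp.single t.1 r, single_mem_gr t.2 r, pn_single A _ _ t.2 r⟩

lemma exists_smul (z : T →₀ Q) (h : ∀ t, ∃ c, z t = q * c) : ∃ w : T →₀ Q, z = q • w := by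
  classical
  choose c hc using h
  refine ⟨Finsupp.onFinset z.support (fun t => if z t = 0 then 0 else c t) (fun t ht => ?_), ?_⟩
  · rw [Finsupp.mem_support_iff]; intro h; simp [h] at ht
  · ext t
    simp only [Finsupp.smul_apply, Finsupp.onFinset_apply, smul_eq_mul]
    split_ifs with h
    · rw [h, mul_zero]
    · exact hc t

lemma pn_ker (hq : ∀ x, algebraMap Q A x = 0 ↔ ∃ c, x = q * c) (n : ℕ) (z : T →₀ Q)
    (hz : z ∈ gr Q dg n) (h : pn A dg n z = 0) : ∃ w, z = q • w := by
  refine exists_smul z fun t => ?_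
  by_cases ht : dg t = n
  · have := DFunLike.congr_fun h ⟨t, ht⟩
    exact (hq _).1 this
  · refine ⟨0, ?_⟩
    rw [mul_zero]
    by_contra hne
    exact ht (hz (Finsupp.mem_support_iff.2 hne))

lemma pn_smul (hq : ∀ x, algebraMap Q A x = 0 ↔ ∃ c, x = q * c) (n : ℕ) (w : T →₀ Q) :
    pn A dg n (q • w) = 0 := by
  ext t
  rw [pn_apply]
  exact (hq _).2 ⟨_, rfl⟩


lemma dm_dm (H : Res m q dg t0 D)
    (hs : Function.Surjective (algebraMap Q A))
    (hq : ∀ x, algebraMap Q A x = 0 ↔ ∃ c, x = q * c) (n : ℕ) (y) : dm A dg D n (dm A dg D (n+1) y) = 0 := by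
  obtain ⟨z, hz, rfl⟩ := pn_surj A hs _ y
  rw [dm_pn A _ _ hz, dm_pn A _ _ (H.deg _ _ hz)]
  obtain ⟨w, hw⟩ := H.dd z
  rw [hw, pn_smul A hq]

lemma dm_ex (H : Res m q dg t0 D)
    (hs : Function.Surjective (algebraMap Q A))
    (hq : ∀ x, algebraMap Q A x = 0 ↔ ∃ c, x = q * c) (n : ℕ) (y) (h : dm A dg D n y = 0) : ∃ v, dm A dg D (n+1) v = y := by
  obtain ⟨z, hz, rfl⟩ := pn_surj A hs _ y
  rw [dm_pn A _ _ hz] at h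
  obtain ⟨w, hw⟩ := pn_ker A hq _ _ (H.deg _ _ hz) h
  obtain ⟨v, hv, w', hw'⟩ := H.ex (n+1) (by omega) z hz w hw
  refine ⟨pn A dg _ v, ?_⟩
  rw [dm_pn A _ _ hv, hw', map_add, pn_smul A hq, add_zero]

/-- augmentation -/
noncomputable def au (dg : T → ℕ) : XG A dg 0 →ₗ[A] IsLocalRing.ResidueField A :=
  Finsupp.linearCombination A (fun _ => 1)

lemma au_pn (H : Res m q dg t0 D) (z : T →₀ Q) (hz : z ∈ gr Q dg 0) :
    au A dg (pn A dg 0 z) = IsLocalRing.residue A (algebraMap Q A (z t0)) := by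
  have h0 : dg t0 = 0 := (H.dg0 _).2 rfl
  have : z = Finsupp.single t0 (z t0) := by
    classical
    ext t
    rw [Finsupp.single_apply]
    split_ifs with h
    · rw [h]
    · by_contra hne
      exact h ((H.dg0 _).1 (hz (Finsupp.mem_support_iff.2 hne))).symm
  conv_lhs => rw [this]
  rw [pn_single A _ _ h0, au, Finsupp.linearCombination_single, Algebra.smul_def, mul_one]
  rfl

lemma au_surj (H : Res m q dg t0 D)
    (hs : Function.Surjective (algebraMap Q A)) : Function.Surjective (au A dg) := by
  intro y
  obtain ⟨y, rfl⟩ := IsLocalRing.residue_surjective y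
  obtain ⟨y, rfl⟩ := hs y
  refine ⟨pn A dg 0 (Finsupp.single t0 y), ?_⟩
  rw [au_pn A H _ (single_mem_gr ((H.dg0 _).2 rfl) _), Finsupp.single_eq_same]

lemma au_dm (H : Res m q dg t0 D)
    (hs : Function.Surjective (algebraMap Q A))
    (hm : ∀ x, IsLocalRing.residue A (algebraMap Q A x) = 0 ↔ x ∈ m) (y) : au A dg (dm A dg D 0 y) = 0 := by
  obtain ⟨z, hz, rfl⟩ := pn_surj A hs _ y
  rw [dm_pn A _ _ hz, au_pn A H _ (H.deg _ _ hz), hm]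
  exact H.aug _ hz

lemma au_ex (H : Res m q dg t0 D)
    (hs : Function.Surjective (algebraMap Q A))
    (hm : ∀ x, IsLocalRing.residue A (algebraMap Q A x) = 0 ↔ x ∈ m) (y) (h : au A dg y = 0) : ∃ v, dm A dg D 0 v = y := by
  obtain ⟨z, hz, rfl⟩ := pn_surj A hs _ y
  rw [au_pn A H _ hz, hm] at h
  obtain ⟨u, hu, huz⟩ := H.aug' _ h
  refine ⟨pn A dg _ u, ?_⟩
  rw [dm_pn A _ _ hu, huz]
  congr 1
  classical
  ext t
  rw [Finsupp.single_apply]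
  split_ifs with h
  · rw [h]
  · by_contra hne
    exact h ((H.dg0 _).1 (hz (Finsupp.mem_support_iff.2 (Ne.symm hne)))).symm

/-- the complex -/
noncomputable def cpx (H : Res m q dg t0 D)(hs : Function.Surjective (algebraMap Q A))
    (hq : ∀ x, algebraMap Q A x = 0 ↔ ∃ c, x = q * c): ChainComplex (ModuleCat.{0} A) ℕ :=
  ChainComplex.of (fun n => ModuleCat.of A (XG A dg n)) (fun n => ModuleCat.ofHom (dm A dg D n))
    (fun n => by
      apply ModuleCat.hom_ext
      refine LinearMap.ext fun y => ?_
      exact dm_dm A H hs hq n y)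

lemma cpx_d (H : Res m q dg t0 D)(hs : Function.Surjective (algebraMap Q A))
    (hq : ∀ x, algebraMap Q A x = 0 ↔ ∃ c, x = q * c)(n : ℕ) : (cpx A H hs hq).d (n+1) n = ModuleCat.ofHom (dm A dg D n) :=
  ChainComplex.of_d (fun n => ModuleCat.of A (XG A dg n)) (fun n => ModuleCat.ofHom (dm A dg D n)) n

end pr

lemma qis {A : Type} [CommRing A] (K : ChainComplex (ModuleCat.{0} A) ℕ) (Z : ModuleCat.{0} A)
    (φ : K.X 0 ⟶ Z) (h : K.d 1 0 ≫ φ = 0) (hs : Function.Surjective φ)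
    (h0 : ∀ y, φ y = 0 → ∃ v, K.d 1 0 v = y)
    (h1 : ∀ n y, K.d (n+1) n y = 0 → ∃ v, K.d (n+2) (n+1) v = y) :
    QuasiIso ((ChainComplex.toSingle₀Equiv K Z).symm ⟨φ, h⟩) := by
  have hφ := ChainComplex.toSingle₀Equiv_symm_apply_f_zero φ h
  constructor
  intro n
  cases n with
  | zero =>
    rw [ChainComplex.quasiIsoAt₀_iff, ShortComplex.quasiIso_iff_of_zeros']
    · constructor
      · rw [ShortComplex.moduleCat_exact_iff]
        intro y hy
        change ((ChainComplex.toSingle₀Equiv K Z).symm ⟨φ, h⟩).f 0 y = 0 at hy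
        rw [hφ] at hy
        exact h0 y hy
      · change Epi (((ChainComplex.toSingle₀Equiv K Z).symm ⟨φ, h⟩).f 0)
        rw [hφ]
        exact (ModuleCat.epi_iff_surjective _).2 hs
    · exact K.shape _ _ (by simp)
    · rfl
    · rfl
  | succ n =>
    rw [quasiIsoAt_iff_exactAt']
    · rw [HomologicalComplex.exactAt_iff' _ (n+2) (n+1) n (by simp) (by simp),
        ShortComplex.moduleCat_exact_iff]
      exact h1 n
    · exact ChainComplex.exactAt_succ_single_obj _ _

section pr2
variable {Q T : Type} [CommRing Q] (A : Type) [CommRing A] [IsLocalRing A] [Algebra Q A]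
  {m : Ideal Q} {q : Q} {dg : T → ℕ} {t0 : T} {D : Module.End Q (T →₀ Q)}
  (H : Res m q dg t0 D) (hs : Function.Surjective (algebraMap Q A))
  (hq : ∀ x, algebraMap Q A x = 0 ↔ ∃ c, x = q * c)
  (hm : ∀ x, IsLocalRing.residue A (algebraMap Q A x) = 0 ↔ x ∈ m)

/-- augmentation as a morphism -/
noncomputable def auh : (cpx A H hs hq).X 0 ⟶ ModuleCat.of A (IsLocalRing.ResidueField A) :=
  ModuleCat.ofHom (au A dg)

/-- the resolution -/
noncomputable def pres : ProjectiveResolution (ModuleCat.of A (IsLocalRing.ResidueField A)) where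
  complex := cpx A H hs hq
  projective n := by
    change Projective (ModuleCat.of A (XG A dg n))
    infer_instance
  π := (ChainComplex.toSingle₀Equiv (cpx A H hs hq) _).symm ⟨auh A H hs hq, by
    rw [cpx_d]
    apply ModuleCat.hom_ext
    refine LinearMap.ext fun y => ?_
    exact au_dm A H hs hm y⟩
  quasiIso := by
    apply qis
    · exact au_surj A H hs
    · intro y hy
      rw [cpx_d]
      exact au_ex A H hs hm y hy
    · intro n y hy
      rw [cpx_d] at hy ⊢
      exact dm_ex A H hs hq n y hy
end pr2

end BettiAux


namespace BettiAux

section cmp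
variable {Q T : Type} [CommRing Q] (A : Type) [CommRing A] [IsLocalRing A] [Algebra Q A]
  {m : Ideal Q} {q : Q} {dg : T → ℕ} {t0 : T} {D : Module.End Q (T →₀ Q)}
  (H : Res m q dg t0 D) (hs : Function.Surjective (algebraMap Q A))
  (hq : ∀ x, algebraMap Q A x = 0 ↔ ∃ c, x = q * c)
  (hm : ∀ x, IsLocalRing.residue A (algebraMap Q A x) = 0 ↔ x ∈ m)

/-- tensored complex -/
noncomputable def tcx : ChainComplex (ModuleCat.{0} A) ℕ :=
  (((MonoidalCategory.tensoringLeft (ModuleCat.{0} A)).obj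
    (ModuleCat.of A (IsLocalRing.ResidueField A))).mapHomologicalComplex _).obj (cpx A H hs hq)

lemma tcx_d (n : ℕ) (x : IsLocalRing.ResidueField A ⊗[A] XG A dg (n+1)) :
    (tcx A H hs hq).d (n+1) n x =
      LinearMap.lTensor (IsLocalRing.ResidueField A) (dm A dg D n) x := by
  have h : (tcx A H hs hq).d (n+1) n = MonoidalCategoryStruct.whiskerLeft
    (ModuleCat.of A (IsLocalRing.ResidueField A)) ((cpx A H hs hq).d (n+1) n) := rfl
  rw [h, cpx_d]
  rfl

/-- Tor via the complex -/
noncomputable def torIso (i : ℕ) : ((Tor (ModuleCat.{0} A) i).obj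
    (ModuleCat.of A (IsLocalRing.ResidueField A))).obj
      (ModuleCat.of A (IsLocalRing.ResidueField A)) ≅ (tcx A H hs hq).homology i :=
  (pres A H hs hq hm).isoLeftDerivedObj _ i

end cmp

section cmp2
variable {Q T : Type} [CommRing Q] {A A' : Type} [CommRing A] [IsLocalRing A] [Algebra Q A]
  [CommRing A'] [IsLocalRing A'] [Algebra Q A']
  {m : Ideal Q} {q q' : Q} {dg : T → ℕ} {t0 : T} {D D' : Module.End Q (T →₀ Q)}

lemma exists_e (hs : Function.Surjective (algebraMap Q A))
    (hs' : Function.Surjective (algebraMap Q A'))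
    (hm : ∀ x, IsLocalRing.residue A (algebraMap Q A x) = 0 ↔ x ∈ m)
    (hm' : ∀ x, IsLocalRing.residue A' (algebraMap Q A' x) = 0 ↔ x ∈ m)
    (φ : A →+* A') (hφ : ∀ x, φ (algebraMap Q A x) = algebraMap Q A' x) :
    ∃ e : IsLocalRing.ResidueField A ≃+* IsLocalRing.ResidueField A',
      ∀ a, e (IsLocalRing.residue A a) = IsLocalRing.residue A' (φ a) := by
  let e0 : IsLocalRing.ResidueField A →+* IsLocalRing.ResidueField A' :=
    Ideal.Quotient.lift (IsLocalRing.maximalIdeal A) ((IsLocalRing.residue A').comp φ) (by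
      intro a ha
      obtain ⟨x, rfl⟩ := hs a
      rw [RingHom.comp_apply, hφ, hm', ← hm]
      exact (IsLocalRing.residue_eq_zero_iff _).2 ha)
  have he0 : ∀ a, e0 (IsLocalRing.residue A a) = IsLocalRing.residue A' (φ a) := fun a => rfl
  refine ⟨RingEquiv.ofBijective e0 ⟨e0.injective, fun y => ?_⟩, he0⟩
  obtain ⟨y, rfl⟩ := IsLocalRing.residue_surjective y
  obtain ⟨y, rfl⟩ := hs' y
  exact ⟨IsLocalRing.residue A (algebraMap Q A y), by rw [he0, hφ]⟩

lemma exists_E (hs : Function.Surjective (algebraMap Q A))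
    (φ : A →+* A') (hφ : ∀ x, φ (algebraMap Q A x) = algebraMap Q A' x)
    (e : IsLocalRing.ResidueField A ≃+* IsLocalRing.ResidueField A')
    (he : ∀ a, e (IsLocalRing.residue A a) = IsLocalRing.residue A' (φ a))
    (hes : ∀ (a : A) x, e (a • x) = φ a • e x) (n : ℕ) :
    ∃ E : IsLocalRing.ResidueField A ⊗[A] XG A dg n ≃+ IsLocalRing.ResidueField A' ⊗[A'] XG A' dg n,
      (∀ x (z : T →₀ Q), E (x ⊗ₜ pn A dg n z) = e x ⊗ₜ pn A' dg n z) ∧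
      (∀ (a : A) x, E (a • x) = φ a • E x) := by
  classical
  let s := TensorProduct.finsuppScalarRight A A (IsLocalRing.ResidueField A) {t // dg t = n}
  let s' := TensorProduct.finsuppScalarRight A' A' (IsLocalRing.ResidueField A') {t // dg t = n}
  let r : ({t // dg t = n} →₀ IsLocalRing.ResidueField A) ≃+
    ({t // dg t = n} →₀ IsLocalRing.ResidueField A') := Finsupp.mapRange.addEquiv e.toAddEquiv
  have hr : ∀ z t, r z t = e (z t) := fun z t => rfl
  refine ⟨(s.toAddEquiv.trans r).trans s'.symm.toAddEquiv, fun x z => ?_, fun a x => ?_⟩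
  · change s'.symm (r (s _)) = _
    rw [LinearEquiv.symm_apply_eq]
    ext t
    rw [hr, TensorProduct.finsuppScalarRight_apply_tmul_apply,
      TensorProduct.finsuppScalarRight_apply_tmul_apply, hes, pn_apply, pn_apply, hφ]
  · change s'.symm (r (s _)) = φ a • s'.symm (r (s _))
    rw [map_smul, ← map_smul s'.symm]
    refine congrArg s'.symm (Finsupp.ext fun t => ?_)
    rw [Finsupp.smul_apply, hr, hr, Finsupp.smul_apply, hes]

lemma tmul_congr (hm' : ∀ x, IsLocalRing.residue A' (algebraMap Q A' x) = 0 ↔ x ∈ m) (n : ℕ)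
    (x : IsLocalRing.ResidueField A') (z z' : T →₀ Q) (h : ∀ t, (z - z') t ∈ m) :
    x ⊗ₜ[A'] pn A' dg n z = x ⊗ₜ pn A' dg n z' := by
  classical
  apply (TensorProduct.finsuppScalarRight A' A' (IsLocalRing.ResidueField A') {t // dg t = n}).injective
  ext t
  rw [TensorProduct.finsuppScalarRight_apply_tmul_apply,
      TensorProduct.finsuppScalarRight_apply_tmul_apply, pn_apply, pn_apply, ← sub_eq_zero,
      ← sub_smul, ← map_sub, Algebra.smul_def]
  have := (hm' _).2 (h t.1)
  rw [Finsupp.sub_apply] at this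
  change IsLocalRing.residue A' _ * x = 0
  rw [this, zero_mul]

theorem cmp (H : Res m q dg t0 D) (hs : Function.Surjective (algebraMap Q A))
    (hq : ∀ x, algebraMap Q A x = 0 ↔ ∃ c, x = q * c)
    (hm : ∀ x, IsLocalRing.residue A (algebraMap Q A x) = 0 ↔ x ∈ m)
    (H' : Res m q' dg t0 D') (hs' : Function.Surjective (algebraMap Q A'))
    (hq' : ∀ x, algebraMap Q A' x = 0 ↔ ∃ c, x = q' * c)
    (hm' : ∀ x, IsLocalRing.residue A' (algebraMap Q A' x) = 0 ↔ x ∈ m)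
    (φ : A →+* A') (hφ : ∀ x, φ (algebraMap Q A x) = algebraMap Q A' x)
    (hDD : ∀ z t, (D z - D' z) t ∈ m) (i : ℕ) :
    bettiNumber A (IsLocalRing.ResidueField A) i =
      bettiNumber A' (IsLocalRing.ResidueField A') i := by
  obtain ⟨e, he⟩ := exists_e hs hs' hm hm' φ hφ
  have hes : ∀ (a : A) x, e (a • x) = φ a • e x := by
    intro a x
    rw [Algebra.smul_def, Algebra.smul_def, map_mul]
    congr 1
    exact he a
  choose E hE1 hE2 using exists_E (dg := dg) hs φ hφ e he hes
  have hφs : Function.Surjective φ := fun y => by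
    obtain ⟨x, rfl⟩ := hs' y
    exact ⟨_, hφ x⟩
  have hd : ∀ n (x : IsLocalRing.ResidueField A ⊗[A] XG A dg (n+1)),
      E n (LinearMap.lTensor (IsLocalRing.ResidueField A) (dm A dg D n) x) =
      LinearMap.lTensor (IsLocalRing.ResidueField A') (dm A' dg D' n) (E (n+1) x) := by
    intro n x
    induction x using TensorProduct.induction_on with
    | zero => simp only [map_zero]
    | add x y hx hy => simp only [map_add, hx, hy]
    | tmul x y =>
      obtain ⟨z, hz, rfl⟩ := pn_surj A hs _ y
      rw [LinearMap.lTensor_tmul, dm_pn A _ _ hz, hE1, hE1, LinearMap.lTensor_tmul,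
        dm_pn A' _ _ hz]
      exact tmul_congr hm' n _ _ _ (hDD z)
  obtain ⟨J, hJ⟩ := homology_semi' φ (tcx A H hs hq) (tcx A' H' hs' hq') E hE2 (by
    intro n x
    exact ((congrArg (E n) (tcx_d A H hs hq n x)).trans (hd n x)).trans
      (tcx_d A' H' hs' hq' n (E (n+1) x)).symm) i
  let i1 := (torIso A H hs hq hm i).toLinearEquiv
  let i2 := (torIso A' H' hs' hq' hm' i).toLinearEquiv
  obtain ⟨L, hL⟩ := tens φ hφs e.toAddEquiv hes ((i1.toAddEquiv.trans J).trans i2.symm.toAddEquiv)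
    (fun a x => by
      change i2.symm (J (i1 (a • x))) = φ a • i2.symm (J (i1 x))
      rw [map_smul, hJ, map_smul])
  have hLs : ∀ (c : IsLocalRing.ResidueField A) x, L (c • x) = e c • L x := by
    intro c x
    induction x using TensorProduct.induction_on with
    | zero => simp
    | add x y hx hy => rw [smul_add, map_add, map_add, smul_add, hx, hy]
    | tmul x y =>
      rw [TensorProduct.smul_tmul', hL, hL, TensorProduct.smul_tmul']
      congr 1
      exact map_mul e c x
  have := rank_eq_of_equiv_equiv (e : IsLocalRing.ResidueField A → _) L e.bijective hLs
  rw [bettiNumber, bettiNumber, Module.finrank, Module.finrank, this]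

end cmp2
end BettiAux


/-- Let `f, g` be an exact pair of zerodivisors in a Noetherian local ring `Q`
with `f ∈ m²`, and set `R = Q/(f)`. Then the residue field has the same Betti
numbers over `Q` and over `R`: `β_i^Q(k) = β_i^R(k)` for all `i ≥ 0`, i.e.
`P_k^Q(t) = P_k^R(t)`. -/
theorem betti_residueField_eq_of_exact_zerodivisor_mem_sq
    (Q : Type) [CommRing Q] [IsNoetherianRing Q] [IsLocalRing Q]
    (f g : Q) (hf0 : f ≠ 0) (hg0 : g ≠ 0)
    (hfm : f ∈ IsLocalRing.maximalIdeal Q) (hgm : g ∈ IsLocalRing.maximalIdeal Q)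
    (hfm2 : f ∈ (IsLocalRing.maximalIdeal Q) ^ 2)
    (hannf : ∀ x : Q, x * f = 0 ↔ x ∈ Ideal.span {g})
    (hanng : ∀ x : Q, x * g = 0 ↔ x ∈ Ideal.span {f})
    [IsLocalRing (Q ⧸ Ideal.span {f})]
    (i : ℕ) :
    bettiNumber Q (IsLocalRing.ResidueField Q) i =
      bettiNumber (Q ⧸ Ideal.span {f})
        (IsLocalRing.ResidueField (Q ⧸ Ideal.span {f})) i := by
  obtain ⟨n, x, hx⟩ := Submodule.fg_iff_exists_fin_generating_family.1
    (IsNoetherian.noetherian (IsLocalRing.maximalIdeal Q))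
  have hx' : Ideal.span (Set.range x) = IsLocalRing.maximalIdeal Q := hx
  have hxm : ∀ i, x i ∈ IsLocalRing.maximalIdeal Q := fun i => by
    rw [← hx']; exact Ideal.subset_span ⟨i, rfl⟩
  have hm : ∀ c ∈ IsLocalRing.maximalIdeal Q, ∃ u, Finsupp.linearCombination Q x u = c := by
    intro c hc
    rw [← hx] at hc
    exact (Finsupp.mem_span_range_iff_exists_finsupp.1 hc)
  obtain ⟨a, ha, haf⟩ : ∃ a : Fin n →₀ Q, (∀ i, a i ∈ IsLocalRing.maximalIdeal Q) ∧
      Finsupp.linearCombination Q x a = f := by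
    rw [sq] at hfm2
    have h : f ∈ IsLocalRing.maximalIdeal Q • Submodule.span Q (Set.range x) := by
      rw [hx]; exact hfm2
    obtain ⟨a, ha, h⟩ := (Submodule.mem_ideal_smul_span_iff_exists_sum _ _ _).1 h
    exact ⟨a, ha, h⟩
  have hfg : ∀ x : Q, x * f = 0 → g ∣ x := fun x h => Ideal.mem_span_singleton.1 ((hannf x).1 h)
  have hgf : ∀ x : Q, x * g = 0 → f ∣ x := fun x h => Ideal.mem_span_singleton.1 ((hanng x).1 h)
  have hz : f * g = 0 := (hanng f).2 (Ideal.mem_span_singleton_self f)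
  have hφ : ∀ v, Finsupp.linearCombination Q x v ∈ IsLocalRing.maximalIdeal Q := by
    intro v
    rw [Finsupp.linearCombination_apply]
    exact Ideal.sum_mem _ fun i _ => Ideal.mul_mem_left _ _ (hxm i)
  have hnk := BettiAux.not_mem_kos (Finsupp.linearCombination Q x) (IsLocalRing.maximalIdeal Q)
    (Ideal.IsPrime.ne_top inferInstance) hφ hgm hfg hgf hz a haf
  obtain ⟨C⟩ := BettiAux.exists_cx x hx' (g • a) (by
    rw [map_smul, haf, smul_eq_mul, mul_comm, hz]) hnk
  obtain ⟨H⟩ := BettiAux.exists_hty C f a ha haf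
  have R1 := BettiAux.res H (BettiAux.exMod_zero C) 0 (by rw [mul_comm, hz, mul_zero]) hm hxm
  have R2 := BettiAux.res H (BettiAux.exMod_f C hm hxm hfg hgf hz hgm haf) 1
    (by rw [one_mul, mul_one]) hm hxm
  have hs' : Function.Surjective (algebraMap Q (Q ⧸ Ideal.span {f})) := Ideal.Quotient.mk_surjective
  have hloc : ∀ x, IsLocalRing.residue (Q ⧸ Ideal.span {f}) (algebraMap Q (Q ⧸ Ideal.span {f}) x) = 0
      ↔ x ∈ IsLocalRing.maximalIdeal Q := by
    have hmax : (RingHom.ker ((IsLocalRing.residue (Q ⧸ Ideal.span {f})).comp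
        (algebraMap Q (Q ⧸ Ideal.span {f})))).IsMaximal :=
      RingHom.ker_isMaximal_of_surjective _ (IsLocalRing.residue_surjective.comp hs')
    have := IsLocalRing.eq_maximalIdeal hmax
    intro x
    rw [← this]
    rfl
  refine BettiAux.cmp (Q := Q) (A := Q) (A' := Q ⧸ Ideal.span {f}) R1 Function.surjective_id
    (fun x => ?_) (fun x => IsLocalRing.residue_eq_zero_iff x) R2 hs' (fun x => ?_) hloc
    (algebraMap Q (Q ⧸ Ideal.span {f})) (fun x => rfl) (fun z t => BettiAux.DY_congr H 1 z t) i
  · simp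
  · change Ideal.Quotient.mk _ x = 0 ↔ _
    rw [Ideal.Quotient.eq_zero_iff_mem, Ideal.mem_span_singleton]
    rfl
end

section
/- Let (Q, m, k) be a commutative Noetherian local ring and let f, g be an exact pair of zerodivisors in m, i.e. f and g are nonzero elements of m with ann_Q(f) = (g) and ann_Q(g) = (f). Set R = Q/(f). Then for every finitely generated R-module M and every integer i ≥ 0 one has the coefficient-wise inequality β_i^Q(M) ≤ Σ_{j=0}^{i} β_j^R(M). (Equivalently, P_M^Q(t) ≼ P_M^R(t)/(1−t) coefficient-wise; this is the case n = m = 1 of the general inequality P_M^Q(t) ≼ (1+t)^{n−m}(1−t)^{−m}·P_M^R(t) for quasi-complete intersection homomorphisms.) -/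
open CategoryTheory TensorProduct

abbrev TorM (A : Type) [CommRing A] (X L : Type) [AddCommGroup X] [Module A X] [AddCommGroup L] [Module A L] (i : ℕ) : Type :=
  (((Tor (ModuleCat A) i).obj (ModuleCat.of A X)).obj (ModuleCat.of A L))

section
variable (A : Type) [CommRing A] (L : Type) [AddCommGroup L] [Module A L]

noncomputable def torC (P : ChainComplex (ModuleCat.{0} A) ℕ) (X : ModuleCat.{0} A) :
    ChainComplex (ModuleCat.{0} A) ℕ :=
  (((MonoidalCategory.tensoringLeft (ModuleCat.{0} A)).obj X).mapHomologicalComplex _).obj P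

noncomputable def torCMap (P : ChainComplex (ModuleCat.{0} A) ℕ) {X Y : ModuleCat.{0} A} (f : X ⟶ Y) :
    torC A P X ⟶ torC A P Y :=
  (NatTrans.mapHomologicalComplex ((MonoidalCategory.tensoringLeft (ModuleCat.{0} A)).map f) _).app P

theorem torCMap_comp (P : ChainComplex (ModuleCat.{0} A) ℕ) {X Y Z : ModuleCat.{0} A} (f : X ⟶ Y) (g : Y ⟶ Z)
    (h : f ≫ g = 0) : torCMap A P f ≫ torCMap A P g = 0 := by
  ext1 i
  change MonoidalCategory.whiskerRight f _ ≫ MonoidalCategory.whiskerRight g _ = 0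
  rw [← MonoidalCategory.comp_whiskerRight, h]
  simp

theorem torC_shortExact (P : ChainComplex (ModuleCat.{0} A) ℕ) [∀ i, Projective (P.X i)]
    (S : ShortComplex (ModuleCat.{0} A)) (hS : S.ShortExact) :
    (ShortComplex.mk _ _ (torCMap_comp A P S.f S.g S.zero)).ShortExact := by
  apply HomologicalComplex.shortExact_of_degreewise_shortExact
  intro i
  have : Module.Projective A (P.X i) := (IsProjective.iff_projective (R := A) (P.X i)).2 inferInstance
  exact hS.map_of_exact (MonoidalCategory.tensorRight (P.X i))

noncomputable def torIso (X : Type) [AddCommGroup X] [Module A X] (i : ℕ) :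
  ((Tor (ModuleCat A) i).obj (ModuleCat.of A X)).obj (ModuleCat.of A L) ≅
    (torC A (projectiveResolution (ModuleCat.of A L)).complex (ModuleCat.of A X)).homology i :=
  ((projectiveResolution (ModuleCat.of A L))).isoLeftDerivedObj _ i

theorem exact_transport {X Y Z X' Y' Z' : ModuleCat.{0} A} (f : X ⟶ Y) (g : Y ⟶ Z) (w : f ≫ g = 0)
    (h : (ShortComplex.mk f g w).Exact) (eX : X' ≅ X) (eY : Y' ≅ Y) (eZ : Z' ≅ Z) :
    Function.Exact (eX.hom ≫ f ≫ eY.inv).hom (eY.hom ≫ g ≫ eZ.inv).hom := by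
  have : (ShortComplex.mk (eX.hom ≫ f ≫ eY.inv) (eY.hom ≫ g ≫ eZ.inv) (by
      have w2 : f ≫ g ≫ eZ.inv = 0 := by rw [← Category.assoc, w, Limits.zero_comp]
      simp [w2])).Exact := by
    refine (ShortComplex.exact_iff_of_iso (ShortComplex.isoMk eX eY eZ ?_ ?_)).2 h <;> simp
  exact (ShortComplex.ShortExact.moduleCat_exact_iff_function_exact _).1 this

theorem tor_les {N F M : Type} [AddCommGroup N] [Module A N] [AddCommGroup F] [Module A F]
    [AddCommGroup M] [Module A M] (u : N →ₗ[A] F) (v : F →ₗ[A] M) (hu : Function.Injective u)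
    (huv : Function.Exact u v) (hv : Function.Surjective v) :
    ∃ (a : ∀ i, TorM A N L i →ₗ[A] TorM A F L i) (b : ∀ i, TorM A F L i →ₗ[A] TorM A M L i)
      (d : ∀ i, TorM A M L (i + 1) →ₗ[A] TorM A N L i),
      (∀ i, Function.Exact (a i) (b i)) ∧ (∀ i, Function.Exact (b (i + 1)) (d i)) ∧
      (∀ i, Function.Exact (d i) (a i)) ∧ Function.Surjective (b 0) := by
  let S : ShortComplex (ModuleCat.{0} A) := ShortComplex.mk (ModuleCat.ofHom u) (ModuleCat.ofHom v)
    (by ext x; exact huv.apply_apply_eq_zero x)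
  have hS : S.ShortExact :=
    { exact := (ShortComplex.ShortExact.moduleCat_exact_iff_function_exact _).2 huv
      mono_f := (ModuleCat.mono_iff_injective _).2 hu
      epi_g := (ModuleCat.epi_iff_surjective _).2 hv }
  let P := projectiveResolution (ModuleCat.of A L)
  have hK := torC_shortExact A P.complex S hS
  refine ⟨fun i => ((torIso A L N i).hom ≫ HomologicalComplex.homologyMap (torCMap A P.complex S.f) i ≫ (torIso A L F i).inv).hom,
    fun i => ((torIso A L F i).hom ≫ HomologicalComplex.homologyMap (torCMap A P.complex S.g) i ≫ (torIso A L M i).inv).hom,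
    fun i => ((torIso A L M (i+1)).hom ≫ hK.δ (i+1) i rfl ≫ (torIso A L N i).inv).hom, ?_, ?_, ?_, ?_⟩
  · intro i
    exact exact_transport A _ _ _ (hK.homology_exact₂ i) _ _ _
  · intro i
    exact exact_transport A _ _ _ (hK.homology_exact₃ (i+1) i rfl) _ _ _
  · intro i
    exact exact_transport A _ _ _ (hK.homology_exact₁ (i+1) i rfl) _ _ _
  · have : Epi (torCMap A P.complex S.g) := hK.epi_g
    have : Epi (HomologicalComplex.homologyMap (torCMap A P.complex S.g) 0) := by
      have := hK.epi_g
      apply HomologicalComplex.epi_homologyMap_of_epi_of_not_rel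
      simp
    exact (ModuleCat.epi_iff_surjective _).1 inferInstance

theorem tor_flat_subsingleton (X : Type) [AddCommGroup X] [Module A X] [Module.Flat A X] (i : ℕ) :
    Subsingleton (TorM A X L (i + 1)) := by
  have hP := (projectiveResolution (ModuleCat.of A L)).complex_exactAt_succ i
  generalize hPdef : (projectiveResolution (ModuleCat.of A L)).complex = P at hP
  rw [HomologicalComplex.exactAt_iff' _ (i+2) (i+1) i (by simp) (by simp)] at hP
  have hE := Module.Flat.lTensor_shortComplex_exact (ModuleCat.of A X) _ hP
  have hZ : Limits.IsZero ((torC A P (ModuleCat.of A X)).homology (i+1)) := by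
    rw [← HomologicalComplex.exactAt_iff_isZero_homology,
      HomologicalComplex.exactAt_iff' _ (i+2) (i+1) i (by simp) (by simp)]
    exact hE
  subst hPdef
  exact ModuleCat.subsingleton_of_isZero (Limits.IsZero.of_iso hZ (torIso A L X (i+1)))

noncomputable def torZero (X : Type) [AddCommGroup X] [Module A X] :
    TorM A X L 0 ≃ₗ[A] X ⊗[A] L :=
  (((MonoidalCategory.tensorLeft (ModuleCat.of A X)).leftDerivedZeroIsoSelf).app (ModuleCat.of A L)).toLinearEquiv
end

section Algebra

theorem length_le_of_exact3 {A X Y Z : Type} [CommRing A] [AddCommGroup X] [Module A X]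
    [AddCommGroup Y] [Module A Y] [AddCommGroup Z] [Module A Z] (f : X →ₗ[A] Y) (g : Y →ₗ[A] Z)
    (h : Function.Exact f g) : Module.length A Y ≤ Module.length A X + Module.length A Z := by
  rw [Module.length_eq_add_of_exact (LinearMap.ker g).subtype g.rangeRestrict
    (Submodule.subtype_injective _) g.surjective_rangeRestrict
    (by rw [LinearMap.exact_iff, LinearMap.ker_rangeRestrict, Submodule.range_subtype])]
  refine add_le_add ?_ (Module.length_le_of_injective _ (Submodule.subtype_injective _))
  rw [LinearMap.exact_iff.1 h]
  exact Module.length_le_of_surjective f.rangeRestrict f.surjective_rangeRestrict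

theorem tor_subsingleton (A : Type) [CommRing A] (L X : Type) [AddCommGroup L] [Module A L]
    [AddCommGroup X] [Module A X] [Subsingleton X] (i : ℕ) : Subsingleton (TorM A X L i) := by
  cases i with
  | zero => exact (torZero A L X).toEquiv.subsingleton
  | succ i => exact tor_flat_subsingleton A L X i

theorem tor_pi_length (A : Type) [CommRing A] (L X : Type) [AddCommGroup L] [Module A L]
    [AddCommGroup X] [Module A X] (i n : ℕ) :
    Module.length A (TorM A (Fin n → X) L i) ≤ n * Module.length A (TorM A X L i) := by
  induction n with
  | zero =>
    have := tor_subsingleton A L (Fin 0 → X) i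
    rw [Module.length_eq_zero]
    exact zero_le
  | succ n ih =>
    let u : (Fin n → X) →ₗ[A] (Fin (n + 1) → X) :=
      { toFun := fun x => Fin.cons 0 x
        map_add' := fun x y => by
          ext j; refine Fin.cases ?_ (fun j => ?_) j <;> simp
        map_smul' := fun x y => by
          ext j; refine Fin.cases ?_ (fun j => ?_) j <;> simp }
    let v : (Fin (n + 1) → X) →ₗ[A] X := LinearMap.proj 0
    obtain ⟨a, b, d, h1, -⟩ := tor_les A L u v
      (fun x y h => by
        ext j
        simpa [u] using congrFun h j.succ)
      (fun y => by
        constructor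
        · intro h
          refine ⟨Fin.tail y, ?_⟩
          have h' : y 0 = 0 := h
          change Fin.cons 0 (Fin.tail y) = y
          rw [← h', Fin.cons_self_tail]
        · rintro ⟨x, rfl⟩
          rfl)
      (fun x => ⟨fun _ => x, rfl⟩)
    refine (length_le_of_exact3 _ _ (h1 i)).trans ?_
    push_cast
    rw [add_mul, one_mul]
    exact add_le_add_left ih _

variable {A : Type} [CommRing A] [IsLocalRing A]

local notation "κ" => IsLocalRing.ResidueField

theorem length_residue : Module.length A (κ A) = 1 := by
  rw [Module.length_eq_of_surjective (R := κ A) IsLocalRing.residue_surjective]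
  exact Module.length_eq_one (κ A) _

theorem tor_cyclic_length (i : ℕ) : ∀ (f g : A)
    (_ : ∀ x : A, x * f = 0 ↔ x ∈ Ideal.span {g})
    (_ : ∀ x : A, x * g = 0 ↔ x ∈ Ideal.span {f}),
    Module.length A (TorM A (A ⧸ Ideal.span {f}) (κ A) i) ≤ 1 := by
  induction i with
  | zero =>
    intro f g _ _
    rw [(torZero A (κ A) (A ⧸ Ideal.span {f})).length_eq, ← length_residue (A := A),
      ← (TensorProduct.lid A (κ A)).length_eq]
    exact Module.length_le_of_surjective ((Ideal.span {f}).mkQ.rTensor (κ A))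
      (LinearMap.rTensor_surjective _ (Submodule.mkQ_surjective _))
  | succ i ih =>
    intro f g hf hg
    let u : (A ⧸ Ideal.span {g}) →ₗ[A] A :=
      (Ideal.span {g}).liftQ (LinearMap.mulRight A f) (fun x hx => (hf x).2 hx)
    obtain ⟨a, b, d, -, h2, -⟩ := tor_les A (κ A) u (Ideal.span {f}).mkQ
      (by
        rw [← LinearMap.ker_eq_bot]
        apply Submodule.ker_liftQ_eq_bot
        intro x hx
        exact (hf x).1 hx)
      (by
        intro x
        rw [← LinearMap.mem_ker, Submodule.ker_mkQ, Ideal.mem_span_singleton']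
        constructor
        · rintro ⟨y, hy⟩
          exact ⟨Submodule.Quotient.mk y, hy⟩
        · rintro ⟨y, hy⟩
          obtain ⟨y, rfl⟩ := Submodule.Quotient.mk_surjective _ y
          exact ⟨y, hy⟩)
      (Submodule.mkQ_surjective _)
    have := tor_flat_subsingleton A (κ A) A i
    refine (length_le_of_exact3 _ _ (h2 i)).trans ?_
    rw [Module.length_eq_zero, zero_add]
    exact ih g f hg hf

theorem residue_compat (V : Type) [AddCommGroup V] [Module A V] [Module (κ A) V]
    [IsScalarTower A (κ A) V] :
    Module.finrank (κ A) (κ A ⊗[A] V) = Module.finrank (κ A) V := by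
  have h : Function.Surjective (algebraMap A (κ A)) := IsLocalRing.residue_surjective
  have : TensorProduct.CompatibleSMul A (κ A) (κ A) V :=
    TensorProduct.CompatibleSMul.of_algebraMap_surjective _ _ h
  exact (TensorProduct.lidOfCompatibleSMul A (κ A) V).finrank_eq

theorem betti_congr {M N : Type} [AddCommGroup M] [Module A M] [AddCommGroup N] [Module A N]
    (i j : ℕ) (e : TorM A M (κ A) i ≃ₗ[A] TorM A N (κ A) j) :
    bettiNumber A M i = bettiNumber A N j :=
  (e.baseChange A (κ A) _ _).finrank_eq

theorem betti_zero (M : Type) [AddCommGroup M] [Module A M] :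
    bettiNumber A M 0 = Module.finrank (κ A) (κ A ⊗[A] M) := by
  rw [← residue_compat (κ A ⊗[A] M)]
  exact ((torZero A (κ A) M ≪≫ₗ TensorProduct.comm A M (κ A)).baseChange A (κ A) _ _).finrank_eq

theorem exists_cover (M : Type) [AddCommGroup M] [Module A M] [Module.Finite A M] :
    ∃ v : (Fin (bettiNumber A M 0) → A) →ₗ[A] M, Function.Surjective v ∧
      ∀ j, bettiNumber A (LinearMap.ker v) j = bettiNumber A M (j + 1) := by
  generalize hn : bettiNumber A M 0 = n
  rw [betti_zero] at hn
  let B := Module.finBasisOfFinrankEq (κ A) (κ A ⊗[A] M) hn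
  have hs := TensorProduct.mk_surjective A M (κ A) IsLocalRing.residue_surjective
  choose m hm using fun i => hs (B i)
  have hspan := IsLocalRing.span_eq_top_of_tmul_eq_basis m B hm
  let v : (Fin n → A) →ₗ[A] M := Fintype.linearCombination A m
  have hv : Function.Surjective v := by
    rw [← LinearMap.range_eq_top, Fintype.range_linearCombination, hspan]
  refine ⟨v, hv, ?_⟩
  obtain ⟨a, b, d, h1, h2, h3, h4⟩ := tor_les A (κ A) (LinearMap.ker v).subtype v
    (Submodule.subtype_injective _) (LinearMap.exact_subtype_ker_map v) hv
  have hflat := tor_flat_subsingleton A (κ A) (Fin n → A)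
  let eF : TorM A (Fin n → A) (κ A) 0 ≃ₗ[A] (Fin n → κ A) :=
    torZero A (κ A) (Fin n → A) ≪≫ₗ TensorProduct.comm A _ _ ≪≫ₗ
      TensorProduct.piScalarRight A A (κ A) (Fin n)
  let eM : TorM A M (κ A) 0 ≃ₗ[A] (Fin n → κ A) :=
    torZero A (κ A) M ≪≫ₗ TensorProduct.comm A _ _ ≪≫ₗ B.equivFun.restrictScalars A
  have hb0 : Function.Injective (b 0) := by
    have : Module.Finite A (κ A) := Module.Finite.of_surjective (Algebra.linearMap A (κ A))
      IsLocalRing.residue_surjective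
    have hinj := OrzechProperty.injective_of_surjective_endomorphism
      (eM.toLinearMap ∘ₗ b 0 ∘ₗ eF.symm.toLinearMap)
      (eM.surjective.comp (h4.comp eF.symm.surjective))
    intro x y hxy
    have := @hinj (eF x) (eF y) (by simp [hxy])
    exact eF.injective this
  have ha : ∀ j x, a j x = 0 := by
    intro j x
    cases j with
    | zero => exact hb0 (by rw [(h1 0).apply_apply_eq_zero, map_zero])
    | succ j => exact Subsingleton.elim _ _
  intro j
  symm
  refine betti_congr _ _ (LinearEquiv.ofBijective (d j) ⟨?_, fun y => (h3 j y).1 (ha j y)⟩)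
  rw [injective_iff_map_eq_zero]
  intro x hx
  obtain ⟨z, rfl⟩ := (h2 j x).1 hx
  rw [Subsingleton.elim z 0, map_zero]

theorem finrank_le_length (T : Type) [AddCommGroup T] [Module A T] (n : ℕ)
    (h : Module.length A T ≤ n) : Module.finrank (κ A) (κ A ⊗[A] T) ≤ n := by
  have hs := TensorProduct.mk_surjective A T (κ A) IsLocalRing.residue_surjective
  have h1 := (Module.length_le_of_surjective _ hs).trans h
  rw [Module.length_eq_of_surjective (R := κ A) IsLocalRing.residue_surjective,
    Module.length_eq_rank] at h1
  have h2 := ENat.toNat_le_toNat h1 (ENat.natCast_ne_top n)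
  simpa [Module.finrank] using h2

end Algebra

theorem tor_base_length (Q : Type) [CommRing Q] [IsNoetherianRing Q] [IsLocalRing Q] (f g : Q)
    (hannf : ∀ x : Q, x * f = 0 ↔ x ∈ Ideal.span {g})
    (hanng : ∀ x : Q, x * g = 0 ↔ x ∈ Ideal.span {f})
    [IsLocalRing (Q ⧸ Ideal.span {f})] (i : ℕ) :
    ∀ (M : Type) [AddCommGroup M] [Module Q M] [Module (Q ⧸ Ideal.span {f}) M]
    [IsScalarTower Q (Q ⧸ Ideal.span {f}) M] [Module.Finite (Q ⧸ Ideal.span {f}) M],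
    Module.length Q (TorM Q M (IsLocalRing.ResidueField Q) i) ≤
      ((∑ j ∈ Finset.range (i + 1), bettiNumber (Q ⧸ Ideal.span {f}) M j : ℕ) : ℕ∞) := by
  induction i with
  | zero =>
    intro M _ _ _ _ _
    obtain ⟨v, hv, -⟩ := exists_cover (A := Q ⧸ Ideal.span {f}) M
    obtain ⟨a, b, d, h1, h2, h3, h4⟩ := tor_les Q (IsLocalRing.ResidueField Q)
      ((LinearMap.ker v).subtype.restrictScalars Q) (v.restrictScalars Q)
      (Submodule.subtype_injective _) (LinearMap.exact_subtype_ker_map v) hv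
    refine (Module.length_le_of_surjective _ h4).trans ?_
    refine (tor_pi_length Q _ _ 0 _).trans ?_
    refine (mul_le_mul_right (tor_cyclic_length 0 f g hannf hanng) _).trans ?_
    simp
  | succ i ih =>
    intro M _ _ _ _ _
    obtain ⟨v, hv, hker⟩ := exists_cover (A := Q ⧸ Ideal.span {f}) M
    obtain ⟨a, b, d, h1, h2, h3, h4⟩ := tor_les Q (IsLocalRing.ResidueField Q)
      ((LinearMap.ker v).subtype.restrictScalars Q) (v.restrictScalars Q)
      (Submodule.subtype_injective _) (LinearMap.exact_subtype_ker_map v) hv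
    have hN := ih (LinearMap.ker v)
    simp only [hker] at hN
    refine (length_le_of_exact3 _ _ (h2 i)).trans ?_
    rw [Finset.sum_range_succ', add_comm, Nat.cast_add]
    refine add_le_add hN ?_
    refine (tor_pi_length Q _ _ (i + 1) _).trans ?_
    refine (mul_le_mul_right (tor_cyclic_length (i + 1) f g hannf hanng) _).trans ?_
    simp

/-- Let `f, g` be an exact pair of zerodivisors in the maximal ideal of a
Noetherian local ring `Q` and set `R = Q/(f)`. Then for every finitely generated
`R`-module `M` and all `i ≥ 0`, `β_i^Q(M) ≤ ∑_{j=0}^{i} β_j^R(M)`, i.e.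
`P_M^Q(t) ≼ P_M^R(t)/(1−t)` coefficient-wise. -/
theorem betti_base_le_sum_of_exact_zerodivisor
    (Q : Type) [CommRing Q] [IsNoetherianRing Q] [IsLocalRing Q]
    (f g : Q) (hf0 : f ≠ 0) (hg0 : g ≠ 0)
    (hfm : f ∈ IsLocalRing.maximalIdeal Q) (hgm : g ∈ IsLocalRing.maximalIdeal Q)
    (hannf : ∀ x : Q, x * f = 0 ↔ x ∈ Ideal.span {g})
    (hanng : ∀ x : Q, x * g = 0 ↔ x ∈ Ideal.span {f})
    [IsLocalRing (Q ⧸ Ideal.span {f})]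
    (M : Type) [AddCommGroup M] [Module Q M] [Module (Q ⧸ Ideal.span {f}) M]
    [IsScalarTower Q (Q ⧸ Ideal.span {f}) M]
    [Module.Finite (Q ⧸ Ideal.span {f}) M]
    (i : ℕ) :
    bettiNumber Q M i ≤
      ∑ j ∈ Finset.range (i + 1), bettiNumber (Q ⧸ Ideal.span {f}) M j := by
  exact finrank_le_length _ _ (tor_base_length Q f g hannf hanng i M)
end

section
/- Let (Q, m, k) be a commutative Noetherian local ring and let f, g be an exact pair of zerodivisors with f ∈ m ∖ m², i.e. f and g are nonzero elements of m with f ∉ m², ann_Q(f) = (g) and ann_Q(g) = (f). Set R = Q/(f). Then for every finitely generated R-module M and every integer i ≥ 0 one has the equality β_i^Q(M) = Σ_{j=0}^{i} β_j^R(M). (Equivalently, P_M^Q(t) = P_M^R(t)/(1−t).) -/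
open CategoryTheory TensorProduct

open CategoryTheory TensorProduct
namespace EZD
open MonoidalCategory Limits

section interface
variable {A : Type} [CommRing A] {X : ModuleCat.{0} A} (P : ProjectiveResolution X)

/-- The functor `M ↦ M ⊗ P`. -/
noncomputable def cplx : ModuleCat.{0} A ⥤ ChainComplex (ModuleCat.{0} A) ℕ where
  obj M := (((tensoringLeft (ModuleCat.{0} A)).obj M).mapHomologicalComplex _).obj P.complex
  map φ := (NatTrans.mapHomologicalComplex ((tensoringLeft (ModuleCat.{0} A)).map φ) _).app P.complex
  map_id M := by
    simp
  map_comp φ ψ := by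
    simp

lemma cplx_map_f {M N : ModuleCat.{0} A} (φ : M ⟶ N) (n : ℕ) :
    ((cplx P).map φ).f n = φ ▷ (P.complex.X n) := rfl

instance : (cplx P).Additive where
  map_add {M N φ ψ} := by
    ext n : 1
    rw [HomologicalComplex.add_f_apply, cplx_map_f, cplx_map_f, cplx_map_f]
    exact MonoidalPreadditive.add_whiskerRight _ _

instance flat_of_projective (n : ℕ) : Module.Flat A (P.complex.X n) := by
  have : Projective (P.complex.X n) := inferInstance
  have : Module.Projective A (P.complex.X n) :=
    (IsProjective.iff_projective (R := A) (P.complex.X n)).2 this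
  infer_instance

lemma cplx_shortExact {S : ShortComplex (ModuleCat.{0} A)} (hS : S.ShortExact) :
    (S.map (cplx P)).ShortExact := by
  rw [HomologicalComplex.shortExact_iff_degreewise_shortExact]
  intro n
  exact hS.map_of_exact (tensorRight (P.complex.X n))

/-- The functor `M ↦ H_n (M ⊗ P)`. -/
noncomputable def TF (n : ℕ) : ModuleCat.{0} A ⥤ ModuleCat.{0} A :=
  cplx P ⋙ HomologicalComplex.homologyFunctor _ _ n

instance (n : ℕ) : (TF P n).Additive := by
  unfold TF; infer_instance

/-- `Tor_n` is computed by `TF`. -/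
noncomputable def torIso (n : ℕ) (M : ModuleCat.{0} A) :
    ((Tor (ModuleCat.{0} A) n).obj M).obj X ≅ (TF P n).obj M :=
  P.isoLeftDerivedObj ((tensoringLeft (ModuleCat.{0} A)).obj M) n

lemma TF_isZero (n : ℕ) (M : ModuleCat.{0} A) [Module.Flat A M] :
    IsZero ((TF P (n + 1)).obj M) := by
  have h := P.complex_exactAt_succ n
  rw [HomologicalComplex.exactAt_iff' _ (n+2) (n+1) n (by simp) (by simp)] at h
  have h2 := Module.Flat.lTensor_shortComplex_exact M _ h
  have h3 : ((cplx P).obj M).ExactAt (n + 1) := by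
    rw [HomologicalComplex.exactAt_iff' _ (n+2) (n+1) n (by simp) (by simp)]
    exact h2
  exact h3.isZero_homology

instance (M : ModuleCat.{0} A) : PreservesFiniteColimits ((tensoringLeft (ModuleCat.{0} A)).obj M) :=
  inferInstanceAs (PreservesFiniteColimits (tensorLeft M))

/-- `P_0`-augmentation. -/
noncomputable def augM (M : ModuleCat.{0} A) : ((cplx P).obj M).opcycles 0 ⟶ M ⊗ X :=
  P.fromLeftDerivedZero' ((tensoringLeft (ModuleCat.{0} A)).obj M)

instance (M : ModuleCat.{0} A) : IsIso (augM P M) :=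
  inferInstanceAs (IsIso (P.fromLeftDerivedZero' ((tensoringLeft (ModuleCat.{0} A)).obj M)))

lemma p_augM (M : ModuleCat.{0} A) : ((cplx P).obj M).pOpcycles 0 ≫ augM P M = M ◁ (P.π.f 0) :=
  ProjectiveResolution.pOpcycles_comp_fromLeftDerivedZero' P
    ((tensoringLeft (ModuleCat.{0} A)).obj M)

/-- `T_0(M)` as opcycles. -/
noncomputable def isoOp (M : ModuleCat.{0} A) : (TF P 0).obj M ≅ ((cplx P).obj M).opcycles 0 :=
  (ChainComplex.isoHomologyι₀ ((cplx P).obj M))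

/-- `T_0(M) ≅ M ⊗ X`. -/
noncomputable def T0iso (M : ModuleCat.{0} A) : (TF P 0).obj M ≅ M ⊗ X :=
  isoOp P M ≪≫ asIso (augM P M)

lemma augM_nat {M N : ModuleCat.{0} A} (φ : M ⟶ N) :
    HomologicalComplex.opcyclesMap ((cplx P).map φ) 0 ≫ augM P N = augM P M ≫ (φ ▷ X) := by
  rw [← cancel_epi (HomologicalComplex.pOpcycles _ _)]
  rw [HomologicalComplex.p_opcyclesMap_assoc, p_augM, reassoc_of% (p_augM P M)]
  exact (whisker_exchange φ (P.π.f 0)).symm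

lemma T0iso_naturality {M N : ModuleCat.{0} A} (φ : M ⟶ N) :
    (TF P 0).map φ ≫ (T0iso P N).hom = (T0iso P M).hom ≫ (φ ▷ X) := by
  have h1 : (TF P 0).map φ ≫ (isoOp P N).hom =
      (isoOp P M).hom ≫ HomologicalComplex.opcyclesMap ((cplx P).map φ) 0 :=
    HomologicalComplex.homologyι_naturality _ _
  simp only [T0iso, Iso.trans_hom, asIso_hom, Category.assoc]
  rw [reassoc_of% h1, augM_nat]

/-- `H_n(M ⊗ P)` -/
noncomputable abbrev T (n : ℕ) (M : Type) [AddCommGroup M] [Module A M] : ModuleCat.{0} A :=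
  (TF P n).obj (ModuleCat.of A M)

section wrappers
variable {M N L : Type} [AddCommGroup M] [Module A M] [AddCommGroup N] [Module A N]
  [AddCommGroup L] [Module A L]

/-- functoriality -/
noncomputable def tmap (n : ℕ) (φ : M →ₗ[A] N) : T P n M →ₗ[A] T P n N :=
  ((TF P n).map (ModuleCat.ofHom φ)).hom

lemma tmap_id (n : ℕ) (x : T P n M) : tmap P n (LinearMap.id : M →ₗ[A] M) x = x := by
  unfold tmap
  rw [ModuleCat.ofHom_id, CategoryTheory.Functor.map_id]; rfl

lemma tmap_comp (n : ℕ) (φ : M →ₗ[A] N) (ψ : N →ₗ[A] L) (x : T P n M) :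
    tmap P n (ψ ∘ₗ φ) x = tmap P n ψ (tmap P n φ x) := by
  unfold tmap
  rw [ModuleCat.ofHom_comp, Functor.map_comp]; rfl

lemma tmap_add (n : ℕ) (φ ψ : M →ₗ[A] N) :
    tmap P n (φ + ψ) = tmap P n φ + tmap P n ψ := by
  unfold tmap
  rw [show ModuleCat.ofHom (φ + ψ) = ModuleCat.ofHom φ + ModuleCat.ofHom ψ from rfl,
    Functor.map_add]; rfl

/-- `tmap` as an additive map -/
noncomputable def tmapHom (n : ℕ) : (M →ₗ[A] N) →+ (T P n M →ₗ[A] T P n N) :=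
  AddMonoidHom.mk' (tmap P n) (tmap_add P n)

lemma tmap_zero (n : ℕ) : tmap P n (0 : M →ₗ[A] N) = 0 := (tmapHom P n).map_zero

lemma tmap_sum {ι : Type} (s : Finset ι) (n : ℕ) (φ : ι → (M →ₗ[A] N)) :
    tmap P n (∑ i ∈ s, φ i) = ∑ i ∈ s, tmap P n (φ i) := map_sum (tmapHom P n) φ s

lemma T_subsingleton (n : ℕ) [Module.Flat A M] : Subsingleton (T P (n + 1) M) := by
  have : Module.Flat A (ModuleCat.of A M) := inferInstanceAs (Module.Flat A M)
  exact ModuleCat.subsingleton_of_isZero (TF_isZero P n (ModuleCat.of A M))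

/-- `T_0(M) ≅ M ⊗ X` -/
noncomputable def T0equiv (M : Type) [AddCommGroup M] [Module A M] : T P 0 M ≃ₗ[A] M ⊗[A] X :=
  (T0iso P (ModuleCat.of A M)).toLinearEquiv

lemma T0equiv_nat (φ : M →ₗ[A] N) (x : T P 0 M) :
    T0equiv P N (tmap P 0 φ x) = φ.rTensor X (T0equiv P M x) := by
  have := T0iso_naturality P (ModuleCat.ofHom φ)
  exact congrArg (fun h => h.hom x) this

/-- A short exact sequence. -/
structure IsSES (u : M →ₗ[A] N) (v : N →ₗ[A] L) : Prop where
  inj : Function.Injective u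
  exact : Function.Exact u v
  surj : Function.Surjective v

/-- associated short complex -/
noncomputable def IsSES.sc {u : M →ₗ[A] N} {v : N →ₗ[A] L} (h : IsSES u v) :
    ShortComplex (ModuleCat.{0} A) :=
  ShortComplex.mk (ModuleCat.ofHom u) (ModuleCat.ofHom v)
    (by ext x; exact h.exact.apply_apply_eq_zero x)

lemma IsSES.shortExact {u : M →ₗ[A] N} {v : N →ₗ[A] L} (h : IsSES u v) : h.sc.ShortExact where
  exact := (ShortComplex.ShortExact.moduleCat_exact_iff_function_exact _).2 h.exact
  mono_f := (ModuleCat.mono_iff_injective _).2 h.inj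
  epi_g := (ModuleCat.epi_iff_surjective _).2 h.surj

/-- connecting map -/
noncomputable def IsSES.delta {u : M →ₗ[A] N} {v : N →ₗ[A] L} (h : IsSES u v) (n : ℕ) :
    T P (n + 1) L →ₗ[A] T P n M :=
  ((cplx_shortExact P h.shortExact).δ (n + 1) n (by simp)).hom

lemma IsSES.exact₁ {u : M →ₗ[A] N} {v : N →ₗ[A] L} (h : IsSES u v) (n : ℕ) :
    Function.Exact (h.delta P n) (tmap P n u) :=
  (ShortComplex.ShortExact.moduleCat_exact_iff_function_exact _).1
    ((cplx_shortExact P h.shortExact).homology_exact₁ (n + 1) n (by simp))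

lemma IsSES.exact₂ {u : M →ₗ[A] N} {v : N →ₗ[A] L} (h : IsSES u v) (n : ℕ) :
    Function.Exact (tmap P n u) (tmap P n v) :=
  (ShortComplex.ShortExact.moduleCat_exact_iff_function_exact _).1
    ((cplx_shortExact P h.shortExact).homology_exact₂ n)

lemma IsSES.exact₃ {u : M →ₗ[A] N} {v : N →ₗ[A] L} (h : IsSES u v) (n : ℕ) :
    Function.Exact (tmap P (n + 1) v) (h.delta P n) :=
  (ShortComplex.ShortExact.moduleCat_exact_iff_function_exact _).1
    ((cplx_shortExact P h.shortExact).homology_exact₃ (n + 1) n (by simp))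

lemma IsSES.delta_nat {M' N' L' : Type} [AddCommGroup M'] [Module A M'] [AddCommGroup N']
    [Module A N'] [AddCommGroup L'] [Module A L'] {u : M →ₗ[A] N} {v : N →ₗ[A] L} (h : IsSES u v)
    {u' : M' →ₗ[A] N'} {v' : N' →ₗ[A] L'} (h' : IsSES u' v')
    (a : M →ₗ[A] M') (b : N →ₗ[A] N') (c : L →ₗ[A] L')
    (hab : u' ∘ₗ a = b ∘ₗ u) (hbc : v' ∘ₗ b = c ∘ₗ v) (n : ℕ) (x : T P (n + 1) L) :
    tmap P n a (h.delta P n x) = h'.delta P n (tmap P (n + 1) c x) := by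
  let φ : h.sc ⟶ h'.sc :=
    { τ₁ := ModuleCat.ofHom a
      τ₂ := ModuleCat.ofHom b
      τ₃ := ModuleCat.ofHom c
      comm₁₂ := ModuleCat.hom_ext hab
      comm₂₃ := ModuleCat.hom_ext hbc }
  have := HomologicalComplex.HomologySequence.δ_naturality ((cplx P).mapShortComplex.map φ)
    (cplx_shortExact P h.shortExact) (cplx_shortExact P h'.shortExact) (n + 1) n (by simp)
  exact congrArg (fun h => h.hom x) this

end wrappers
end interface
end EZD
namespace EZD
section koszul
variable {Q : Type} [CommRing Q] {E : Type} [AddCommGroup E] [Module Q E] (x : Module.Dual Q E)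

/-- The Koszul differential on the exterior algebra. -/
noncomputable def kD : ExteriorAlgebra Q E →ₗ[Q] ExteriorAlgebra Q E :=
  CliffordAlgebra.contractLeft (Q := (0 : QuadraticForm Q E)) x

open ExteriorAlgebra

lemma kD_ι_mul (a : E) (b : ExteriorAlgebra Q E) :
    kD x (ι Q a * b) = x a • b - ι Q a * kD x b :=
  CliffordAlgebra.contractLeft_ι_mul (Q := (0 : QuadraticForm Q E)) x a b

lemma kD_one : kD x (1 : ExteriorAlgebra Q E) = 0 :=
  CliffordAlgebra.contractLeft_one (Q := (0 : QuadraticForm Q E)) x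

lemma kD_kD (z : ExteriorAlgebra Q E) : kD x (kD x z) = 0 :=
  CliffordAlgebra.contractLeft_contractLeft (Q := (0 : QuadraticForm Q E)) x z

lemma kD_ι (a : E) : kD x (ι Q a) = algebraMap Q _ (x a) :=
  CliffordAlgebra.contractLeft_ι (Q := (0 : QuadraticForm Q E)) x a

lemma ι_swap (a b : E) : ι Q a * ι Q b = - (ι Q b * ι Q a) :=
  eq_neg_of_add_eq_zero_left (ι_add_mul_swap a b)

lemma commute_pair (a b : E) (z : ExteriorAlgebra Q E) :
    z * (ι Q a * ι Q b) = (ι Q a * ι Q b) * z := by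
  induction z using ExteriorAlgebra.induction with
  | algebraMap r => exact Algebra.commutes r _
  | ι c =>
    rw [← mul_assoc, ι_swap c a, neg_mul, mul_assoc, ι_swap c b, mul_neg, neg_neg, mul_assoc]
  | mul u v hu hv => rw [mul_assoc, hv, ← mul_assoc, hu, mul_assoc]
  | add u v hu hv => rw [add_mul, mul_add, hu, hv]

lemma kD_pair_mul (a b : E) (z : ExteriorAlgebra Q E) :
    kD x (ι Q a * ι Q b * z) = kD x (ι Q a * ι Q b) * z + (ι Q a * ι Q b) * kD x z := by
  rw [mul_assoc, kD_ι_mul, kD_ι_mul, kD_ι_mul, kD_ι, sub_mul, mul_sub, mul_assoc (ι Q a),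
    ← Algebra.smul_def, mul_assoc, smul_mul_assoc]
  abel

lemma kD_pair_mul_pair (a b : E) : kD x (ι Q a * ι Q b) * (ι Q a * ι Q b) = 0 := by
  rw [kD_ι_mul, kD_ι, ← Algebra.commutes, ← Algebra.smul_def, sub_mul, smul_mul_assoc,
    smul_mul_assoc, ι_swap a b, mul_neg, ← mul_assoc, ι_sq_zero, zero_mul, mul_neg, ι_swap b a,
    mul_neg, ← mul_assoc, ι_sq_zero]
  simp

lemma divpow (w : ExteriorAlgebra Q E)
    (hw : w ∈ AddSubmonoid.closure {p | ∃ a b : E, p = ι Q a * ι Q b}) :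
    ∃ y : ℕ → ExteriorAlgebra Q E, y 0 = 1 ∧ (∀ k, kD x (y (k + 1)) = kD x w * y k) ∧
      ∃ N, ∀ k, N ≤ k → y k = 0 := by
  induction hw using AddSubmonoid.closure_induction_left with
  | zero =>
    refine ⟨fun k => if k = 0 then 1 else 0, by simp, fun k => by simp, 1, fun k hk => ?_⟩
    simp; omega
  | add_left p hp w hw ih =>
    obtain ⟨a, b, rfl⟩ := hp
    obtain ⟨y, h0, h1, N, hN⟩ := ih
    refine ⟨fun k => y k + match k with | 0 => 0 | k + 1 => ι Q a * ι Q b * y k, by simp [h0],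
      ?_, N + 1, ?_⟩
    · intro k
      cases k with
      | zero =>
        simp only [map_add, h1, kD_pair_mul, h0, kD_one, mul_one, mul_zero, add_zero]
        abel
      | succ k =>
        simp only [map_add, h1, kD_pair_mul]
        have e1 : kD x w * (ι Q a * ι Q b * y k) = (ι Q a * ι Q b) * (kD x w * y k) := by
          rw [← mul_assoc, commute_pair, mul_assoc]
        have e2 : kD x (ι Q a * ι Q b) * (ι Q a * ι Q b * y k) = 0 := by
          rw [← mul_assoc, kD_pair_mul_pair, zero_mul]
        simp only [mul_add, add_mul, e1, e2]
        abel
    · intro k hk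
      obtain ⟨k, rfl⟩ : ∃ l, k = l + 1 := ⟨k - 1, by omega⟩
      simp [hN (k + 1) (by omega), hN k (by omega)]

lemma algebraMapInv_kD (I : Ideal Q) (hx : ∀ a, x a ∈ I) (z : ExteriorAlgebra Q E) :
    algebraMapInv (kD x z) ∈ I := by
  induction z using CliffordAlgebra.left_induction with
  | algebraMap r =>
    have : kD x (algebraMap Q (ExteriorAlgebra Q E) r) = 0 := by
      rw [Algebra.algebraMap_eq_smul_one, map_smul, kD_one, smul_zero]
    rw [this, map_zero]; exact I.zero_mem
  | add u v hu hv => rw [map_add, map_add]; exact I.add_mem hu hv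
  | ι_mul u a hu =>
    change algebraMapInv (kD x (ι Q a * u)) ∈ I
    rw [kD_ι_mul, map_sub, map_mul, map_smul]
    have : algebraMapInv (ι Q a) = 0 := by simp [algebraMapInv]
    rw [this, zero_mul, sub_zero, smul_eq_mul]
    exact I.mul_mem_right _ (hx a)

lemma ann_free {K : Type*} [AddCommGroup K] [Module Q K] {J : Type*} (b : Module.Basis J Q K)
    {f g : Q} (h : ∀ q : Q, q * f = 0 → q ∈ Ideal.span {g}) (v : K) (hv : f • v = 0) :
    ∃ u, v = g • u := by
  have h1 : ∀ i, ∃ c, b.repr v i = g * c := fun i => by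
    have : f * b.repr v i = 0 := by
      have := congrArg (fun t => b.repr t i) hv
      simpa using this
    have := h _ (by rw [mul_comm]; exact this)
    obtain ⟨c, hc⟩ := Ideal.mem_span_singleton'.1 this
    exact ⟨c, by rw [← hc, mul_comm]⟩
  choose c hc using h1
  refine ⟨∑ i ∈ (b.repr v).support, c i • b i, ?_⟩
  conv_lhs => rw [← b.linearCombination_repr v]
  rw [Finsupp.linearCombination_apply, Finsupp.sum, Finset.smul_sum]
  refine Finset.sum_congr rfl fun i _ => ?_
  rw [smul_smul, hc]

lemma koszul_main {r : ℕ} (x : Module.Dual Q (Fin r → Q)) (I : Ideal Q) (hI : I ≠ ⊤)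
    (hx : ∀ a, x a ∈ I) (f g : Q) (hg : g ∈ I)
    (hannf : ∀ x : Q, x * f = 0 → x ∈ Ideal.span {g})
    (hanng : ∀ x : Q, x * g = 0 → x ∈ Ideal.span {f})
    (ε : Fin r → Q) (hε : x ε = f) (w : ExteriorAlgebra Q (Fin r → Q))
    (hw : w ∈ AddSubmonoid.closure {p | ∃ a b : Fin r → Q, p = ι Q a * ι Q b})
    (hDw : kD x w = g • ι Q ε) : False := by
  obtain ⟨y, h0, h1, N, hN⟩ := divpow x w hw
  let B := (Pi.basisFun Q (Fin r)).ExteriorAlgebra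
  have hodd : ∀ k, kD x (ι Q ε * y k) = f • y k := by
    intro k
    rw [kD_ι_mul, hε]
    cases k with
    | zero => rw [h0, kD_one, mul_zero, sub_zero]
    | succ k => rw [h1, hDw, smul_mul_assoc, mul_smul_comm, ← mul_assoc, ι_sq_zero, zero_mul,
        smul_zero, sub_zero]
  have heven : ∀ k, kD x (y (k + 1)) = g • (ι Q ε * y k) := by
    intro k; rw [h1, hDw, smul_mul_assoc]
  have key : ∀ j k, N ≤ k + j → ∃ z z', y k = kD x z + g • z' := by
    intro j
    induction j with
    | zero => intro k hk; exact ⟨0, 0, by rw [hN k hk]; simp⟩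
    | succ j ih =>
      intro k hk
      obtain ⟨z, z', hz⟩ := ih (k + 1) (by omega)
      have e1 : g • (ι Q ε * y k - kD x z') = 0 := by
        rw [smul_sub, ← heven, hz, map_add, kD_kD, map_smul, zero_add, sub_self]
      obtain ⟨u, hu⟩ := ann_free B hanng _ e1
      have e2 : f • (y k - kD x u) = 0 := by
        have := hodd k
        rw [sub_eq_iff_eq_add.1 hu, map_add, map_smul, kD_kD, add_zero] at this
        rw [smul_sub, ← this, sub_self]
      obtain ⟨u', hu'⟩ := ann_free B hannf _ e2
      exact ⟨u, u', by rw [← hu']; abel⟩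
  obtain ⟨z, z', hz⟩ := key N 0 (by omega)
  rw [h0] at hz
  apply hI
  rw [Ideal.eq_top_iff_one]
  have := congrArg algebraMapInv hz
  rw [map_one, map_add, map_smul, smul_eq_mul] at this
  rw [this]
  exact I.add_mem (algebraMapInv_kD x I hx z) (I.mul_mem_right _ hg)

/-- `g • ε` is not in `m N`, where `N` is the kernel of `x`. -/
lemma koszul_not_mem {r : ℕ} (x : Module.Dual Q (Fin r → Q)) (I : Ideal Q) (hI : I ≠ ⊤)
    (hx : LinearMap.range x = I) (f g : Q) (hg : g ∈ I)
    (hannf : ∀ x : Q, x * f = 0 → x ∈ Ideal.span {g})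
    (hanng : ∀ x : Q, x * g = 0 → x ∈ Ideal.span {f})
    (ε : Fin r → Q) (hε : x ε = f) : g • ε ∉ I • LinearMap.ker x := by
  intro hmem
  have hx' : ∀ a, x a ∈ I := fun a => hx ▸ LinearMap.mem_range_self x a
  have : ∃ w ∈ AddSubmonoid.closure {p | ∃ a b : Fin r → Q, p = ι Q a * ι Q b},
      kD x w = ι Q (g • ε) := by
    refine Submodule.smul_induction_on hmem ?_ ?_
    · intro c hc n hn
      rw [← hx] at hc
      obtain ⟨a, rfl⟩ := hc
      refine ⟨ι Q a * ι Q n, AddSubmonoid.subset_closure ⟨a, n, rfl⟩, ?_⟩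
      rw [kD_ι_mul, kD_ι, LinearMap.mem_ker.1 hn, map_zero, mul_zero, sub_zero, map_smul]
    · rintro u v ⟨w, hw, h⟩ ⟨w', hw', h'⟩
      exact ⟨w + w', add_mem hw hw', by rw [map_add, map_add, h, h']⟩
  obtain ⟨w, hw, hD⟩ := this
  exact koszul_main x I hI hx' f g hg hannf hanng ε hε w hw (by rw [hD, map_smul])

end koszul
end EZD
namespace EZD
section loc
open IsLocalRing
variable {A : Type} [CommRing A] [IsLocalRing A]

lemma exists_functional {X : Type} [AddCommGroup X] [Module A X] (x : X)
    (hx : x ∉ maximalIdeal A • (⊤ : Submodule A X)) :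
    ∃ l : X →ₗ[A] ResidueField A, l x ≠ 0 := by
  let V := ResidueField A ⊗[A] X
  have hne : (1 : ResidueField A) ⊗ₜ[A] x ≠ 0 := by
    intro h
    apply hx
    have h2 := congrArg (TensorProduct.quotTensorEquivQuotSMul X (maximalIdeal A)) h
    replace h2 := h2.trans (map_zero _)
    have h3 : TensorProduct.quotTensorEquivQuotSMul X (maximalIdeal A)
      ((1 : ResidueField A) ⊗ₜ[A] x) = Submodule.Quotient.mk ((1 : A) • x) :=
      TensorProduct.quotTensorEquivQuotSMul_mk_tmul (maximalIdeal A) 1 x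
    replace h2 := h3.symm.trans h2
    rw [one_smul, Submodule.Quotient.mk_eq_zero] at h2
    exact h2
  obtain ⟨φ, hφ⟩ : ∃ φ : Module.Dual (ResidueField A) V, φ ((1 : ResidueField A) ⊗ₜ[A] x) ≠ 0 := by
    by_contra! hc
    exact hne ((Module.forall_dual_apply_eq_zero_iff (ResidueField A) _).1 hc)
  exact ⟨(φ.restrictScalars A) ∘ₗ (TensorProduct.mk A (ResidueField A) X 1), hφ⟩

lemma smul_res (a : A) (ha : a ∈ maximalIdeal A) (c : ResidueField A) : a • c = 0 := by
  rw [Algebra.smul_def]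
  have : algebraMap A (ResidueField A) a = 0 := (residue_eq_zero_iff a).2 ha
  rw [this, zero_mul]

lemma length_res : Module.length A (ResidueField A) = 1 := by
  rw [Module.length_eq_of_surjective (S := A) (R := ResidueField A) (M := ResidueField A)
    residue_surjective]
  exact Module.length_eq_one _ _

lemma finrank_tensor {Y : Type} [AddCommGroup Y] [Module A Y]
    (h : ∀ a ∈ maximalIdeal A, ∀ y : Y, a • y = 0) :
    Module.finrank (ResidueField A) (ResidueField A ⊗[A] Y) = (Module.length A Y).toNat := by
  have h1 : (maximalIdeal A • (⊤ : Submodule A Y)) = ⊥ := by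
    rw [eq_bot_iff, Submodule.smul_le]
    intro a ha y _
    rw [h a ha y]; exact Submodule.zero_mem _
  have e : (ResidueField A ⊗[A] Y) ≃ₗ[A] Y :=
    (TensorProduct.quotTensorEquivQuotSMul Y (maximalIdeal A)).trans
      (Submodule.quotEquivOfEqBot _ h1)
  rw [← e.length_eq, Module.length_eq_of_surjective (S := A) (R := ResidueField A)
    (M := ResidueField A ⊗[A] Y) residue_surjective, Module.length_eq_rank, Module.finrank,
    Cardinal.toNat_toENat]

variable (P : ProjectiveResolution (ModuleCat.of A (ResidueField A)))
variable {M N L : Type} [AddCommGroup M] [Module A M] [AddCommGroup N] [Module A N]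
  [AddCommGroup L] [Module A L]

lemma isSES_ker (v : N →ₗ[A] L) (hv : Function.Surjective v) :
    IsSES (LinearMap.ker v).subtype v :=
  IsSES.mk (Submodule.injective_subtype _) (LinearMap.exact_subtype_ker_map v) hv

lemma T_kill (n : ℕ) : ∀ (M : Type) [AddCommGroup M] [Module A M] (a : A) (_ : a ∈ maximalIdeal A)
    (t : T P n M), a • t = 0 := by
  induction n with
  | zero =>
    intro M _ _ a ha t
    apply (T0equiv P M).injective
    rw [map_smul, map_zero]
    generalize T0equiv P M t = s
    induction s using TensorProduct.induction_on with
    | zero => rw [smul_zero]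
    | add u v hu hv => rw [smul_add, hu, hv, add_zero]
    | tmul u c =>
      rw [← TensorProduct.tmul_smul]
      have : a • c = 0 := smul_res a ha c
      rw [this, TensorProduct.tmul_zero]
  | succ n ih =>
    intro M _ _ a ha t
    let v : (M →₀ A) →ₗ[A] M := Finsupp.linearCombination A id
    have hS := isSES_ker v (Finsupp.linearCombination_surjective A Function.surjective_id)
    have hsub : Subsingleton (T P (n + 1) (M →₀ A)) := T_subsingleton P n
    have hinj : Function.Injective (hS.delta P n) := by
      rw [injective_iff_map_eq_zero]
      intro y hy
      obtain ⟨z, rfl⟩ := (hS.exact₃ P n y).1 hy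
      rw [Subsingleton.elim z 0, map_zero]
    apply hinj
    rw [map_smul, map_zero]
    exact ih _ a ha _

lemma betti_eq (n : ℕ) : bettiNumber A M n = (Module.length A (T P n M)).toNat := by
  unfold bettiNumber
  have e : ((Tor (ModuleCat.{0} A) n).obj (ModuleCat.of A M)).obj
      (ModuleCat.of A (ResidueField A)) ≃ₗ[A] T P n M :=
    (torIso P n (ModuleCat.of A M)).toLinearEquiv
  rw [finrank_tensor, e.length_eq]
  intro a ha y
  apply e.injective
  rw [map_smul, map_zero]
  exact T_kill P n M a ha _

/-- pairing `M ⊗ k → k` -/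
noncomputable def mu (l : M →ₗ[A] ResidueField A) : M ⊗[A] (ResidueField A) →ₗ[A] ResidueField A :=
  TensorProduct.lift ((LinearMap.mul A (ResidueField A)) ∘ₗ l)

lemma mu_tmul (l : M →ₗ[A] ResidueField A) (y : M) (c : ResidueField A) :
    mu l (y ⊗ₜ c) = l y * c := by simp [mu]

lemma cyclic_tensor (m0 : M) (hm0 : ∀ y : M, ∃ a : A, y = a • m0)
    (s : M ⊗[A] (ResidueField A)) : ∃ c, s = m0 ⊗ₜ[A] c := by
  induction s using TensorProduct.induction_on with
  | zero => exact ⟨0, by simp⟩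
  | add u v hu hv =>
    obtain ⟨c, rfl⟩ := hu
    obtain ⟨d, rfl⟩ := hv
    exact ⟨c + d, by rw [TensorProduct.tmul_add]⟩
  | tmul y c =>
    obtain ⟨a, rfl⟩ := hm0 y
    exact ⟨a • c, by rw [TensorProduct.smul_tmul]⟩

lemma T0_inj (φ : M →ₗ[A] N) (m0 : M) (hm0 : ∀ y : M, ∃ a : A, y = a • m0)
    (l : N →ₗ[A] ResidueField A) (hl : l (φ m0) ≠ 0) : Function.Injective (tmap P 0 φ) := by
  rw [injective_iff_map_eq_zero]
  intro t ht
  have h1 := T0equiv_nat P φ t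
  rw [ht, map_zero] at h1
  apply (T0equiv P M).injective
  rw [map_zero]
  obtain ⟨c, hc⟩ := cyclic_tensor m0 hm0 (T0equiv P M t)
  rw [hc] at h1 ⊢
  have h2 : mu l (φ m0 ⊗ₜ c) = 0 := by
    have h3 : φ m0 ⊗ₜ[A] c = 0 := h1.symm
    rw [h3, map_zero]
  rw [mu_tmul] at h2
  have : c = 0 := (mul_eq_zero.1 h2).resolve_left hl
  rw [this, TensorProduct.tmul_zero]

lemma T0_length (m0 : M) (hm0 : ∀ y : M, ∃ a : A, y = a • m0)
    (l : M →ₗ[A] ResidueField A) (hl : l m0 ≠ 0) : Module.length A (T P 0 M) = 1 := by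
  have e : (M ⊗[A] (ResidueField A)) ≃ₗ[A] ResidueField A := by
    refine LinearEquiv.ofBijective (mu l) ⟨?_, ?_⟩
    · rw [injective_iff_map_eq_zero]
      intro s hs
      obtain ⟨c, rfl⟩ := cyclic_tensor m0 hm0 s
      rw [mu_tmul] at hs
      rw [(mul_eq_zero.1 hs).resolve_left hl, TensorProduct.tmul_zero]
    · intro c
      exact ⟨m0 ⊗ₜ ((l m0)⁻¹ * c), by rw [mu_tmul, mul_inv_cancel_left₀ hl]⟩
  exact (((T0equiv P M).trans e).length_eq).trans length_res

lemma T0_zero (φ : M →ₗ[A] N) (hφ : ∀ y, φ y ∈ maximalIdeal A • (⊤ : Submodule A N)) :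
    tmap P 0 φ = 0 := by
  ext t
  apply (T0equiv P N).injective
  rw [T0equiv_nat]
  simp only [LinearMap.zero_apply, map_zero]
  generalize T0equiv P M t = s
  have key : ∀ (n : N), n ∈ maximalIdeal A • (⊤ : Submodule A N) → ∀ c : ResidueField A,
      n ⊗ₜ[A] c = 0 := by
    intro n hn c
    refine Submodule.smul_induction_on hn ?_ ?_
    · intro a ha n _
      rw [TensorProduct.smul_tmul, smul_res a ha, TensorProduct.tmul_zero]
    · intro u v hu hv
      rw [TensorProduct.add_tmul, hu, hv, add_zero]
  induction s using TensorProduct.induction_on with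
  | zero => rw [map_zero]
  | add u v hu hv => rw [map_add, hu, hv, add_zero]
  | tmul y c => exact key _ (hφ y) c

lemma T0_surj (φ : M →ₗ[A] N) (hφ : Function.Surjective φ) :
    Function.Surjective (tmap P 0 φ) := by
  intro t
  obtain ⟨s, hs⟩ := LinearMap.rTensor_surjective (ResidueField A) hφ (T0equiv P N t)
  refine ⟨(T0equiv P M).symm s, (T0equiv P N).injective ?_⟩
  rw [T0equiv_nat, LinearEquiv.apply_symm_apply]
  exact hs

/-- additivity -/
noncomputable def piEquiv (b n : ℕ) : T P n (Fin b → M) ≃ₗ[A] (Fin b → T P n M) where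
  toFun t j := tmap P n (LinearMap.proj j) t
  map_add' s t := by ext j; simp
  map_smul' s t := by ext j; simp
  invFun y := ∑ j, tmap P n (LinearMap.single A (fun _ => M) j) (y j)
  left_inv t := by
    have h1 : (∑ j, (LinearMap.single A (fun _ : Fin b => M) j) ∘ₗ (LinearMap.proj j)) =
        (LinearMap.id : (Fin b → M) →ₗ[A] _) := by
      ext j y k
      simp [Pi.single_apply]
    have h2 := congrArg (fun φ => tmap P n φ t) h1
    simp only [tmap_sum, tmap_id, LinearMap.sum_apply, tmap_comp] at h2
    exact h2
  right_inv y := by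
    funext k
    simp only [map_sum]
    rw [Finset.sum_eq_single k]
    · rw [← tmap_comp]
      have : (LinearMap.proj k ∘ₗ LinearMap.single A (fun _ : Fin b => M) k) = LinearMap.id := by
        ext; simp
      rw [this, tmap_id]
    · intro j _ hj
      rw [← tmap_comp]
      have : (LinearMap.proj k ∘ₗ LinearMap.single A (fun _ : Fin b => M) j) = 0 := by
        ext; simp [hj.symm]
      rw [this, tmap_zero, LinearMap.zero_apply]
    · simp

lemma length_pi (b n : ℕ) : Module.length A (T P n (Fin b → M)) = b * Module.length A (T P n M) := by
  rw [(piEquiv P b n).length_eq, Module.length_pi]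
  simp

lemma cover_inj {b : ℕ} {R0 : Type} [AddCommGroup R0] [Module A R0]
    (π : R0 →ₗ[A] ResidueField A) (hπ : ∀ n, Function.Injective (tmap P n π))
    (u : N →ₗ[A] (Fin b → R0)) (v : (Fin b → R0) →ₗ[A] M) (h : IsSES u v)
    (hu : ∀ y j, π (u y j) = 0) (n : ℕ) : Function.Injective (tmap P n v) := by
  let PP : (Fin b → R0) →ₗ[A] (Fin b → ResidueField A) := LinearMap.pi fun j => π ∘ₗ LinearMap.proj j
  have hker : LinearMap.ker v ≤ LinearMap.ker PP := by
    intro z hz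
    obtain ⟨y, rfl⟩ := (h.exact z).1 hz
    rw [LinearMap.mem_ker]
    ext j
    exact hu y j
  let e := v.quotKerEquivOfSurjective h.surj
  let σ : M →ₗ[A] (Fin b → ResidueField A) := ((LinearMap.ker v).liftQ PP hker) ∘ₗ e.symm.toLinearMap
  have hσ : σ ∘ₗ v = PP := by
    refine LinearMap.ext fun z => ?_
    have : e.symm (v z) = Submodule.Quotient.mk z := by
      rw [LinearEquiv.symm_apply_eq]; rfl
    simp only [σ, LinearMap.comp_apply, LinearEquiv.coe_coe, this]
    rfl
  have hPP : Function.Injective (tmap P n PP) := by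
    rw [injective_iff_map_eq_zero]
    intro t ht
    apply (piEquiv P b n).injective
    rw [map_zero]
    funext j
    apply hπ n
    change tmap P n π (tmap P n (LinearMap.proj j) t) = tmap P n π 0
    rw [map_zero, ← tmap_comp]
    have : π ∘ₗ LinearMap.proj j = LinearMap.proj j ∘ₗ PP := rfl
    rw [this, tmap_comp, ht, map_zero]
  intro s t hst
  apply hPP
  have h1 := tmap_comp P n v σ s
  have h2 := tmap_comp P n v σ t
  rw [hσ] at h1 h2
  rw [h1, h2, hst]

lemma cover_length_succ {b : ℕ} {R0 : Type} [AddCommGroup R0] [Module A R0]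
    (π : R0 →ₗ[A] ResidueField A) (hπ : ∀ n, Function.Injective (tmap P n π))
    (u : N →ₗ[A] (Fin b → R0)) (v : (Fin b → R0) →ₗ[A] M) (h : IsSES u v)
    (hu : ∀ y j, π (u y j) = 0) (n : ℕ) :
    Module.length A (T P (n + 1) M) =
      b * Module.length A (T P (n + 1) R0) + Module.length A (T P n N) := by
  rw [← length_pi]
  refine Module.length_eq_add_of_exact (tmap P (n + 1) v) (h.delta P n)
    (cover_inj P π hπ u v h hu _) ?_ (h.exact₃ P n)
  intro t
  refine (h.exact₁ P n t).1 ?_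
  apply cover_inj P π hπ u v h hu n
  rw [map_zero]
  exact (h.exact₂ P n _).2 ⟨t, rfl⟩

lemma cover_length_zero {b : ℕ} {R0 : Type} [AddCommGroup R0] [Module A R0]
    (π : R0 →ₗ[A] ResidueField A) (hπ : ∀ n, Function.Injective (tmap P n π))
    (u : N →ₗ[A] (Fin b → R0)) (v : (Fin b → R0) →ₗ[A] M) (h : IsSES u v)
    (hu : ∀ y j, π (u y j) = 0) :
    Module.length A (T P 0 M) = b * Module.length A (T P 0 R0) := by
  rw [← length_pi]
  exact (LinearEquiv.ofBijective (tmap P 0 v)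
    ⟨cover_inj P π hπ u v h hu 0, T0_surj P v h.surj⟩).length_eq.symm

end loc
end EZD
namespace EZD
section core
open IsLocalRing
variable {Q : Type} [CommRing Q] [IsLocalRing Q]
  (P : ProjectiveResolution (ModuleCat.of Q (ResidueField Q)))

section gen
variable {M N L : Type} [AddCommGroup M] [Module Q M] [AddCommGroup N] [Module Q N]
  [AddCommGroup L] [Module Q L]

lemma delta_inj {u : M →ₗ[Q] N} {v : N →ₗ[Q] L} (h : IsSES u v) (n : ℕ)
    (hs : Subsingleton (T P (n + 1) N)) : Function.Injective (h.delta P n) := by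
  rw [injective_iff_map_eq_zero]
  intro y hy
  obtain ⟨z, rfl⟩ := (h.exact₃ P n y).1 hy
  rw [Subsingleton.elim z 0, map_zero]

lemma delta_surj {u : M →ₗ[Q] N} {v : N →ₗ[Q] L} (h : IsSES u v) (n : ℕ)
    (hs : tmap P n u = 0) : Function.Surjective (h.delta P n) := by
  intro y
  exact (h.exact₁ P n y).1 (by rw [hs, LinearMap.zero_apply])

lemma delta_length {u : M →ₗ[Q] N} {v : N →ₗ[Q] L} (h : IsSES u v) (n : ℕ)
    (hs : Subsingleton (T P (n + 1) N)) (hs' : tmap P n u = 0) :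
    Module.length Q (T P (n + 1) L) = Module.length Q (T P n M) :=
  (LinearEquiv.ofBijective (h.delta P n) ⟨delta_inj P h n hs, delta_surj P h n hs'⟩).length_eq

lemma tmap_succ_zero [Module.Flat Q N] (n : ℕ) (u : M →ₗ[Q] N) : tmap P (n + 1) u = 0 := by
  have := T_subsingleton P n (M := N)
  exact LinearMap.ext fun x => Subsingleton.elim _ _

end gen

variable (f g : Q)

/-- the projection `R → k` -/
noncomputable def piR (hfm : f ∈ maximalIdeal Q) : (Q ⧸ Ideal.span {f}) →ₗ[Q] ResidueField Q :=
  Submodule.liftQ (Ideal.span {f}) (Algebra.linearMap Q (ResidueField Q)) (by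
    rw [Ideal.span, Submodule.span_le]
    rintro _ rfl
    exact (residue_eq_zero_iff _).2 hfm)

lemma piR_mk (hfm : f ∈ maximalIdeal Q) (q : Q) :
    piR f hfm (Ideal.Quotient.mk _ q) = residue Q q := rfl

lemma sesA : IsSES (Submodule.subtype (Ideal.span {f})) (Submodule.mkQ (Ideal.span {f})) :=
  IsSES.mk (Submodule.injective_subtype _) (LinearMap.exact_subtype_mkQ _)
    (Submodule.mkQ_surjective _)

/-- multiplication by `g` on `R` -/
noncomputable def mulg {N : Type} [AddCommGroup N] [Module Q N] (n0 : N) (h : f • n0 = 0) :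
    (Q ⧸ Ideal.span {f}) →ₗ[Q] N :=
  Submodule.liftQ (Ideal.span {f}) (LinearMap.toSpanSingleton Q N n0) (by
    rw [Ideal.span, Submodule.span_le]
    rintro _ rfl
    exact h)

lemma mulg_mk {N : Type} [AddCommGroup N] [Module Q N] (n0 : N) (h : f • n0 = 0) (q : Q) :
    mulg f n0 h (Submodule.Quotient.mk q) = q • n0 := rfl

lemma sesB (hfg : f • g = 0)
    (hannf : ∀ x : Q, x * f = 0 ↔ x ∈ Ideal.span {g})
    (hanng : ∀ x : Q, x * g = 0 ↔ x ∈ Ideal.span {f}) :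
    IsSES (mulg f g hfg) (LinearMap.toSpanSingleton Q (Ideal.span {f})
      ⟨f, Ideal.mem_span_singleton_self f⟩) := by
  refine IsSES.mk ?_ ?_ ?_
  · rw [injective_iff_map_eq_zero]
    intro x
    obtain ⟨q, rfl⟩ := Submodule.Quotient.mk_surjective _ x
    intro h
    rw [mulg_mk] at h
    exact (Submodule.Quotient.mk_eq_zero _).2 ((hanng q).1 h)
  · intro q
    constructor
    · intro h
      have h1 : q * f = 0 := congrArg Subtype.val h
      obtain ⟨a, rfl⟩ := Ideal.mem_span_singleton'.1 ((hannf q).1 h1)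
      exact ⟨Submodule.Quotient.mk a, rfl⟩
    · rintro ⟨x, rfl⟩
      obtain ⟨a, rfl⟩ := Submodule.Quotient.mk_surjective _ x
      rw [mulg_mk]
      apply Subtype.ext
      change (a * g) * f = 0
      rw [mul_assoc, mul_comm g f]
      change a * (f • g) = 0
      rw [hfg, mul_zero]
  · rintro ⟨y, hy⟩
    obtain ⟨a, rfl⟩ := Ideal.mem_span_singleton'.1 hy
    exact ⟨a, rfl⟩

lemma exists_l (hfm : f ∈ maximalIdeal Q) (hfm2 : f ∉ (maximalIdeal Q) ^ 2) :
    ∃ l : maximalIdeal Q →ₗ[Q] ResidueField Q, l ⟨f, hfm⟩ ≠ 0 := by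
  apply exists_functional
  intro h
  apply hfm2
  have := Submodule.mem_map_of_mem (f := (maximalIdeal Q).subtype) h
  rw [Submodule.map_smul'', Submodule.map_top, Submodule.range_subtype] at this
  rw [pow_two]
  exact this

lemma span_le (hfm : f ∈ maximalIdeal Q) : Ideal.span {f} ≤ maximalIdeal Q := by
  rw [Ideal.span_le]; rintro _ rfl; exact hfm

lemma R_cyclic (y : Q ⧸ Ideal.span {f}) : ∃ a : Q, y = a • (1 : Q ⧸ Ideal.span {f}) := by
  obtain ⟨a, rfl⟩ := Ideal.Quotient.mk_surjective y
  refine ⟨a, ?_⟩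
  rw [Algebra.smul_def, mul_one]; rfl

lemma I_cyclic (y : Ideal.span {f}) :
    ∃ a : Q, y = a • (⟨f, Ideal.mem_span_singleton_self f⟩ : Ideal.span {f}) := by
  obtain ⟨y, hy⟩ := y
  obtain ⟨a, rfl⟩ := Ideal.mem_span_singleton'.1 hy
  exact ⟨a, rfl⟩

lemma piR_one (hfm : f ∈ maximalIdeal Q) : piR f hfm 1 = 1 := by
  exact (piR_mk f hfm 1).trans (map_one (residue Q))

theorem inj_pi [IsNoetherianRing Q] (hfm : f ∈ maximalIdeal Q) (hgm : g ∈ maximalIdeal Q)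
    (hfm2 : f ∉ (maximalIdeal Q) ^ 2)
    (hannf : ∀ x : Q, x * f = 0 ↔ x ∈ Ideal.span {g})
    (hanng : ∀ x : Q, x * g = 0 ↔ x ∈ Ideal.span {f}) (n : ℕ) :
    Function.Injective (tmap P n (piR f hfm)) := by
  have hfg : f • g = 0 := (hanng f).2 (Ideal.mem_span_singleton_self f)
  let incl : Ideal.span {f} →ₗ[Q] maximalIdeal Q := Submodule.inclusion (span_le f hfm)
  have hC : IsSES (Submodule.subtype (maximalIdeal Q)) (Submodule.mkQ (maximalIdeal Q)) :=
    IsSES.mk (Submodule.injective_subtype _) (LinearMap.exact_subtype_mkQ _)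
      (Submodule.mkQ_surjective _)
  have hA := sesA f
  have hB := sesB f g hfg hannf hanng
  have natA : ∀ n x, tmap P (n + 1) (piR f hfm) x = 0 → tmap P n incl (hA.delta P n x) = 0 :=
    fun n x hx => (IsSES.delta_nat P hA hC incl LinearMap.id (piR f hfm) rfl
      (LinearMap.ext_ring rfl) n x).trans
        ((congrArg (hC.delta P n) hx).trans (map_zero (hC.delta P n)))
  induction n using Nat.twoStepInduction with
  | zero =>
    refine T0_inj P _ 1 (R_cyclic f) LinearMap.id ?_
    rw [LinearMap.id_apply, piR_one]
    exact one_ne_zero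
  | one =>
    obtain ⟨l, hl⟩ := exists_l f hfm hfm2
    have h0 : Function.Injective (tmap P 0 incl) := T0_inj P incl _ (I_cyclic f) l hl
    rw [injective_iff_map_eq_zero]
    intro x hx
    apply delta_inj P hA 0 (T_subsingleton P 0)
    apply h0
    rw [natA 0 x hx, map_zero, map_zero]
  | more n ih _ =>
    obtain ⟨r, p, hp⟩ := Module.Finite.exists_fin' Q (maximalIdeal Q)
    have hD := isSES_ker p hp
    obtain ⟨ε, hε⟩ := hp ⟨f, hfm⟩
    have hN : g • ε ∈ LinearMap.ker p := by
      rw [LinearMap.mem_ker, map_smul, hε]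
      apply Subtype.ext
      change g * f = 0
      rw [mul_comm]; exact hfg
    have hker : LinearMap.ker ((maximalIdeal Q).subtype ∘ₗ p) = LinearMap.ker p :=
      LinearMap.ker_comp_of_ker_eq_bot _ (Submodule.ker_subtype _)
    have hkz := koszul_not_mem ((maximalIdeal Q).subtype ∘ₗ p) (maximalIdeal Q)
      (Ideal.IsPrime.ne_top inferInstance)
      (by rw [LinearMap.range_comp, LinearMap.range_eq_top.2 hp, Submodule.map_top,
        Submodule.range_subtype]) f g hgm (fun x => (hannf x).1) (fun x => (hanng x).1) ε
      (by rw [LinearMap.comp_apply, hε]; rfl)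
    rw [hker] at hkz
    obtain ⟨l, hl⟩ := exists_functional (⟨g • ε, hN⟩ : LinearMap.ker p) (by
      intro h
      apply hkz
      have := Submodule.mem_map_of_mem (f := (LinearMap.ker p).subtype) h
      rw [Submodule.map_smul'', Submodule.map_top, Submodule.range_subtype] at this
      exact this)
    let ρ : (Q ⧸ Ideal.span {f}) →ₗ[Q] LinearMap.ker p := mulg f ⟨g • ε, hN⟩ (by
      apply Subtype.ext
      change f • (g • ε) = 0
      rw [← smul_assoc, hfg, zero_smul])
    have natB : ∀ n x, tmap P n ρ (hB.delta P n x) = hD.delta P n (tmap P (n + 1) incl x) :=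
      fun n x => IsSES.delta_nat P hB hD ρ (LinearMap.toSpanSingleton Q _ ε) incl
        (by
          refine LinearMap.ext fun y => ?_
          obtain ⟨q, rfl⟩ := Submodule.Quotient.mk_surjective _ y
          change q • (g • ε) = (q • g) • ε
          rw [smul_assoc])
        (by
          refine LinearMap.ext_ring ?_
          change p ((1 : Q) • ε) = incl ((1 : Q) • _)
          rw [one_smul, one_smul, hε]; rfl) n x
    let γ : ResidueField Q →ₗ[Q] ResidueField Q := LinearMap.mulLeft Q (l ⟨g • ε, hN⟩)⁻¹
    have hγ : γ ∘ₗ l ∘ₗ ρ = piR f hfm := by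
      refine LinearMap.ext fun y => ?_
      obtain ⟨q, rfl⟩ := Submodule.Quotient.mk_surjective _ y
      change (l ⟨g • ε, hN⟩)⁻¹ * l (q • ⟨g • ε, hN⟩) = residue Q q
      rw [map_smul, mul_smul_comm, inv_mul_cancel₀ hl, Algebra.smul_def, mul_one]
      rfl
    rw [injective_iff_map_eq_zero]
    intro x hx
    apply delta_inj P hA (n + 1) (T_subsingleton P (n + 1))
    apply delta_inj P hB n (T_subsingleton P n)
    apply ih
    rw [map_zero, map_zero, map_zero, ← hγ, tmap_comp, tmap_comp, natB, natA (n + 1) x hx,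
      map_zero, map_zero, map_zero]

theorem length_R (hfm : f ∈ maximalIdeal Q) (hgm : g ∈ maximalIdeal Q)
    (hfm2 : f ∉ (maximalIdeal Q) ^ 2)
    (hannf : ∀ x : Q, x * f = 0 ↔ x ∈ Ideal.span {g})
    (hanng : ∀ x : Q, x * g = 0 ↔ x ∈ Ideal.span {f}) (n : ℕ) :
    Module.length Q (T P n (Q ⧸ Ideal.span {f})) = 1 := by
  have hfg : f • g = 0 := (hanng f).2 (Ideal.mem_span_singleton_self f)
  have hA := sesA f
  have hB := sesB f g hfg hannf hanng
  have mtop : maximalIdeal Q • (⊤ : Submodule Q Q) = maximalIdeal Q := Ideal.mul_top _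
  induction n using Nat.twoStepInduction with
  | zero =>
    refine T0_length P 1 (R_cyclic f) (piR f hfm) ?_
    rw [piR_one]; exact one_ne_zero
  | one =>
    have h1 := delta_length P hA 0 (T_subsingleton P 0) (T0_zero P _ (by
      intro y
      rw [mtop]
      exact span_le f hfm y.2))
    obtain ⟨l, hl⟩ := exists_l f hfm hfm2
    exact h1.trans (T0_length P _ (I_cyclic f) (l ∘ₗ Submodule.inclusion (span_le f hfm)) hl)
  | more n ih _ =>
    have h1 := delta_length P hA (n + 1) (T_subsingleton P (n + 1)) (tmap_succ_zero P n _)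
    have h2 := delta_length P hB n (T_subsingleton P n) (by
      cases n with
      | succ n => exact tmap_succ_zero P n _
      | zero =>
        refine T0_zero P _ ?_
        intro y
        obtain ⟨q, rfl⟩ := Submodule.Quotient.mk_surjective _ y
        rw [mtop, mulg_mk]
        exact Ideal.mul_mem_left _ _ hgm)
    exact h1.trans (h2.trans ih)

end core
end EZD
namespace EZD
section final
open IsLocalRing

lemma exists_cover {R : Type} [CommRing R] [IsLocalRing R] (M : Type) [AddCommGroup M]
    [Module R M] [Module.Finite R M] :
    ∃ (b : ℕ) (v : (Fin b → R) →ₗ[R] M), Function.Surjective v ∧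
      ∀ z ∈ LinearMap.ker v, ∀ j, z j ∈ maximalIdeal R := by
  let w := Module.finBasis (ResidueField R) (ResidueField R ⊗[R] M)
  obtain ⟨e, he⟩ := (TensorProduct.mk_surjective R M (ResidueField R)
    Ideal.Quotient.mk_surjective).comp_left w
  have he' : ∀ j, (1 : ResidueField R) ⊗ₜ[R] e j = w j := fun j => congrFun he j
  have hs := IsLocalRing.span_eq_top_of_tmul_eq_basis e w he'
  refine ⟨_, Fintype.linearCombination R e, ?_, ?_⟩
  · rw [← LinearMap.range_eq_top, Fintype.range_linearCombination, hs]
  · intro z hz j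
    rw [LinearMap.mem_ker, Fintype.linearCombination_apply] at hz
    have h1 : ∑ i, (residue R (z i)) • w i = 0 := by
      have h2 := congrArg (TensorProduct.mk R (ResidueField R) M 1) hz
      rw [map_sum, map_zero] at h2
      rw [← h2]
      refine Finset.sum_congr rfl fun i _ => ?_
      rw [map_smul, TensorProduct.mk_apply, he']
      exact algebraMap_smul (ResidueField R) (z i) (w i)
    exact (residue_eq_zero_iff _).1 (Fintype.linearIndependent_iff.1 w.linearIndependent _ h1 j)

section Rside
variable {R : Type} [CommRing R] [IsLocalRing R]
  (P : ProjectiveResolution (ModuleCat.of R (ResidueField R)))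

lemma R_inj (n : ℕ) :
    Function.Injective (tmap P n (Algebra.linearMap R (ResidueField R))) := by
  cases n with
  | zero =>
    refine T0_inj P _ 1 (fun y => ⟨y, by simp⟩) LinearMap.id ?_
    simp
  | succ n =>
    have := T_subsingleton P n (M := R)
    intro x y _
    exact Subsingleton.elim _ _

lemma R_len0 : Module.length R (T P 0 R) = 1 :=
  T0_length P 1 (fun y => ⟨y, by simp⟩) (Algebra.linearMap R (ResidueField R)) (by simp)

lemma R_len1 (n : ℕ) : Module.length R (T P (n + 1) R) = 0 := by
  have := T_subsingleton P n (M := R)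
  exact Module.length_eq_zero

end Rside

theorem main_aux {Q R : Type} [CommRing Q] [IsLocalRing Q] [CommRing R] [IsLocalRing R]
    [IsNoetherianRing R] [Algebra Q R]
    (P : ProjectiveResolution (ModuleCat.of Q (ResidueField Q)))
    (P' : ProjectiveResolution (ModuleCat.of R (ResidueField R)))
    (π : R →ₗ[Q] ResidueField Q) (hπ : ∀ n, Function.Injective (tmap P n π))
    (hlen : ∀ n, Module.length Q (T P n R) = 1)
    (hm : ∀ r ∈ maximalIdeal R, π r = 0) (i : ℕ) :
    ∀ (M : Type) [AddCommGroup M] [Module Q M] [Module R M] [IsScalarTower Q R M]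
      [Module.Finite R M],
      Module.length Q (T P i M) = ∑ j ∈ Finset.range (i + 1), Module.length R (T P' j M) ∧
      Module.length R (T P' i M) ≠ ⊤ := by
  induction i with
  | zero =>
    intro M _ _ _ _ _
    obtain ⟨b, v, hv, hk⟩ := exists_cover (R := R) M
    have hS := isSES_ker v hv
    have hS' : IsSES ((LinearMap.ker v).subtype.restrictScalars Q) (v.restrictScalars Q) :=
      IsSES.mk hS.inj hS.exact hS.surj
    have h1 := cover_length_zero P π hπ _ _ hS' (fun y j => hm _ (hk _ y.2 j))
    have h2 := cover_length_zero P' _ (R_inj P') _ _ hS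
      (fun y j => (residue_eq_zero_iff _).2 (hk _ y.2 j))
    rw [hlen] at h1
    rw [R_len0] at h2
    rw [Finset.sum_range_one, h1, h2]
    refine ⟨rfl, ?_⟩
    rw [mul_one]
    exact ENat.coe_ne_top b
  | succ i ih =>
    intro M _ _ _ _ _
    obtain ⟨b, v, hv, hk⟩ := exists_cover (R := R) M
    have hS := isSES_ker v hv
    have hS' : IsSES ((LinearMap.ker v).subtype.restrictScalars Q) (v.restrictScalars Q) :=
      IsSES.mk hS.inj hS.exact hS.surj
    have h1 := cover_length_succ P π hπ _ _ hS' (fun y j => hm _ (hk _ y.2 j)) i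
    have h2 := fun n => cover_length_succ P' _ (R_inj P') _ _ hS
      (fun y j => (residue_eq_zero_iff _).2 (hk _ y.2 j)) n
    have h3 := cover_length_zero P' _ (R_inj P') _ _ hS
      (fun y j => (residue_eq_zero_iff _).2 (hk _ y.2 j))
    rw [R_len0] at h3
    simp only [R_len1, mul_zero, zero_add] at h2
    obtain ⟨h4, h5⟩ := ih (LinearMap.ker v)
    rw [hlen] at h1
    refine ⟨?_, ?_⟩
    · rw [Finset.sum_range_succ', h3, h1, h4, add_comm]
      congr 1
      exact Finset.sum_congr rfl fun j _ => (h2 j).symm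
    · rw [h2]; exact h5

end final
end EZD

/-- Let `f, g` be an exact pair of zerodivisors in the maximal ideal `m` of a
Noetherian local ring `Q` with `f ∉ m²`, and set `R = Q/(f)`. Then for every
finitely generated `R`-module `M` and all `i ≥ 0`,
`β_i^Q(M) = ∑_{j=0}^{i} β_j^R(M)`, i.e. `P_M^Q(t) = P_M^R(t)/(1−t)`. -/
theorem betti_base_eq_sum_of_exact_zerodivisor_not_mem_sq
    (Q : Type) [CommRing Q] [IsNoetherianRing Q] [IsLocalRing Q]
    (f g : Q) (hf0 : f ≠ 0) (hg0 : g ≠ 0)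
    (hfm : f ∈ IsLocalRing.maximalIdeal Q) (hgm : g ∈ IsLocalRing.maximalIdeal Q)
    (hfm2 : f ∉ (IsLocalRing.maximalIdeal Q) ^ 2)
    (hannf : ∀ x : Q, x * f = 0 ↔ x ∈ Ideal.span {g})
    (hanng : ∀ x : Q, x * g = 0 ↔ x ∈ Ideal.span {f})
    [IsLocalRing (Q ⧸ Ideal.span {f})]
    (M : Type) [AddCommGroup M] [Module Q M] [Module (Q ⧸ Ideal.span {f}) M]
    [IsScalarTower Q (Q ⧸ Ideal.span {f}) M]
    [Module.Finite (Q ⧸ Ideal.span {f}) M]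
    (i : ℕ) :
    bettiNumber Q M i =
      ∑ j ∈ Finset.range (i + 1), bettiNumber (Q ⧸ Ideal.span {f}) M j := by
  let P : ProjectiveResolution (ModuleCat.of Q (IsLocalRing.ResidueField Q)) :=
    projectiveResolution _
  let P' : ProjectiveResolution (ModuleCat.of (Q ⧸ Ideal.span {f})
      (IsLocalRing.ResidueField (Q ⧸ Ideal.span {f}))) := projectiveResolution _
  have main := EZD.main_aux P P' (EZD.piR f hfm)
    (EZD.inj_pi P f g hfm hgm hfm2 hannf hanng) (EZD.length_R P f g hfm hgm hfm2 hannf hanng)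
    (by
      intro r hr
      obtain ⟨q, rfl⟩ := Ideal.Quotient.mk_surjective r
      rw [EZD.piR_mk, IsLocalRing.residue_eq_zero_iff]
      rw [IsLocalRing.mem_maximalIdeal, mem_nonunits_iff] at hr ⊢
      exact fun h => hr (h.map _))
  rw [EZD.betti_eq P, (main i M).1]
  simp only [EZD.betti_eq P']
  have hfin : ∀ s : Finset ℕ, (∑ j ∈ s, Module.length (Q ⧸ Ideal.span {f}) (EZD.T P' j M)) =
      ((∑ j ∈ s, (Module.length (Q ⧸ Ideal.span {f}) (EZD.T P' j M)).toNat : ℕ) : ℕ∞) := by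
    intro s
    rw [Nat.cast_sum]
    exact Finset.sum_congr rfl fun j _ => (ENat.coe_toNat (main j M).2).symm
  rw [hfin, ENat.toNat_coe]
end
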